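/- arXiv:2510.01811 — 6 statements merged into one kernel-verified Lean document; each statement's English description precedes it below -/
import Mathlib

section
/- Let K be a field, let m ≥ 1, and for 1 ≤ j ≤ m let S_j ⊆ K be a finite set with |S_j| = s_j. Fix a monomial order on K[X_1,…,X_m] and let f ∈ K[X_1,…,X_m] be a nonzero polynomial whose leading monomial is X_1^{i_1}⋯X_m^{i_m} with i_j < s_j for every j. Then the number of points of S_1 × ⋯ × S_m at which f vanishes is at most s_1⋯s_m − (s_1 − i_1)⋯(s_m − i_m). -/
open scoped MonomialOrder Classical

theorem fp_degP {K : Type*} [Field K] {m : ℕ} (mo : MonomialOrder (Fin m)) (S : Finset K)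
    (j : Fin m) :
    mo.degree (∏ r ∈ S, (MvPolynomial.X j - MvPolynomial.C r : MvPolynomial (Fin m) K))
      = Finsupp.single j S.card := by
  rw [MonomialOrder.degree_prod_of_regular]
  · simp [Finset.sum_congr rfl (fun r _ ↦ mo.degree_X_sub_C j r)]
  · intro r _
    rw [mo.monic_X_sub_C]
    exact isRegular_one

theorem fp_nonvanish {K : Type*} [Field K] {m : ℕ} (mo : MonomialOrder (Fin m))
    (S : Fin m → Finset K) (F : MvPolynomial (Fin m) K)
    (hd : ∀ j, mo.degree F j < (S j).card)
    (hv : ∀ x : Fin m → K, (∀ j, x j ∈ S j) → MvPolynomial.eval x F = 0) : F = 0 := by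
  by_contra hF
  have hmon : ∀ j, mo.Monic (∏ r ∈ S j, (MvPolynomial.X j - MvPolynomial.C r :
      MvPolynomial (Fin m) K)) := fun j =>
    MonomialOrder.Monic.prod (fun r _ ↦ mo.monic_X_sub_C j r)
  obtain ⟨h, r, hf, hh, hr⟩ := mo.div (b := fun j ↦ ∏ r ∈ S j, (MvPolynomial.X j -
      MvPolynomial.C r : MvPolynomial (Fin m) K))
      (fun j ↦ by simp only [(hmon j).leadingCoeff_eq_one, isUnit_one]) F
  have hr0 : r = 0 := by
    apply MvPolynomial.eq_zero_of_eval_zero_at_prod_finset r S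
    · intro j
      rw [MvPolynomial.degreeOf_eq_sup, Finset.sup_lt_iff (lt_of_le_of_lt (Nat.zero_le _) (hd j))]
      intro c hc
      have := hr c hc j
      rw [fp_degP, Finsupp.single_le_iff] at this
      omega
    · intro x hx
      have h1 := congrArg (MvPolynomial.eval x) hf
      rw [hv x hx, map_add, Finsupp.linearCombination_apply, map_finsuppSum, Finsupp.sum,
        Finset.sum_eq_zero, zero_add] at h1
      · exact h1.symm
      · intro j _
        rw [smul_eq_mul, map_mul, map_prod, Finset.prod_eq_zero (hx j), mul_zero]
        simp
  rw [hr0, add_zero, Finsupp.linearCombination_apply, Finsupp.sum] at hf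
  have hc := (mo.coeff_degree_ne_zero_iff (f := F)).2 hF
  have hex : ∃ j, MvPolynomial.coeff (mo.degree F) ((∏ r ∈ S j, (MvPolynomial.X j -
      MvPolynomial.C r : MvPolynomial (Fin m) K)) * h j) ≠ 0 := by
    by_contra! hcon
    apply hc
    have h2 := congrArg (MvPolynomial.coeff (mo.degree F)) hf
    rw [h2, MvPolynomial.coeff_sum]
    apply Finset.sum_eq_zero
    intro j _
    rw [smul_eq_mul, mul_comm]
    exact hcon j
  obtain ⟨j, hj⟩ := hex
  have h3 := mo.le_degree (MvPolynomial.mem_support_iff.2 hj)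
  have h4 := mo.toSyn.injective (le_antisymm h3 (hh j))
  have hne : (∏ r ∈ S j, (MvPolynomial.X j -
      MvPolynomial.C r : MvPolynomial (Fin m) K)) * h j ≠ 0 := by
    intro h0
    rw [h0] at hj
    simp at hj
  rw [mo.degree_mul' hne, fp_degP] at h4
  have := hd j
  rw [h4] at this
  simp at this


/-- **Footprint bound.** Let `K` be a field, `m ≥ 1`, and for each `j` let `S j ⊆ K` be a
finite set of size `s j`. Fix a monomial order on `K[X_1,…,X_m]` and let `f` be a nonzero
polynomial whose leading monomial has exponent vector `i` with `i j < s j` for all `j`.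
Then `f` vanishes at most at `∏ s j − ∏ (s j − i j)` points of `S_1 × ⋯ × S_m`. -/
theorem footprint_bound
    (K : Type*) [Field K] (m : ℕ) (hm : 1 ≤ m)
    (S : Fin m → Finset K) (s : Fin m → ℕ) (hs : ∀ j, (S j).card = s j)
    (mo : MonomialOrder (Fin m))
    (f : MvPolynomial (Fin m) K) (hf : f ≠ 0)
    (i : Fin m →₀ ℕ)
    (hlead_mem : i ∈ f.support)
    (hlead_max : ∀ u ∈ f.support, u ≼[mo] i)
    (hi : ∀ j, i j < s j) :
    ((Fintype.piFinset S).filter (fun p => MvPolynomial.eval p f = 0)).card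
      ≤ ∏ j, s j - ∏ j, (s j - i j) := by
  have hdeg : mo.degree f = i := by
    apply mo.toSyn.injective
    exact le_antisymm (hlead_max _ (mo.degree_mem_support hf)) (mo.le_degree hlead_mem)
  set D := (Fintype.piFinset S).filter (fun p => ¬ MvPolynomial.eval p f = 0) with hD
  suffices hmain : ∏ j, (s j - i j) ≤ D.card by
    have h1 : ((Fintype.piFinset S).filter (fun p => MvPolynomial.eval p f = 0)).card + D.card
        = (Fintype.piFinset S).card := by
      rw [hD]
      convert Finset.card_filter_add_card_filter_not (s := Fintype.piFinset S)
        (fun p => MvPolynomial.eval p f = 0)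
    rw [Fintype.card_piFinset] at h1
    simp only [hs] at h1
    omega
  let ex : ((j : Fin m) → Fin (s j - i j)) → (Fin m →₀ ℕ) := fun e =>
    Finsupp.equivFunOnFinite.symm (fun j => (e j : ℕ))
  have hex : Function.Injective ex := by
    intro a b hab
    funext j
    apply Fin.ext
    exact DFunLike.congr_fun hab j
  let G : (((j : Fin m) → Fin (s j - i j)) → K) →ₗ[K] MvPolynomial (Fin m) K :=
    ∑ e, (MvPolynomial.monomial (ex e)).comp (LinearMap.proj e)
  have hG : ∀ c, G c = ∑ e, MvPolynomial.monomial (ex e) (c e) := by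
    intro c
    simp [G]
  have hGcoeff : ∀ c e, MvPolynomial.coeff (ex e) (G c) = c e := by
    intro c e
    rw [hG, MvPolynomial.coeff_sum]
    simp [MvPolynomial.coeff_monomial, hex.eq_iff]
  have hGsupp : ∀ c, ∀ u ∈ (G c).support, ∀ j, u j < s j - i j := by
    intro c u hu j
    rw [MvPolynomial.mem_support_iff, hG, MvPolynomial.coeff_sum] at hu
    obtain ⟨e, _, he⟩ := Finset.exists_ne_zero_of_sum_ne_zero hu
    rw [MvPolynomial.coeff_monomial] at he
    have : ex e = u := by
      by_contra h
      simp [h] at he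
    rw [← this]
    exact (e j).2
  let Φ : (((j : Fin m) → Fin (s j - i j)) → K) →ₗ[K] (D → K) :=
    LinearMap.pi (fun d => ((MvPolynomial.aeval (R := K) (d : Fin m → K)).toLinearMap.comp
      (LinearMap.mulLeft K f)).comp G)
  have hΦ : ∀ c d, Φ c d = MvPolynomial.eval (d : Fin m → K) f * MvPolynomial.eval d.1 (G c) := by
    intro c d
    simp [Φ, MvPolynomial.aeval_eq_eval]
  have hinj : Function.Injective Φ := by
    rw [injective_iff_map_eq_zero]
    intro c hc
    have hG0 : G c = 0 := by
      by_contra hne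
      have hz : f * G c = 0 := by
        apply fp_nonvanish mo S
        · intro j
          rw [mo.degree_mul hf hne, hdeg, hs]
          have := hGsupp c _ (mo.degree_mem_support hne) j
          simp only [Finsupp.add_apply]
          omega
        · intro x hx
          rw [map_mul]
          by_cases hx0 : MvPolynomial.eval x f = 0
          · rw [hx0, zero_mul]
          · have hxD : x ∈ D := by
              rw [hD, Finset.mem_filter, Fintype.mem_piFinset]
              exact ⟨hx, hx0⟩
            have := hΦ c ⟨x, hxD⟩
            rw [hc] at this
            exact this.symm
      rcases mul_eq_zero.1 hz with h | h
      · exact hf h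
      · exact hne h
    funext e
    rw [← hGcoeff c e, hG0]
    simp
  have := LinearMap.finrank_le_finrank_of_injective hinj
  simpa using this
end

section
/- Let K be a field, let m ≥ 1, and let f ∈ K[X_1,…,X_m] be a nonzero polynomial whose Newton polytope is contained in the box [a_1,b_1] × ⋯ × [a_m,b_m], where 0 ≤ a_j ≤ b_j are integers; set ℓ_j = b_j − a_j. Let S_j ⊆ K \ {0} be finite sets with |S_j| = s_j > ℓ_j + 1 for 1 ≤ j ≤ m, and let S ⊆ (K \ {0})^m be a finite set with S_1 × ⋯ × S_m ⊆ S. Then the number of points of S at which f vanishes is at most |S| − ∏_{j=1}^m (s_j − ℓ_j). -/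
open scoped Classical

/-- The Newton polytope of a multivariate polynomial: the convex hull (in `ℝ^m`) of the set of
exponent vectors of its monomials with nonzero coefficient. -/
noncomputable def newtonPolytope {K : Type*} [CommSemiring K] {m : ℕ}
    (f : MvPolynomial (Fin m) K) : Set (Fin m → ℝ) :=
  convexHull ℝ ((fun (u : Fin m →₀ ℕ) (j : Fin m) => (u j : ℝ)) '' f.support)

theorem aux_nonzeros {K : Type*} [Field K] : ∀ (m : ℕ) (g : MvPolynomial (Fin m) K), g ≠ 0 →
    ∀ (l : Fin m → ℕ), (∀ j, g.degreeOf j ≤ l j) → ∀ (B : Fin m → Finset K),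
    ∏ j, ((B j).card - l j) ≤
      ((Fintype.piFinset B).filter (fun p => MvPolynomial.eval p g ≠ 0)).card := by
  intro m
  induction m with
  | zero =>
    intro g hg l hl B
    simp only [Finset.univ_eq_empty, Finset.prod_empty]
    apply Finset.card_pos.mpr
    refine ⟨finZeroElim, ?_⟩
    rw [Finset.mem_filter]
    refine ⟨Fintype.mem_piFinset.mpr fun j => j.elim0, ?_⟩
    rw [MvPolynomial.eq_C_of_isEmpty g] at hg ⊢
    rw [MvPolynomial.eval_C]
    intro h
    rw [h] at hg
    simp at hg
  | succ n ih =>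
    intro g hg l hl B
    set P := MvPolynomial.finSuccEquiv K n g with hP
    have hP0 : P ≠ 0 := by
      rw [hP]
      simpa using hg
    have hc0 : P.leadingCoeff ≠ 0 := Polynomial.leadingCoeff_ne_zero.mpr hP0
    have hcd : ∀ j, P.leadingCoeff.degreeOf j ≤ l j.succ := fun j =>
      (MvPolynomial.degreeOf_coeff_finSuccEquiv g j P.natDegree).trans (hl _)
    have hY := ih P.leadingCoeff hc0 (fun j => l j.succ) hcd (fun j => B j.succ)
    set Y := (Fintype.piFinset (fun j : Fin n => B j.succ)).filter
      (fun p => MvPolynomial.eval p P.leadingCoeff ≠ 0) with hYdef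
    have hfib : ∀ y ∈ Y, (B 0).card - l 0 ≤
        ((B 0).filter (fun x => MvPolynomial.eval (Fin.cons x y : Fin (n+1) → K) g ≠ 0)).card := by
      intro y hy
      have hy' := (Finset.mem_filter.mp hy).2
      set q := P.map (MvPolynomial.eval y) with hq
      have hq0 : q ≠ 0 := by
        intro h
        apply hy'
        have := congrArg (fun r => Polynomial.coeff r P.natDegree) h
        simpa [hq, Polynomial.coeff_map] using this
      have hqd : q.natDegree ≤ l 0 := by
        refine (Polynomial.natDegree_map_le).trans ?_
        rw [hP, MvPolynomial.natDegree_finSuccEquiv]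
        exact hl 0
      have h1 : ((B 0).filter
          (fun x => ¬ MvPolynomial.eval (Fin.cons x y : Fin (n+1) → K) g ≠ 0)).card ≤ l 0 := by
        refine le_trans (Finset.card_le_card (t := q.roots.toFinset) ?_) ?_
        · intro x hx
          rw [Finset.mem_filter] at hx
          rw [Multiset.mem_toFinset, Polynomial.mem_roots hq0, Polynomial.IsRoot]
          have := not_not.mp hx.2
          rwa [MvPolynomial.eval_eq_eval_mv_eval'] at this
        · exact (Multiset.toFinset_card_le _).trans ((Polynomial.card_roots' q).trans hqd)
      have h2 := Finset.card_filter_add_card_filter_not (s := B 0)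
        (fun x => MvPolynomial.eval (Fin.cons x y : Fin (n+1) → K) g ≠ 0)
      omega
    rw [Fin.prod_univ_succ]
    calc _ ≤ ((B 0).card - l 0) * Y.card := Nat.mul_le_mul_left _ hY
      _ = ∑ y ∈ Y, ((B 0).card - l 0) := by rw [Finset.sum_const, smul_eq_mul, mul_comm]
      _ ≤ ∑ y ∈ Y, ((B 0).filter
            (fun x => MvPolynomial.eval (Fin.cons x y : Fin (n+1) → K) g ≠ 0)).card :=
          Finset.sum_le_sum hfib
      _ = (Y.sigma (fun y => (B 0).filter
            (fun x => MvPolynomial.eval (Fin.cons x y : Fin (n+1) → K) g ≠ 0))).card :=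
          (Finset.card_sigma _ _).symm
      _ ≤ _ := by
          apply Finset.card_le_card_of_injOn
            (fun z : (_ : Fin n → K) × K => (Fin.cons z.2 z.1 : Fin (n+1) → K))
          · rintro ⟨y, x⟩ hz
            simp only [Finset.coe_sigma, Set.mem_sigma_iff, Finset.mem_coe, Finset.mem_filter,
              hYdef, Fintype.mem_piFinset] at hz ⊢
            refine ⟨?_, hz.2.2⟩
            intro j
            refine Fin.cases ?_ (fun i => ?_) j
            · simpa using hz.2.1
            · simpa using hz.1.1 i
          · rintro ⟨y, x⟩ _ ⟨y', x'⟩ _ h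
            have h' := Fin.cons_inj.mp h
            simp only at h'
            rw [h'.1, h'.2]

/-- Let `f ∈ K[X_1,…,X_m]` be nonzero with Newton polytope contained in the box
`[a_1,b_1] × ⋯ × [a_m,b_m]`, `ℓ_j = b_j − a_j`.  If `S_j ⊆ K \ {0}` are finite sets with
`|S_j| = s_j > ℓ_j + 1` and `S ⊆ (K \ {0})^m` is a finite set containing the box
`S_1 × ⋯ × S_m`, then `f` vanishes at most at `|S| − ∏ (s_j − ℓ_j)` points of `S`. -/
theorem zeros_bound_of_newtonPolytope_in_box
    (K : Type*) [Field K] (m : ℕ) (hm : 1 ≤ m)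
    (f : MvPolynomial (Fin m) K) (hf : f ≠ 0)
    (a b : Fin m → ℕ) (hab : ∀ j, a j ≤ b j)
    (ℓ : Fin m → ℕ) (hℓ : ∀ j, ℓ j = b j - a j)
    (hNP : newtonPolytope f ⊆ {x : Fin m → ℝ | ∀ j, (a j : ℝ) ≤ x j ∧ x j ≤ (b j : ℝ)})
    (Sbox : Fin m → Finset K) (hSbox0 : ∀ j, ∀ c ∈ Sbox j, c ≠ 0)
    (s : Fin m → ℕ) (hs : ∀ j, (Sbox j).card = s j) (hsℓ : ∀ j, ℓ j + 1 < s j)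
    (S : Finset (Fin m → K)) (hS0 : ∀ p ∈ S, ∀ j, p j ≠ 0)
    (hboxS : Fintype.piFinset Sbox ⊆ S) :
    (S.filter (fun p => MvPolynomial.eval p f = 0)).card
      ≤ S.card - ∏ j, (s j - ℓ j) := by
  have hsupp : ∀ u ∈ f.support, ∀ j, a j ≤ u j ∧ u j ≤ b j := by
    intro u hu j
    have : (a j : ℝ) ≤ (u j : ℝ) ∧ (u j : ℝ) ≤ (b j : ℝ) := hNP (subset_convexHull ℝ _ ⟨u, hu, rfl⟩) j
    exact_mod_cast this
  set A : Fin m →₀ ℕ := Finsupp.equivFunOnFinite.symm a with hA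
  have hAj : ∀ j, A j = a j := fun j => rfl
  set g := f.divMonomial A with hg
  have hfg : f = MvPolynomial.monomial A 1 * g := by
    have h1 := MvPolynomial.divMonomial_add_modMonomial f A
    have h2 : f.modMonomial A = 0 := by
      ext u
      by_cases hle : A ≤ u
      · rw [MvPolynomial.coeff_modMonomial_of_le _ hle, MvPolynomial.coeff_zero]
      · rw [MvPolynomial.coeff_modMonomial_of_not_le _ hle, MvPolynomial.coeff_zero]
        by_contra h
        exact hle fun j => (hsupp u (MvPolynomial.mem_support_iff.mpr h) j).1
    rw [h2, add_zero] at h1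
    exact h1.symm
  have hg0 : g ≠ 0 := by
    intro h
    rw [h, mul_zero] at hfg
    exact hf hfg
  have hgd : ∀ j, g.degreeOf j ≤ ℓ j := by
    intro j
    rw [MvPolynomial.degreeOf_le_iff]
    intro u hu
    rw [MvPolynomial.mem_support_iff, hg, MvPolynomial.coeff_divMonomial] at hu
    have := (hsupp _ (MvPolynomial.mem_support_iff.mpr hu) j).2
    rw [Finsupp.add_apply, hAj] at this
    rw [hℓ]
    omega
  have key := aux_nonzeros m g hg0 ℓ hgd Sbox
  simp only [hs] at key
  have hsub : (Fintype.piFinset Sbox).filter (fun p => MvPolynomial.eval p g ≠ 0) ⊆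
      S.filter (fun p => ¬ MvPolynomial.eval p f = 0) := by
    intro p hp
    rw [Finset.mem_filter] at hp ⊢
    refine ⟨hboxS hp.1, ?_⟩
    rw [hfg, map_mul, MvPolynomial.eval_monomial, one_mul]
    refine mul_ne_zero ?_ hp.2
    rw [Finsupp.prod]
    exact Finset.prod_ne_zero_iff.mpr fun j _ => pow_ne_zero _ (hS0 p (hboxS hp.1) j)
  have hle := Finset.card_le_card hsub
  have hadd := Finset.card_filter_add_card_filter_not (s := S)
    (fun p => MvPolynomial.eval p f = 0)
  omega
end

section
/- Let K be a field, let m ≥ 1, let f ∈ K[X_1,…,X_m] be a nonzero polynomial of total degree d, and let S ⊆ K be a finite set with |S| = s. Then the sum over all points p ∈ S^m of the multiplicity of f at p is at most d·s^{m−1}. -/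
/-- The translate `F(X + p)` of a multivariate polynomial `F` by a point `p`. -/
noncomputable def polyTranslate {K : Type*} [CommRing K] {m : ℕ}
    (F : MvPolynomial (Fin m) K) (p : Fin m → K) : MvPolynomial (Fin m) K :=
  MvPolynomial.aeval (fun i => MvPolynomial.X i + MvPolynomial.C (p i)) F

/-- The multiplicity of `F` at a point `p`: the smallest total degree of a monomial appearing
with nonzero coefficient in the translated polynomial `F(X + p)`. -/
noncomputable def multAt {K : Type*} [CommRing K] {m : ℕ}
    (F : MvPolynomial (Fin m) K) (p : Fin m → K) : ℕ :=
  sInf {d : ℕ | ∃ u ∈ (polyTranslate F p).support, (u.sum fun _ e => e) = d}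

theorem multAt_le_aux {K : Type*} [Field K] {m : ℕ} (F : MvPolynomial (Fin m) K) (p : Fin m → K)
    (u : Fin m →₀ ℕ) (hu : (polyTranslate F p).coeff u ≠ 0) :
    multAt F p ≤ u.sum fun _ e => e :=
  Nat.sInf_le ⟨u, MvPolynomial.mem_support_iff.2 hu, rfl⟩

theorem polyTranslate_ne_zero_aux {K : Type*} [Field K] {m : ℕ} (F : MvPolynomial (Fin m) K)
    (hF : F ≠ 0) (p : Fin m → K) : polyTranslate F p ≠ 0 := by
  intro h
  apply hF
  have key : ∀ G : MvPolynomial (Fin m) K,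
      polyTranslate (polyTranslate G p) (fun i => - p i) = G := by
    intro G
    unfold polyTranslate
    induction G using MvPolynomial.induction_on with
    | C a => simp
    | add p q hp hq => simp only [map_add, hp, hq]
    | mul_X q i hq => simp only [map_mul, hq]; simp
  rw [← key F, h]
  simp [polyTranslate]

theorem multAt_mem_aux {K : Type*} [Field K] {m : ℕ} (F : MvPolynomial (Fin m) K)
    (hF : F ≠ 0) (p : Fin m → K) :
    ∃ u : Fin m →₀ ℕ, (polyTranslate F p).coeff u ≠ 0 ∧ (u.sum fun _ e => e) = multAt F p := by
  have hne : {d : ℕ | ∃ u ∈ (polyTranslate F p).support, (u.sum fun _ e => e) = d}.Nonempty := by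
    obtain ⟨u, hu⟩ := MvPolynomial.support_nonempty.2 (polyTranslate_ne_zero_aux F hF p)
    exact ⟨_, u, hu, rfl⟩
  obtain ⟨u, hu, h⟩ := Nat.sInf_mem hne
  exact ⟨u, MvPolynomial.mem_support_iff.1 hu, h⟩

noncomputable def trHom {K : Type*} [Field K] {m : ℕ} (p : Fin m → K) :
    MvPolynomial (Fin m) K →ₐ[K] MvPolynomial (Fin m) K :=
  MvPolynomial.aeval (fun i => MvPolynomial.X i + MvPolynomial.C (p i))

theorem finSucc_translate_aux {K : Type*} [Field K] {n : ℕ} (f : MvPolynomial (Fin (n+1)) K)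
    (a : K) (p : Fin n → K) :
    MvPolynomial.finSuccEquiv K n (polyTranslate f (Fin.cons a p : Fin (n+1) → K)) =
      ((MvPolynomial.finSuccEquiv K n f).map (trHom p).toRingHom).comp
        (Polynomial.X + Polynomial.C (MvPolynomial.C a)) := by
  unfold polyTranslate
  induction f using MvPolynomial.induction_on with
  | C a => simp [MvPolynomial.finSuccEquiv_apply, trHom]
  | add p q hp hq => simp only [map_add, hp, hq, Polynomial.map_add, Polynomial.add_comp]
  | mul_X q i hq =>
    have hX : MvPolynomial.finSuccEquiv K n (MvPolynomial.aeval (fun i => MvPolynomial.X i +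
        MvPolynomial.C ((Fin.cons a p : Fin (n+1) → K) i)) (MvPolynomial.X i : MvPolynomial (Fin (n+1)) K)) =
      ((MvPolynomial.finSuccEquiv K n (MvPolynomial.X i)).map (trHom p).toRingHom).comp
        (Polynomial.X + Polynomial.C (MvPolynomial.C a)) := by
      refine Fin.cases ?_ (fun j => ?_) i
      · simp [MvPolynomial.finSuccEquiv_apply]
      · simp [MvPolynomial.finSuccEquiv_apply, trHom]
    rw [map_mul, map_mul, hq, hX, map_mul, Polynomial.map_mul, Polynomial.mul_comp]

noncomputable def exL {K : Type*} [Field K] {n : ℕ} (u : Fin n →₀ ℕ)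
    (q : Polynomial (MvPolynomial (Fin n) K)) : Polynomial K :=
  q.sum fun k c => Polynomial.monomial k (c.coeff u)

theorem exL_coeff {K : Type*} [Field K] {n : ℕ} (u : Fin n →₀ ℕ)
    (q : Polynomial (MvPolynomial (Fin n) K)) (k : ℕ) :
    (exL u q).coeff k = (q.coeff k).coeff u := by
  unfold exL
  rw [Polynomial.sum_def, Polynomial.finsetSum_coeff]
  simp only [Polynomial.coeff_monomial]
  rw [Finset.sum_ite_eq' q.support k (fun j => (q.coeff j).coeff u)]
  split_ifs with h
  · rfl
  · simp [Polynomial.notMem_support_iff.1 h]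

theorem exL_comp {K : Type*} [Field K] {n : ℕ} (u : Fin n →₀ ℕ)
    (q : Polynomial (MvPolynomial (Fin n) K)) (a : K) :
    exL u (q.comp (Polynomial.X + Polynomial.C (MvPolynomial.C a))) =
      (exL u q).comp (Polynomial.X + Polynomial.C a) := by
  induction q using Polynomial.induction_on' with
  | add p q hp hq =>
    have hadd : ∀ p q : Polynomial (MvPolynomial (Fin n) K), exL u (p + q) = exL u p + exL u q := by
      intro p q; ext k; simp [exL_coeff]
    rw [Polynomial.add_comp, hadd, hadd, hp, hq, Polynomial.add_comp]
  | monomial k c =>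
    have h1 : exL u (Polynomial.monomial k c) = Polynomial.monomial k (c.coeff u) := by
      ext j; simp only [exL_coeff, Polynomial.coeff_monomial]; split_ifs <;> simp
    rw [h1, Polynomial.monomial_comp, Polynomial.monomial_comp]
    have h2 : (Polynomial.X + Polynomial.C (MvPolynomial.C a)) ^ k =
      ((Polynomial.X + Polynomial.C a) ^ k).map (MvPolynomial.C (σ := Fin n)) := by simp
    rw [h2]
    ext j
    rw [exL_coeff, Polynomial.coeff_C_mul, Polynomial.coeff_C_mul, Polynomial.coeff_map,
      mul_comm, MvPolynomial.coeff_C_mul, mul_comm]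

theorem sum_rootMult_aux {K : Type*} [Field K] (g : Polynomial K) (S : Finset K) :
    ∑ a ∈ S, g.rootMultiplicity a ≤ g.natDegree := by
  classical
  refine le_trans ?_ (Polynomial.card_roots' g)
  have : ∑ a ∈ S, g.rootMultiplicity a ≤ ∑ a ∈ S ∪ g.roots.toFinset, g.roots.count a := by
    simp only [Polynomial.count_roots]
    exact Finset.sum_le_sum_of_subset Finset.subset_union_left
  refine this.trans (le_of_eq ?_)
  apply Multiset.sum_count_eq_card
  intro a ha
  simp only [Finset.mem_union, Multiset.mem_toFinset]
  exact Or.inr ha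

theorem fiber_aux {K : Type*} [Field K] {n : ℕ} (f : MvPolynomial (Fin (n+1)) K) (hf : f ≠ 0)
    (S : Finset K) (p : Fin n → K) :
    ∑ a ∈ S, multAt f (Fin.cons a p : Fin (n+1) → K) ≤
      S.card * multAt (MvPolynomial.finSuccEquiv K n f).leadingCoeff p +
        (MvPolynomial.finSuccEquiv K n f).natDegree := by
  set Q := MvPolynomial.finSuccEquiv K n f with hQ
  have hQ0 : Q ≠ 0 := by simpa [hQ] using hf
  obtain ⟨u, hu, hur⟩ := multAt_mem_aux Q.leadingCoeff (Polynomial.leadingCoeff_ne_zero.2 hQ0) p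
  set g := exL u (Q.map (trHom p).toRingHom) with hg
  have hgt : g.coeff Q.natDegree ≠ 0 := by
    rw [hg, exL_coeff, Polynomial.coeff_map]
    exact hu
  have hg0 : g ≠ 0 := by rintro h; rw [h] at hgt; simp at hgt
  have hdeg : g.natDegree ≤ Q.natDegree := by
    rw [Polynomial.natDegree_le_iff_coeff_eq_zero]
    intro N hN
    rw [hg, exL_coeff, Polynomial.coeff_map, Polynomial.coeff_eq_zero_of_natDegree_lt hN]
    simp
  have hb : ∀ a ∈ S, multAt f (Fin.cons a p : Fin (n+1) → K) ≤
      multAt Q.leadingCoeff p + g.rootMultiplicity a := by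
    intro a _
    have h1 : (polyTranslate f (Fin.cons a p : Fin (n+1) → K)).coeff
        (Finsupp.cons (g.rootMultiplicity a) u) ≠ 0 := by
      rw [← MvPolynomial.finSuccEquiv_coeff_coeff, finSucc_translate_aux, ← exL_coeff, exL_comp,
        ← hQ, ← hg, Polynomial.rootMultiplicity_eq_natTrailingDegree]
      apply Polynomial.trailingCoeff_nonzero_iff_nonzero.2
      intro h
      exact hg0 ((Polynomial.comp_X_add_C_eq_zero_iff).1 h)
    refine (multAt_le_aux f _ _ h1).trans (le_of_eq ?_)
    rw [Finsupp.sum_cons, hur, add_comm]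
  calc _ ≤ ∑ a ∈ S, (multAt Q.leadingCoeff p + g.rootMultiplicity a) := Finset.sum_le_sum hb
    _ ≤ _ := by
      rw [Finset.sum_add_distrib, Finset.sum_const, smul_eq_mul]
      exact Nat.add_le_add_left ((sum_rootMult_aux g S).trans hdeg) _

theorem main_aux {K : Type*} [Field K] (S : Finset K) (m : ℕ) :
    ∀ f : MvPolynomial (Fin m) K, f ≠ 0 →
    S.card * ∑ p ∈ Fintype.piFinset (fun _ : Fin m => S), multAt f p
      ≤ f.totalDegree * S.card ^ m := by
  induction m with
  | zero =>
    intro f hf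
    have : ∀ p, multAt f p = 0 := by
      intro p
      obtain ⟨u, _, h⟩ := multAt_mem_aux f hf p
      rw [← h, Subsingleton.elim u 0]; simp
    simp [this]
  | succ n ih =>
    intro f hf
    have hsum : ∑ p ∈ Fintype.piFinset (fun _ : Fin (n+1) => S), multAt f p =
        ∑ p ∈ Fintype.piFinset (fun _ : Fin n => S), ∑ a ∈ S,
          multAt f (Fin.cons a p : Fin (n+1) → K) := by
      rw [← Finset.sum_product']
      refine Finset.sum_nbij' (fun p => (Fin.tail p, p 0))
        (fun x => (Fin.cons x.2 x.1 : Fin (n+1) → K)) ?_ ?_ ?_ ?_ ?_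
      · intro p hp
        simp only [Fintype.mem_piFinset, Finset.mem_product] at hp ⊢
        exact ⟨fun i => hp _, hp 0⟩
      · intro x hx
        simp only [Fintype.mem_piFinset, Finset.mem_product] at hx ⊢
        exact Fin.cases hx.2 hx.1
      · intro p _; simp
      · intro x _; simp
      · intro p _; simp
    set Q := MvPolynomial.finSuccEquiv K n f with hQ
    have hQ0 : Q ≠ 0 := by simpa [hQ] using hf
    have hl := Polynomial.leadingCoeff_ne_zero.2 hQ0
    have h1 := ih Q.leadingCoeff hl
    have h2 : Q.leadingCoeff.totalDegree + Q.natDegree ≤ f.totalDegree :=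
      MvPolynomial.totalDegree_coeff_finSuccEquiv_add_le f _ hl
    rw [hsum]
    have h3 := Finset.sum_le_sum
      (fun p (_ : p ∈ Fintype.piFinset (fun _ : Fin n => S)) => fiber_aux f hf S p)
    rw [Finset.sum_add_distrib, ← Finset.mul_sum, Finset.sum_const, smul_eq_mul,
      Fintype.card_piFinset_const, ← hQ] at h3
    calc _ ≤ S.card * (Q.leadingCoeff.totalDegree * S.card ^ n + S.card ^ n * Q.natDegree) := by
          apply Nat.mul_le_mul_left
          exact h3.trans (Nat.add_le_add_right h1 _)
      _ = (Q.leadingCoeff.totalDegree + Q.natDegree) * S.card ^ (n+1) := by ring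
      _ ≤ _ := Nat.mul_le_mul_right _ h2

/-- **(Multiplicity Schwartz–Zippel.)** Let `f ∈ K[X_1,…,X_m]` be a nonzero polynomial of total
degree `d` and `S ⊆ K` a finite set with `|S| = s`.  Then the sum over all `p ∈ S^m` of the
multiplicity of `f` at `p` is at most `d·s^(m-1)`. -/
theorem sum_multiplicities_le
    (K : Type*) [Field K] (m : ℕ) (hm : 1 ≤ m)
    (f : MvPolynomial (Fin m) K) (hf : f ≠ 0)
    (d : ℕ) (hd : f.totalDegree = d)
    (S : Finset K) (s : ℕ) (hs : S.card = s) :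
    ∑ p ∈ Fintype.piFinset (fun _ : Fin m => S), multAt f p ≤ d * s ^ (m - 1) := by
  subst hd hs
  obtain ⟨n, rfl⟩ := Nat.exists_eq_add_of_le' hm
  have h := main_aux S (n+1) f hf
  rcases Nat.eq_zero_or_pos S.card with h0 | h0
  · rw [Finset.card_eq_zero] at h0
    subst h0
    rw [Finset.sum_eq_zero]
    · exact Nat.zero_le _
    · intro p hp
      exact absurd (Fintype.mem_piFinset.1 hp 0) (Finset.notMem_empty _)
  · refine Nat.le_of_mul_le_mul_left (h.trans (le_of_eq ?_)) h0
    rw [Nat.add_sub_cancel]; ring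
end

section
/- Let m ≥ 1 and let P ⊆ ℝ^m be an m-dimensional lattice polytope. Then for every integer λ ≥ m, Σ_{k=1}^{λ} |kP ∩ ℤ^m| > C(λ+1, m+1) · m! · vol(P), where C(λ+1, m+1) is the binomial coefficient and vol(P) is the m-dimensional Euclidean volume of P. -/
open scoped Pointwise

/-- The set of lattice points of a subset of `ℝ^m`, viewed as integer vectors. -/
def latticePts {m : ℕ} (P : Set (Fin m → ℝ)) : Set (Fin m → ℤ) :=
  {x | (fun j => (x j : ℝ)) ∈ P}

open MeasureTheory

lemma vol_open_simplex (m : ℕ) :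
    (m.factorial : ENNReal) * volume {b : Fin m → ℝ | (∀ i, 0 < b i) ∧ ∑ i, b i < 1} ≤ 1 := by
  set S : Set (Fin m → ℝ) := {b : Fin m → ℝ | (∀ i, 0 < b i) ∧ ∑ i, b i < 1} with hS
  have hSm : MeasurableSet S := by
    have : IsOpen S := by
      have h : S = (⋂ i, {b : Fin m → ℝ | 0 < b i}) ∩ {b | ∑ i, b i < 1} := by
        ext b; simp [hS]
      rw [h]
      refine IsOpen.inter (isOpen_iInter_of_finite fun i => ?_) ?_
      · exact isOpen_lt continuous_const (continuous_apply i)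
      · exact isOpen_lt (by fun_prop) continuous_const
    exact this.measurableSet
  let sg : Bool → ℝ := fun b => if b then 1 else -1
  have hsg : ∀ b, sg b * sg b = 1 := by intro b; cases b <;> simp [sg]
  have hsg0 : ∀ b, sg b ≠ 0 := by intro b; cases b <;> simp [sg]
  let D : (Fin m → Bool) → (Fin m → ℝ) →ₗ[ℝ] (Fin m → ℝ) := fun s =>
    Matrix.toLin' (Matrix.diagonal fun i => sg (s i))
  have hD : ∀ s x i, D s x i = sg (s i) * x i := by
    intro s x i; simp [D, Matrix.mulVec_diagonal]
  have hdet : ∀ s, |LinearMap.det (D s)| = 1 := by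
    intro s
    simp only [D, LinearMap.det_toLin', Matrix.det_diagonal, Finset.abs_prod]
    apply Finset.prod_eq_one
    intro i _
    cases s i <;> simp [sg]
  have hdet0 : ∀ s, LinearMap.det (D s) ≠ 0 := by
    intro s h; have := hdet s; rw [h] at this; simp at this
  have hvol : ∀ s, volume (D s ⁻¹' S) = volume S := by
    intro s
    rw [Measure.addHaar_preimage_linearMap _ (hdet0 s), abs_inv, hdet]; simp
  have hdisj : Pairwise (Function.onFun Disjoint fun s => D s ⁻¹' S) := by
    intro s t hst
    rw [Function.onFun, Set.disjoint_left]
    intro x hx hy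
    apply hst
    funext i
    have h1 := hx.1 i
    have h2 := hy.1 i
    rw [hD] at h1 h2
    cases hs : s i <;> cases ht : t i <;> simp [hs, ht, sg] at h1 h2 ⊢ <;> linarith
  have hmeas : ∀ s, MeasurableSet (D s ⁻¹' S) := fun s =>
    (LinearMap.continuous_of_finiteDimensional (D s)).measurable hSm
  have hsub : (⋃ s, D s ⁻¹' S) ⊆ {x : Fin m → ℝ | ∑ i, |x i| ^ (1:ℝ) < 1} := by
    intro x hx
    obtain ⟨s, hx⟩ := Set.mem_iUnion.1 hx
    have : ∀ i, |x i| = D s x i := by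
      intro i
      have := hx.1 i
      rw [hD] at *
      cases h : s i <;> simp [h, sg] at this ⊢
      · exact this.le
      · exact this.le
    simp only [Real.rpow_one, this, Set.mem_ofPred_eq]
    exact hx.2
  have h1 := measure_mono (μ := volume) hsub
  rw [measure_iUnion hdisj hmeas, volume_sum_rpow_lt_one _ le_rfl] at h1
  simp only [hvol, tsum_fintype, Finset.sum_const, Finset.card_univ, Fintype.card_fun,
    Fintype.card_bool, Fintype.card_fin, div_one, nsmul_eq_mul] at h1
  rw [Real.Gamma_nat_eq_factorial, one_add_one_eq_two, Real.Gamma_two, mul_one,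
    ENNReal.ofReal_div_of_pos (by positivity), ENNReal.ofReal_pow (by norm_num)] at h1
  simp only [ENNReal.ofReal_ofNat, ENNReal.ofReal_natCast, Nat.cast_pow, Nat.cast_ofNat] at h1
  have h2 : (2:ENNReal)^m * (m.factorial * volume S) ≤ 2^m * 1 := by
    calc (2:ENNReal)^m * (m.factorial * volume S) = m.factorial * (2^m * volume S) := by ring
      _ ≤ m.factorial * (2^m / m.factorial) := by gcongr
      _ ≤ 2^m * 1 := by rw [mul_one]; exact ENNReal.mul_div_le
  exact (ENNReal.mul_le_mul_iff_right (by simp) (by simp)).1 h2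

def edgeM {m : ℕ} (u : Fin (m+1) → Fin m → ℤ) : Matrix (Fin m) (Fin m) ℤ :=
  Matrix.of fun j i => u i.succ j - u 0 j

lemma edgeM_mulVec {m : ℕ} (u : Fin (m+1) → Fin m → ℤ) (n : Fin (m+1) → ℤ) (h : ∑ i, n i = 0) :
    (edgeM u).mulVec (fun i => n i.succ) = fun j => ∑ i, n i * u i j := by
  funext j
  rw [Fin.sum_univ_succ] at h ⊢
  have : n 0 = - ∑ i : Fin m, n i.succ := by linarith
  rw [this]
  simp only [edgeM, Matrix.mulVec, dotProduct, Matrix.of_apply, neg_mul, Finset.sum_mul,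
    ← Finset.sum_neg_distrib, ← Finset.sum_add_distrib]
  exact Finset.sum_congr rfl fun i _ => by ring

lemma edgeM_mulVec_real {m : ℕ} (u : Fin (m+1) → Fin m → ℤ) (n : Fin (m+1) → ℝ) (j : Fin m) :
    ((edgeM u).map (Int.cast : ℤ → ℝ)).mulVec (fun i => n i.succ) j
      = ∑ i, n i * u i j - (∑ i, n i) * u 0 j := by
  rw [Fin.sum_univ_succ, Fin.sum_univ_succ]
  simp only [edgeM, Matrix.mulVec, dotProduct, Matrix.of_apply, Finset.sum_mul, add_mul,
    Matrix.map_apply]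
  rw [add_sub_add_left_eq_sub, ← Finset.sum_sub_distrib]
  exact Finset.sum_congr rfl fun i _ => by push_cast; ring

lemma vol_simplex {m : ℕ} (u : Fin (m+1) → Fin m → ℤ) :
    (m.factorial : ENNReal) * volume {x : Fin m → ℝ | ∃ a : Fin (m+1) → ℝ, (∀ i, 0 < a i) ∧
      ∑ i, a i = 1 ∧ ∀ j, ∑ i, a i * u i j = x j} ≤ ((edgeM u).det.natAbs : ENNReal) := by
  set L := Matrix.toLin' ((edgeM u).map (Int.cast : ℤ → ℝ))
  have hsub : {x : Fin m → ℝ | ∃ a : Fin (m+1) → ℝ, (∀ i, 0 < a i) ∧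
      ∑ i, a i = 1 ∧ ∀ j, ∑ i, a i * u i j = x j} ⊆
      (fun x => (fun j => (u 0 j : ℝ)) + x) ''
        (L '' {b : Fin m → ℝ | (∀ i, 0 < b i) ∧ ∑ i, b i < 1}) := by
    rintro x ⟨a, ha, h1, hx⟩
    refine ⟨_, ⟨fun i => a i.succ, ⟨fun i => ha _, ?_⟩, rfl⟩, ?_⟩
    · rw [Fin.sum_univ_succ] at h1
      have := ha 0
      linarith
    · funext j
      simp only [Pi.add_apply, L, Matrix.toLin'_apply]
      rw [edgeM_mulVec_real, h1, hx]; ring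
  have hdet : |LinearMap.det L| = ((edgeM u).det.natAbs : ℝ) := by
    have h : ((edgeM u).map (Int.cast : ℤ → ℝ)).det = ((edgeM u).det : ℝ) := by
      have := RingHom.map_det (Int.castRingHom ℝ) (edgeM u)
      simpa using this.symm
    rw [LinearMap.det_toLin', h, Nat.cast_natAbs, Int.cast_abs]
  calc _ ≤ (m.factorial : ENNReal) * volume (L '' {b : Fin m → ℝ | (∀ i, 0 < b i) ∧ ∑ i, b i < 1}) := by
        gcongr _ * ?_
        refine (measure_mono (μ := volume) hsub).trans ?_
        rw [Set.image_add_left, measure_preimage_add]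
    _ = ((edgeM u).det.natAbs : ENNReal) * ((m.factorial : ENNReal) * volume {b : Fin m → ℝ | (∀ i, 0 < b i) ∧ ∑ i, b i < 1}) := by
        rw [Measure.addHaar_image_linearMap, hdet, ENNReal.ofReal_natCast]; ring
    _ ≤ _ := by
        conv_rhs => rw [← mul_one ((edgeM u).det.natAbs : ENNReal)]
        gcongr
        exact vol_open_simplex m

lemma coset_rep {m : ℕ} (u : Fin (m+1) → Fin m → ℤ) (hd : (edgeM u).det ≠ 0)
    (st : Fin (m+1) → Prop) (hst : ∃ i, ¬ st i) (y : Fin m → ℤ) :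
    ∃ (x : Fin m → ℤ) (a : Fin (m+1) → ℝ) (z : Fin m → ℤ), x = y - (edgeM u).mulVec z ∧
      (∀ i, 0 ≤ a i ∧ (st i → 0 < a i)) ∧ ∑ i, a i = m ∧ ∀ j, ∑ i, a i * u i j = x j := by
  classical
  have hdR : ((edgeM u).map (Int.cast : ℤ → ℝ)).det ≠ 0 := by
    have := RingHom.map_det (Int.castRingHom ℝ) (edgeM u)
    have h : ((edgeM u).map (Int.cast : ℤ → ℝ)).det = ((edgeM u).det : ℝ) := by
      simpa using this.symm
    rw [h]; exact_mod_cast hd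
  -- real coordinates
  obtain ⟨b, hb1, hb2⟩ : ∃ b : Fin (m+1) → ℝ, ∑ i, b i = m ∧ ∀ j, ∑ i, b i * u i j = y j := by
    set A := (edgeM u).map (Int.cast : ℤ → ℝ)
    set c : Fin m → ℝ := A⁻¹.mulVec (fun j => (y j : ℝ) - m * u 0 j)
    have hs : ∑ i, (Fin.cons (m - ∑ i, c i) c : Fin (m+1) → ℝ) i = m := by
      rw [Fin.sum_univ_succ]; simp
    refine ⟨Fin.cons (m - ∑ i, c i) c, hs, fun j => ?_⟩
    have := edgeM_mulVec_real u (Fin.cons (m - ∑ i, c i) c) j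
    rw [hs] at this
    simp only [Fin.cons_succ] at this
    have h2 : A.mulVec c j = (y j : ℝ) - m * u 0 j := by
      simp only [c, Matrix.mulVec_mulVec]
      rw [Matrix.mul_nonsing_inv _ (isUnit_iff_ne_zero.2 hdR), Matrix.one_mulVec]
    change A.mulVec c j = _ at this
    linarith
  let z : Fin (m+1) → ℤ := fun i => if st i then ⌈b i⌉ - 1 else ⌊b i⌋
  have hz : ∀ i, 0 ≤ b i - z i ∧ b i - z i ≤ 1 ∧ (st i → 0 < b i - z i) ∧ (¬ st i → b i - z i < 1) := by
    intro i
    by_cases h : st i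
    · have h1 := Int.ceil_lt_add_one (b i)
      have h2 := Int.le_ceil (b i)
      simp only [z, h, if_true, not_true, true_implies, false_implies]; push_cast
      refine ⟨by linarith, by linarith, by linarith, trivial⟩
    · have h1 := Int.floor_le (b i)
      have h2 := Int.lt_floor_add_one (b i)
      simp only [z, h, if_false, not_false_eq_true, true_implies, false_implies]
      refine ⟨by linarith, by linarith, trivial, by linarith⟩
  have hsum : ∑ i, (b i - z i) < m + 1 := by
    obtain ⟨i0, hi0⟩ := hst
    have : ∑ i, (b i - z i) < ∑ i : Fin (m+1), (1:ℝ) :=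
      Finset.sum_lt_sum (fun i _ => (hz i).2.1) ⟨i0, Finset.mem_univ _, (hz i0).2.2.2 hi0⟩
    simpa using this
  have hZ : 0 ≤ ∑ i, z i := by
    rw [Finset.sum_sub_distrib, hb1] at hsum
    have : (-1 : ℝ) < ((∑ i, z i : ℤ) : ℝ) := by push_cast; linarith
    have : (-1 : ℤ) < ∑ i, z i := by exact_mod_cast this
    linarith
  have hZR : (0:ℝ) ≤ ((∑ i, z i : ℤ) : ℝ) := by exact_mod_cast hZ
  let z' : Fin (m+1) → ℤ := fun i => z i - if i = 0 then ∑ i, z i else 0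
  have hz'0 : ∑ i, z' i = 0 := by simp [z', Finset.sum_sub_distrib]
  have hz' : ∀ i, (z' i : ℝ) ≤ z i := by
    intro i
    simp only [z']
    split_ifs
    · rw [Int.cast_sub]; linarith
    · simp
  refine ⟨y - (edgeM u).mulVec (fun i => z' i.succ), fun i => b i - z' i, fun i => z' i.succ,
    rfl, fun i => ?_, ?_, fun j => ?_⟩
  · have := hz i
    have := hz' i
    exact ⟨by linarith, fun h => by linarith [(hz i).2.2.1 h]⟩
  · rw [Finset.sum_sub_distrib, hb1]
    have : ((∑ i, z' i : ℤ) : ℝ) = 0 := by rw [hz'0]; simp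
    push_cast at this
    rw [this, sub_zero]
  · rw [edgeM_mulVec u z' hz'0]
    simp only [sub_mul, Finset.sum_sub_distrib, hb2, Pi.sub_apply]
    push_cast
    rfl

lemma count_simplex {m : ℕ} (u : Fin (m+1) → Fin m → ℤ)
    (st : Fin (m+1) → Prop) (hst : ∃ i, ¬ st i) (k : ℕ) :
    ∃ F : Finset (Fin m → ℤ), k.choose m * (edgeM u).det.natAbs ≤ F.card ∧
      ∀ x ∈ F, ∃ a : Fin (m+1) → ℝ, (∀ i, 0 ≤ a i ∧ (st i → 0 < a i)) ∧ ∑ i, a i = k ∧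
        ∀ j, ∑ i, a i * u i j = x j := by
  classical
  by_cases hd : (edgeM u).det = 0
  · exact ⟨∅, by simp [hd], by simp⟩
  by_cases hk : k < m
  · exact ⟨∅, by simp [Nat.choose_eq_zero_of_lt hk], by simp⟩
  push Not at hk
  have hinj : Function.Injective (Matrix.mulVecLin (edgeM u)) := by
    have := Matrix.mulVec_injective_of_isUnit (A := (edgeM u).map (Int.cast : ℤ → ℚ)) ?_
    · intro p q hpq
      have h2 : (fun i => (p i : ℚ)) = (fun i => (q i : ℚ)) := by
        apply this
        funext j
        have := congrFun hpq j
        simp only [Matrix.mulVecLin_apply, Matrix.mulVec, dotProduct, Matrix.map_apply] at this ⊢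
        exact_mod_cast this
      funext i
      exact_mod_cast congrFun h2 i
    · rw [Matrix.isUnit_iff_isUnit_det, isUnit_iff_ne_zero]
      have h : ((edgeM u).map (Int.cast : ℤ → ℚ)).det = ((edgeM u).det : ℚ) := by
        have := RingHom.map_det (Int.castRingHom ℚ) (edgeM u)
        simpa using this.symm
      rw [h]; exact_mod_cast hd
  set N : Submodule ℤ (Fin m → ℤ) := LinearMap.range (Matrix.mulVecLin (edgeM u)) with hN
  have hcard : Nat.card ((Fin m → ℤ) ⧸ N) = (edgeM u).det.natAbs := by
    rw [← Submodule.natAbs_det_equiv N (LinearEquiv.ofInjective _ hinj)]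
    congr 1
    rw [← LinearMap.det_toLin']
    congr 1
  have hfin : Finite ((Fin m → ℤ) ⧸ N) := by
    apply Nat.finite_of_card_ne_zero
    rw [hcard]; simpa using hd
  have := Fintype.ofFinite ((Fin m → ℤ) ⧸ N)
  have hrep : ∀ q : (Fin m → ℤ) ⧸ N, ∃ (x : Fin m → ℤ) (a : Fin (m+1) → ℝ),
      Submodule.Quotient.mk x = q ∧
      (∀ i, 0 ≤ a i ∧ (st i → 0 < a i)) ∧ ∑ i, a i = m ∧ ∀ j, ∑ i, a i * u i j = x j := by
    intro q
    obtain ⟨y, rfl⟩ := Submodule.Quotient.mk_surjective _ q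
    obtain ⟨x, a, z, hx, h⟩ := coset_rep u hd st hst y
    refine ⟨x, a, ?_, h⟩
    rw [Submodule.Quotient.eq, hx]
    exact ⟨-z, by simp [Matrix.mulVec_neg]⟩
  choose X a hX ha hs hu using hrep
  let T := Finset.finsuppAntidiag (Finset.univ : Finset (Fin (m+1))) (k - m)
  have hT : ∀ n ∈ T, ∑ i, n i = k - m := by
    intro n hn
    exact (Finset.mem_finsuppAntidiag.1 hn).1
  have hTZ : ∀ n ∈ T, ∑ i, (n i : ℤ) = k - m := by
    intro n hn
    have := hT n hn
    zify [hk] at this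
    exact this
  have hTc : T.card = k.choose m := by
    rw [Finset.card_finsuppAntidiag_nat_eq_choose, Finset.card_univ, Fintype.card_fin,
      show m + 1 + (k - m) - 1 = k by omega]
    exact Nat.choose_symm hk
  let Φ : ((Fin m → ℤ) ⧸ N) × (Fin (m+1) →₀ ℕ) → (Fin m → ℤ) :=
    fun p j => X p.1 j + ∑ i, (p.2 i : ℤ) * u i j
  have hΦ : Set.InjOn Φ ↑((Finset.univ : Finset ((Fin m → ℤ) ⧸ N)) ×ˢ T) := by
    rintro ⟨q, n⟩ h1 ⟨q', n'⟩ h2 he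
    simp only [Finset.coe_product, Finset.coe_univ, Set.mem_prod, Set.mem_univ, true_and,
      Finset.mem_coe] at h1 h2
    have h0 : ∑ i, ((n i : ℤ) - n' i) = 0 := by
      rw [Finset.sum_sub_distrib, hTZ n h1, hTZ n' h2]; ring
    have hM := edgeM_mulVec u (fun i => (n i : ℤ) - n' i) h0
    have hdiff : X q' - X q = (edgeM u).mulVec (fun i => (n i.succ : ℤ) - n' i.succ) := by
      rw [hM]
      funext j
      have := congrFun he j
      simp only [Φ] at this
      simp only [sub_mul, Finset.sum_sub_distrib, Pi.sub_apply]
      linarith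
    have hq : q = q' := by
      rw [← hX q, ← hX q']
      symm
      rw [Submodule.Quotient.eq]
      exact ⟨_, hdiff.symm⟩
    subst hq
    rw [sub_self] at hdiff
    have hz := hinj (a₁ := fun i => (n i.succ : ℤ) - n' i.succ) (a₂ := 0) (by
      rw [map_zero]; exact hdiff.symm)
    have hsucc : ∀ i : Fin m, (n i.succ : ℤ) - n' i.succ = 0 := fun i => congrFun hz i
    rw [Fin.sum_univ_succ] at h0
    simp only [hsucc, Finset.sum_const_zero, add_zero] at h0
    congr 1
    ext i
    refine Fin.cases ?_ (fun i => ?_) i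
    · omega
    · have := hsucc i; omega
  refine ⟨((Finset.univ : Finset ((Fin m → ℤ) ⧸ N)) ×ˢ T).image Φ, ?_, ?_⟩
  · rw [Finset.card_image_of_injOn hΦ, Finset.card_product, hTc, Finset.card_univ,
      ← Nat.card_eq_fintype_card, hcard, mul_comm]
  · intro x hx
    obtain ⟨⟨q, n⟩, hp, rfl⟩ := Finset.mem_image.1 hx
    have hn : n ∈ T := (Finset.mem_product.1 hp).2
    refine ⟨fun i => a q i + n i, fun i => ⟨?_, fun h => ?_⟩, ?_, fun j => ?_⟩
    · have := (ha q i).1; positivity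
    · have := (ha q i).2 h; positivity
    · rw [Finset.sum_add_distrib, hs]
      have : ((∑ i, (n i : ℤ) : ℤ) : ℝ) = ((k - m : ℤ) : ℝ) := by rw [hTZ n hn]
      push_cast at this
      rw [this]; ring
    · simp only [add_mul, Finset.sum_add_distrib, hu, Φ]
      push_cast
      rfl

section tri
set_option linter.unusedSectionVars false
variable {ι E : Type*} [Fintype ι] [DecidableEq ι] [AddCommGroup E] [Module ℝ E]
  [FiniteDimensional ℝ E]

def IsBas (w : ι → E) (B : Finset ι) : Prop :=
  LinearIndependent ℝ (fun i : B => w i) ∧ B.card = Module.finrank ℝ E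

def Gen (w : ι → E) (y : E) : Prop :=
  ∀ T : Finset ι, T.card < Module.finrank ℝ E → y ∉ Submodule.span ℝ (w '' T)

lemma exists_coord (w : ι → E) (B : Finset ι) (hB : IsBas w B) :
    ∃ c : E →ₗ[ℝ] (ι → ℝ), (∀ y, ∑ i, c y i • w i = y) ∧ (∀ y i, i ∉ B → c y i = 0) ∧
      ∀ a : ι → ℝ, (∀ i, i ∉ B → a i = 0) → c (∑ i, a i • w i) = a := by
  obtain ⟨hl, hc⟩ := hB
  have hspan : ⊤ ≤ Submodule.span ℝ (Set.range fun i : B => w i) := by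
    rw [hl.span_eq_top_of_card_eq_finrank' (by simpa using hc)]
  let b := Module.Basis.mk hl hspan
  have hb : ∀ i, b i = w i := fun i => by simp [b]
  have hsumB : ∀ a : ι → ℝ, (∀ i, i ∉ B → a i = 0) → ∑ i, a i • w i = ∑ i : B, a i • w i := by
    intro a ha
    rw [Finset.sum_coe_sort B (fun i => a i • w i)]
    symm
    apply Finset.sum_subset (Finset.subset_univ _)
    intro i _ hi
    rw [ha i hi, zero_smul]
  let c : E →ₗ[ℝ] (ι → ℝ) := LinearMap.pi fun i => if h : i ∈ B then b.coord ⟨i, h⟩ else 0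
  have hc1 : ∀ y (i : B), c y i = b.coord i y := by
    intro y i; simp [c]
  have hc2 : ∀ y i, i ∉ B → c y i = 0 := by
    intro y i hi; simp [c, hi]
  refine ⟨c, fun y => ?_, hc2, fun a ha => ?_⟩
  · rw [hsumB _ (hc2 y)]
    simp only [hc1]
    conv_rhs => rw [← b.sum_repr y]
    simp [hb]
  · rw [hsumB a ha]
    funext i
    by_cases hi : i ∈ B
    · rw [show i = ((⟨i, hi⟩ : B) : ι) from rfl, hc1]
      simp only [← hb, map_sum, map_smul, Module.Basis.coord_apply, Module.Basis.repr_self]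
      simp [Finsupp.single_apply]
    · rw [hc2 _ _ hi, ha i hi]

lemma gen_ne {w : ι → E} {y : E} (hy : Gen w y) {B : Finset ι} (hB : B.card = Module.finrank ℝ E)
    {a : ι → ℝ} (ha : ∀ i, i ∉ B → a i = 0) (hay : ∑ i, a i • w i = y) : ∀ i ∈ B, a i ≠ 0 := by
  intro i hi h0
  apply hy (B.erase i)
  · rw [← hB]; exact Finset.card_erase_lt_of_mem hi
  · rw [← hay]
    refine Submodule.sum_mem _ fun j _ => ?_
    by_cases hj : j ∈ B.erase i
    · exact Submodule.smul_mem _ _ (Submodule.subset_span ⟨j, hj, rfl⟩)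
    · have : a j = 0 := by
        by_cases h : j = i
        · rw [h, h0]
        · exact ha j fun hjB => hj (Finset.mem_erase.2 ⟨h, hjB⟩)
      rw [this, zero_smul]; exact Submodule.zero_mem _

lemma lp_reduce {w : ι → E} (ht : E →ₗ[ℝ] ℝ) (hw : ∀ i, ht (w i) = 1) {y : E} (hy : Gen w y)
    (ω : ι → ℝ) : ∀ (n : ℕ) (a : ι → ℝ), (Finset.univ.filter fun i => a i ≠ 0).card = n →
      (∀ i, 0 ≤ a i) → ∑ i, a i • w i = y →
      ∃ B, IsBas w B ∧ ∃ a' : ι → ℝ, (∀ i, 0 ≤ a' i) ∧ (∀ i, i ∉ B → a' i = 0) ∧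
        ∑ i, a' i • w i = y ∧ ∑ i, ω i * a' i ≤ ∑ i, ω i * a i := by
  intro n
  induction n using Nat.strong_induction_on with
  | _ n ih =>
  intro a hn ha hay
  set S := Finset.univ.filter fun i => a i ≠ 0 with hS
  have hS0 : ∀ i, i ∉ S → a i = 0 := by intro i hi; simpa [hS] using hi
  by_cases hl : LinearIndependent ℝ (fun i : S => w i)
  · refine ⟨S, ⟨hl, ?_⟩, a, ha, hS0, hay, le_rfl⟩
    have h1 : S.card ≤ Module.finrank ℝ E := by simpa using hl.fintype_card_le_finrank
    by_contra hne
    apply hy S (lt_of_le_of_ne h1 hne)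
    rw [← hay]
    refine Submodule.sum_mem _ fun j _ => ?_
    by_cases hj : j ∈ S
    · exact Submodule.smul_mem _ _ (Submodule.subset_span ⟨j, hj, rfl⟩)
    · rw [hS0 j hj, zero_smul]; exact Submodule.zero_mem _
  · -- dependent: find d
    obtain ⟨d, hdS, hd0, hdne, hdc⟩ : ∃ d : ι → ℝ, (∀ i, i ∉ S → d i = 0) ∧
        ∑ i, d i • w i = 0 ∧ (∃ i, d i ≠ 0) ∧ ∑ i, ω i * d i ≤ 0 := by
      rw [Fintype.not_linearIndependent_iff] at hl
      obtain ⟨g, hg, i0, hi0⟩ := hl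
      let d : ι → ℝ := fun i => if h : i ∈ S then g ⟨i, h⟩ else 0
      have e1 : ∀ i, i ∉ S → d i = 0 := by intro i hi; simp [d, hi]
      have e2 : ∑ i, d i • w i = 0 := by
        rw [← hg]
        have : ∀ i : S, g i • w i = d i • w i := by intro i; simp [d]
        simp only [this]
        rw [Finset.sum_coe_sort S (fun i => d i • w i)]
        symm
        apply Finset.sum_subset (Finset.subset_univ _)
        intro i _ hi
        rw [e1 i hi, zero_smul]
      have e3 : d i0 ≠ 0 := by simpa [d] using hi0
      rcases le_total (∑ i, ω i * d i) 0 with h | h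
      · exact ⟨d, e1, e2, ⟨_, e3⟩, h⟩
      · refine ⟨-d, fun i hi => by simp [e1 i hi], by simp [e2], ⟨i0, by simpa using e3⟩, ?_⟩
        simpa using h
    have hsum : ∑ i, d i = 0 := by
      have := congrArg ht hd0
      simpa [hw] using this
    obtain ⟨i1, hi1⟩ : ∃ i, d i < 0 := by
      by_contra hcon
      push Not at hcon
      obtain ⟨i, hi⟩ := hdne
      exact hi ((Finset.sum_eq_zero_iff_of_nonneg fun i _ => hcon i).1 hsum i (Finset.mem_univ _))
    obtain ⟨i2, hi2, hmin⟩ := Finset.exists_min_image (Finset.univ.filter fun i => d i < 0)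
      (fun i => a i / (- d i)) ⟨i1, by simpa using hi1⟩
    have hi2 : d i2 < 0 := by simpa using hi2
    set t := a i2 / (- d i2) with ht'
    have ht0 : 0 ≤ t := div_nonneg (ha _) (by linarith)
    set a' : ι → ℝ := fun i => a i + t * d i with ha'
    have ha'0 : ∀ i, 0 ≤ a' i := by
      intro i
      simp only [ha']
      by_cases h : d i < 0
      · have := hmin i (by simpa using h)
        rw [le_div_iff₀ (by linarith)] at this
        linarith
      · have := mul_nonneg ht0 (not_lt.1 h)
        linarith [ha i]
    have hz : a' i2 = 0 := by
      have hne : d i2 ≠ 0 := ne_of_lt hi2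
      simp only [ha', ht']
      rw [div_neg, neg_mul, div_mul_cancel₀ _ hne]
      ring
    have hsub : (Finset.univ.filter fun i => a' i ≠ 0) ⊂ S := by
      rw [Finset.ssubset_iff_of_subset]
      · refine ⟨i2, ?_, by simp [hz]⟩
        by_contra h
        have := hdS i2 h
        linarith
      · intro i hi
        by_contra h
        simp [ha', hS0 i h, hdS i h] at hi
    have hcost : ∑ i, ω i * a' i ≤ ∑ i, ω i * a i := by
      have : ∑ i, ω i * a' i = ∑ i, ω i * a i + t * ∑ i, ω i * d i := by
        rw [Finset.mul_sum, ← Finset.sum_add_distrib]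
        exact Finset.sum_congr rfl fun i _ => by simp only [ha']; ring
      rw [this]
      nlinarith [mul_nonneg ht0 (neg_nonneg.2 hdc)]
    have hay' : ∑ i, a' i • w i = y := by
      simp only [ha', add_smul, Finset.sum_add_distrib, mul_smul, ← Finset.smul_sum, hd0, hay]
      simp
    obtain ⟨B, hB, b, hb1, hb2, hb3, hb4⟩ := ih _ (by rw [← hn]; exact Finset.card_lt_card hsub) a'
      rfl ha'0 hay'
    exact ⟨B, hB, b, hb1, hb2, hb3, hb4.trans hcost⟩

theorem exists_triangulation (w : ι → E) (ht : E →ₗ[ℝ] ℝ) (hw : ∀ i, ht (w i) = 1) :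
    ∃ T : Finset (Finset ι), (∀ B ∈ T, IsBas w B) ∧
      (∀ y, Gen w y → (∃ a : ι → ℝ, (∀ i, 0 ≤ a i) ∧ ∑ i, a i • w i = y) →
        ∃ B ∈ T, ∃ a : ι → ℝ, (∀ i ∈ B, 0 < a i) ∧ (∀ i, i ∉ B → a i = 0) ∧
          ∑ i, a i • w i = y) ∧
      (∀ B ∈ T, ∀ B' ∈ T, ∀ a a' : ι → ℝ, (∀ i ∈ B, 0 < a i) → (∀ i, i ∉ B → a i = 0) →
        (∀ i ∈ B', 0 < a' i) → (∀ i, i ∉ B' → a' i = 0) →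
        ∑ i, a i • w i = ∑ i, a' i • w i → B = B') := by
  classical
  have hco : ∀ B : Finset ι, ∃ c : E →ₗ[ℝ] (ι → ℝ), IsBas w B →
      ((∀ y, ∑ i, c y i • w i = y) ∧ (∀ y i, i ∉ B → c y i = 0) ∧
      ∀ a : ι → ℝ, (∀ i, i ∉ B → a i = 0) → c (∑ i, a i • w i) = a) := by
    intro B
    by_cases h : IsBas w B
    · obtain ⟨c, hc⟩ := exists_coord w B h
      exact ⟨c, fun _ => hc⟩
    · exact ⟨0, fun h' => (h h').elim⟩
  choose c hc using hco
  -- generic heights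
  obtain ⟨ω, hω⟩ : ∃ ω : ι → ℝ, ∀ B, IsBas w B → ∀ j, j ∉ B →
      ∑ i, ω i * c B (w j) i ≠ ω j := by
    let K := {p : Finset ι × ι // IsBas w p.1 ∧ p.2 ∉ p.1}
    let f : K → ((ι → ℝ) →ₗ[ℝ] ℝ) := fun p =>
      ∑ i, (c p.1.1 (w p.1.2) i) • LinearMap.proj i - LinearMap.proj p.1.2
    have hf : ∀ p ω, f p ω = ∑ i, ω i * c p.1.1 (w p.1.2) i - ω p.1.2 := by
      intro p ω
      simp [f, mul_comm]
    by_contra hcon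
    push Not at hcon
    have hcov : ⋃ p : K, ((LinearMap.ker (f p) : Subspace ℝ (ι → ℝ)) : Set (ι → ℝ)) = Set.univ := by
      rw [Set.eq_univ_iff_forall]
      intro ω
      obtain ⟨B, hB, j, hj, h⟩ := hcon ω
      refine Set.mem_iUnion.2 ⟨⟨(B, j), hB, hj⟩, ?_⟩
      simp only [SetLike.mem_coe, LinearMap.mem_ker, hf, h, sub_self]
    obtain ⟨⟨⟨B, j⟩, hB, hj⟩, hp⟩ := Subspace.exists_eq_top_of_iUnion_eq_univ hcov
    have : (Pi.single j 1 : ι → ℝ) ∈ LinearMap.ker (f ⟨⟨B, j⟩, hB, hj⟩) := by rw [hp]; trivial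
    rw [LinearMap.mem_ker, hf] at this
    simp [Pi.single_apply, (hc B hB).2.1 _ _ hj] at this
  let ℓ : Finset ι → E → ℝ := fun B y => ∑ i, ω i * c B y i
  have hℓ : ∀ B (a : ι → ℝ), ℓ B (∑ i, a i • w i) = ∑ i, a i * ℓ B (w i) := by
    intro B a
    simp only [ℓ, map_sum, map_smul, Finset.sum_apply, Pi.smul_apply, smul_eq_mul, Finset.mul_sum]
    rw [Finset.sum_comm]
    exact Finset.sum_congr rfl fun i _ => Finset.sum_congr rfl fun j _ => by ring
  let T : Finset (Finset ι) := Finset.univ.filter fun B => IsBas w B ∧ ∀ j, ℓ B (w j) ≤ ω j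
  have hT : ∀ B, B ∈ T ↔ IsBas w B ∧ ∀ j, ℓ B (w j) ≤ ω j := by intro B; simp [T]
  refine ⟨T, fun B hB => ((hT B).1 hB).1, ?_, ?_⟩
  · rintro y hy ⟨a, ha, hay⟩
    obtain ⟨B0, hB0, a0, h1, h2, h3, -⟩ := lp_reduce ht hw hy ω _ a rfl ha hay
    have hfeas : ∀ B, IsBas w B → ∀ a : ι → ℝ, (∀ i, i ∉ B → a i = 0) → ∑ i, a i • w i = y →
        c B y = a := by
      intro B hB a h1 h2
      rw [← h2]; exact (hc B hB).2.2 a h1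
    obtain ⟨B, hB, hmin⟩ := Finset.exists_min_image
      (Finset.univ.filter fun B => IsBas w B ∧ ∀ i, 0 ≤ c B y i) (fun B => ℓ B y)
      ⟨B0, by simp only [Finset.mem_filter, Finset.mem_univ, true_and]
              exact ⟨hB0, by rw [hfeas B0 hB0 a0 h2 h3]; exact h1⟩⟩
    simp only [Finset.mem_filter, Finset.mem_univ, true_and] at hB hmin
    obtain ⟨hB, hBy⟩ := hB
    have hpos : ∀ i ∈ B, 0 < c B y i := fun i hi =>
      lt_of_le_of_ne (hBy i) (gen_ne hy hB.2 ((hc B hB).2.1 y) ((hc B hB).1 y) i hi).symm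
    refine ⟨B, (hT B).2 ⟨hB, ?_⟩, c B y, hpos, (hc B hB).2.1 y, (hc B hB).1 y⟩
    intro j
    by_contra hj
    push Not at hj
    let d : ι → ℝ := Pi.single j 1 - c B (w j)
    have hd0 : ∑ i, d i • w i = 0 := by
      simp only [d, Pi.sub_apply, sub_smul, Finset.sum_sub_distrib, (hc B hB).1]
      simp [Pi.single_apply, ite_smul]
    have hdc : ∑ i, ω i * d i < 0 := by
      simp only [d, Pi.sub_apply, mul_sub, Finset.sum_sub_distrib]
      simp only [ℓ] at hj
      simpa [Pi.single_apply] using hj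
    have hdB : ∀ i, i ∉ B → 0 ≤ d i := by
      intro i hi
      simp only [d, Pi.sub_apply, (hc B hB).2.1 _ _ hi, sub_zero, Pi.single_apply]
      split_ifs <;> norm_num
    have hev : ∀ᶠ t : ℝ in nhdsWithin 0 (Set.Ioi 0), ∀ i, 0 ≤ c B y i + t * d i := by
      rw [Filter.eventually_all]
      intro i
      by_cases hi : i ∈ B
      · have hcont : Filter.Tendsto (fun t : ℝ => c B y i + t * d i) (nhdsWithin 0 (Set.Ioi 0))
            (nhds (c B y i + 0 * d i)) := by
          apply Filter.Tendsto.mono_left _ nhdsWithin_le_nhds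
          exact Continuous.tendsto (by fun_prop) 0
        have := hcont.eventually (lt_mem_nhds (a := 0) (by simpa using hpos i hi))
        exact this.mono fun t h => h.le
      · filter_upwards [self_mem_nhdsWithin] with t ht0
        have := mul_nonneg (le_of_lt ht0) (hdB i hi)
        linarith [hBy i]
    obtain ⟨t, ht1, ht2⟩ := (hev.and self_mem_nhdsWithin).exists
    have ht2 : 0 < t := ht2
    obtain ⟨B', hB', a', g1, g2, g3, g4⟩ := lp_reduce ht hw hy ω _
      (fun i => c B y i + t * d i) rfl ht1 (by
        simp only [add_smul, Finset.sum_add_distrib, mul_smul, ← Finset.smul_sum, hd0,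
          (hc B hB).1]
        simp)
    have e := hfeas B' hB' a' g2 g3
    have := hmin B' ⟨hB', by rw [e]; exact g1⟩
    simp only [ℓ, e] at this
    have h5 : ∑ i, ω i * (c B y i + t * d i) = ∑ i, ω i * c B y i + t * ∑ i, ω i * d i := by
      rw [Finset.mul_sum, ← Finset.sum_add_distrib]
      exact Finset.sum_congr rfl fun i _ => by ring
    rw [h5] at g4
    have := mul_neg_of_pos_of_neg ht2 hdc
    linarith
  · -- disjointness
    have key : ∀ B ∈ T, ∀ B' ∈ T, ∀ a a' : ι → ℝ, (∀ i ∈ B, 0 < a i) → (∀ i, i ∉ B → a i = 0) →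
        (∀ i ∈ B', 0 < a' i) → (∀ i, i ∉ B' → a' i = 0) →
        ∑ i, a i • w i = ∑ i, a' i • w i → ∑ i, ω i * a i ≤ ∑ i, ω i * a' i := by
      intro B hB B' hB' a a' h1 h2 h3 h4 h5
      obtain ⟨hB, hBo⟩ := (hT B).1 hB
      have e1 : ℓ B (∑ i, a i • w i) = ∑ i, ω i * a i := by
        simp only [ℓ, (hc B hB).2.2 a h2]
      rw [← e1, h5, hℓ]
      refine Finset.sum_le_sum fun i _ => ?_
      rw [mul_comm]
      apply mul_le_mul_of_nonneg_right (hBo i)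
      by_cases hi : i ∈ B'
      · exact (h3 i hi).le
      · exact (h4 i hi).ge
    have key2 : ∀ B ∈ T, ∀ B' ∈ T, ∀ a a' : ι → ℝ, (∀ i ∈ B, 0 < a i) → (∀ i, i ∉ B → a i = 0) →
        (∀ i ∈ B', 0 < a' i) → (∀ i, i ∉ B' → a' i = 0) →
        ∑ i, a i • w i = ∑ i, a' i • w i → B' ⊆ B := by
      intro B hB B' hB' a a' h1 h2 h3 h4 h5
      have k1 := key B hB B' hB' a a' h1 h2 h3 h4 h5
      have k2 := key B' hB' B hB a' a h3 h4 h1 h2 h5.symm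
      obtain ⟨hB, hBo⟩ := (hT B).1 hB
      have e1 : ℓ B (∑ i, a i • w i) = ∑ i, ω i * a i := by
        simp only [ℓ, (hc B hB).2.2 a h2]
      rw [h5, hℓ] at e1
      intro j hj
      by_contra hjB
      have hlt : ℓ B (w j) < ω j := lt_of_le_of_ne (hBo j) (hω B hB j hjB)
      have : ∑ i, a' i * ℓ B (w i) < ∑ i, ω i * a' i := by
        apply Finset.sum_lt_sum
        · intro i _
          rw [mul_comm]
          apply mul_le_mul_of_nonneg_right (hBo i)
          by_cases hi : i ∈ B'
          · exact (h3 i hi).le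
          · exact (h4 i hi).ge
        · refine ⟨j, Finset.mem_univ _, ?_⟩
          rw [mul_comm]
          exact mul_lt_mul_of_pos_right hlt (h3 j hj)
      linarith
    intro B hB B' hB' a a' h1 h2 h3 h4 h5
    exact Finset.Subset.antisymm (key2 B' hB' B hB a' a h3 h4 h1 h2 h5.symm)
      (key2 B hB B' hB' a a' h1 h2 h3 h4 h5)

end tri
lemma gen_ae {m : ℕ} {ι : Type*} [Fintype ι] (w : ι → (Fin m → ℝ) × ℝ) :
    volume {x : Fin m → ℝ | ¬ Gen w (x, (1:ℝ))} = 0 := by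
  classical
  have hsub : {x : Fin m → ℝ | ¬ Gen w (x, (1:ℝ))} ⊆
      ⋃ T : {T : Finset ι // T.card < Module.finrank ℝ ((Fin m → ℝ) × ℝ)},
        {x : Fin m → ℝ | (x, (1:ℝ)) ∈ Submodule.span ℝ (w '' T.1)} := by
    intro x hx
    simp only [Gen, Set.mem_ofPred_eq] at hx
    push Not at hx
    obtain ⟨T, hT, h⟩ := hx
    exact Set.mem_iUnion.2 ⟨⟨T, hT⟩, h⟩
  refine measure_mono_null hsub (measure_iUnion_null ?_)
  rintro ⟨T, hT⟩
  let f : (Fin m → ℝ) →ᵃ[ℝ] ((Fin m → ℝ) × ℝ) :=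
    (LinearMap.inl ℝ (Fin m → ℝ) ℝ).toAffineMap + AffineMap.const ℝ _ ((0 : Fin m → ℝ), (1:ℝ))
  have hf : ∀ x, f x = (x, 1) := by intro x; simp [f]
  set p := Submodule.span ℝ (w '' (T : Set ι)) with hp
  let A : AffineSubspace ℝ (Fin m → ℝ) := p.toAffineSubspace.comap f
  have hA : (A : Set (Fin m → ℝ)) = {x : Fin m → ℝ | (x, (1:ℝ)) ∈ p} := by
    ext x; simp [A, hf]
  rw [← hA]
  apply Measure.addHaar_affineSubspace
  intro htop
  have hall : ∀ x : Fin m → ℝ, (x, (1:ℝ)) ∈ p := by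
    intro x
    have : x ∈ (A : Set (Fin m → ℝ)) := by rw [htop]; trivial
    rwa [hA] at this
  have hptop : p = ⊤ := by
    rw [Submodule.eq_top_iff']
    rintro ⟨x, s⟩
    have h1 := p.sub_mem (hall x) (hall 0)
    have h2 := p.smul_mem s (hall 0)
    have := p.add_mem h1 h2
    simpa using this
  have h3 : Module.finrank ℝ p ≤ T.card := by
    have := finrank_span_finset_le_card (R := ℝ) (T.image w)
    rw [Finset.coe_image] at this
    exact this.trans Finset.card_image_le
  rw [hptop, finrank_top] at h3
  omega

lemma ev_pos {a c : ℝ} (h : 0 < a ∨ (a = 0 ∧ 0 < c)) :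
    ∀ᶠ t : ℝ in nhdsWithin 0 (Set.Ioi 0), 0 < a + t * c := by
  rcases h with h | ⟨rfl, h⟩
  · have hcont : Filter.Tendsto (fun t : ℝ => a + t * c) (nhdsWithin 0 (Set.Ioi 0))
        (nhds (a + 0 * c)) := by
      apply Filter.Tendsto.mono_left _ nhdsWithin_le_nhds
      exact Continuous.tendsto (by fun_prop) 0
    exact hcont.eventually (lt_mem_nhds (a := 0) (by simpa using h))
  · filter_upwards [self_mem_nhdsWithin] with t ht
    rw [zero_add]; exact mul_pos ht h

lemma latticePts_finite {m : ℕ} {P : Set (Fin m → ℝ)} (hP : Bornology.IsBounded P) :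
    (latticePts P).Finite := by
  obtain ⟨R, hR⟩ := hP.subset_closedBall 0
  apply (Set.finite_Icc (fun _ : Fin m => -⌈R⌉) (fun _ => ⌈R⌉)).subset
  intro x hx
  have h := hR hx
  rw [mem_closedBall_zero_iff] at h
  have hj : ∀ j, |(x j : ℝ)| ≤ ⌈R⌉ := fun j =>
    ((norm_le_pi_norm (fun j => (x j : ℝ)) j).trans h).trans (Int.le_ceil R)
  constructor
  · intro j
    have := (abs_le.1 (hj j)).1
    exact_mod_cast this
  · intro j
    have := (abs_le.1 (hj j)).2
    exact_mod_cast this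

lemma simplex_bound {m : ℕ} {V : Finset (Fin m → ℤ)} (w : {v // v ∈ V} → (Fin m → ℝ) × ℝ)
    (hw : ∀ v, w v = (fun j => (v.1 j : ℝ), 1)) (g : Fin m → ℝ) (hg : Gen w (g, (1:ℝ)))
    (B : Finset {v // v ∈ V}) (hB : IsBas w B) :
    ∃ D : ℕ, (m.factorial : ENNReal) * volume {x : Fin m → ℝ | ∃ a : {v // v ∈ V} → ℝ,
        (∀ i ∈ B, 0 < a i) ∧ (∀ i, i ∉ B → a i = 0) ∧ ∑ i, a i • w i = (x, (1:ℝ))} ≤ D ∧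
      ∀ k : ℕ, ∃ F : Finset (Fin m → ℤ), k.choose m * D ≤ F.card ∧
        ∀ x ∈ F, ∃ a c : {v // v ∈ V} → ℝ, (∀ i, i ∉ B → a i = 0) ∧ (∀ i, i ∉ B → c i = 0) ∧
          ∑ i, a i • w i = (fun j => (x j : ℝ), (k:ℝ)) ∧ ∑ i, c i • w i = (g, (1:ℝ)) ∧
          (∀ i, 0 ≤ a i) ∧ ∀ i ∈ B, 0 < a i ∨ (a i = 0 ∧ 0 < c i) := by
  classical
  have hrank : Module.finrank ℝ ((Fin m → ℝ) × ℝ) = m + 1 := by simp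
  let e : Fin (m+1) ≃ B := (Finset.equivFinOfCardEq (by rw [hB.2, hrank])).symm
  let u : Fin (m+1) → Fin m → ℤ := fun i => (e i).1.1
  have hsumB : ∀ a : {v // v ∈ V} → ℝ, (∀ i, i ∉ B → a i = 0) →
      ∑ i, a i • w i = (fun j => ∑ i, a (e i) * u i j, ∑ i, a (e i)) := by
    intro a ha
    have h1 : ∑ i, a i • w i = ∑ i : B, a i • w i := by
      rw [Finset.sum_coe_sort B (fun i => a i • w i)]
      symm
      apply Finset.sum_subset (Finset.subset_univ _)
      intro i _ hi
      rw [ha i hi, zero_smul]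
    rw [h1, ← Equiv.sum_comp e]
    ext j
    · simp only [hw, Prod.fst_sum, Prod.smul_fst, Finset.sum_apply, Pi.smul_apply, smul_eq_mul, u]
    · simp only [hw, Prod.snd_sum, Prod.smul_snd, smul_eq_mul, mul_one]
  obtain ⟨c, hc1, hc2, hc3⟩ := exists_coord w B hB
  have hcne := gen_ne hg hB.2 (hc2 (g, 1)) (hc1 (g, 1))
  refine ⟨(edgeM u).det.natAbs, ?_, fun k => ?_⟩
  · refine le_trans ?_ (vol_simplex u)
    gcongr
    rintro ⟨a, h1, h2, h3⟩
    rw [hsumB a h2] at h3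
    exact ⟨fun i => a (e i), fun i => h1 _ (e i).2, congrArg Prod.snd h3,
      fun j => congrFun (congrArg Prod.fst h3) j⟩
  · obtain ⟨F, hF1, hF2⟩ := count_simplex u (fun i => c (g, 1) (e i) < 0) (by
      by_contra hcon
      push Not at hcon
      have h1 := hc1 (g, 1)
      rw [hsumB _ (hc2 _)] at h1
      have h2 : ∑ i, c (g, 1) (e i) = 1 := congrArg Prod.snd h1
      have h3 : ∑ i, c (g, 1) (e i) ≤ 0 := Finset.sum_nonpos fun i _ => (hcon i).le
      linarith) k
    refine ⟨F, hF1, fun x hx => ?_⟩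
    obtain ⟨a, ha1, ha2, ha3⟩ := hF2 x hx
    let a' : {v // v ∈ V} → ℝ := fun i => if h : i ∈ B then a (e.symm ⟨i, h⟩) else 0
    have ha'0 : ∀ i, i ∉ B → a' i = 0 := by intro i hi; simp [a', hi]
    have ha'e : ∀ i, a' (e i) = a i := by intro i; simp [a']
    have hsurj : ∀ i ∈ B, ∃ i', (e i' : {v // v ∈ V}) = i := by
      intro i hi; exact ⟨e.symm ⟨i, hi⟩, by simp⟩
    refine ⟨a', c (g, 1), ha'0, hc2 _, ?_, hc1 _, ?_, ?_⟩
    · rw [hsumB a' ha'0]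
      simp only [ha'e, ha2, ha3]
    · intro i
      by_cases hi : i ∈ B
      · obtain ⟨i', rfl⟩ := hsurj i hi
        rw [ha'e]; exact (ha1 i').1
      · exact (ha'0 i hi).ge
    · intro i hi
      have hne := hcne i hi
      obtain ⟨i', rfl⟩ := hsurj i hi
      rw [ha'e]
      rcases lt_or_gt_of_ne hne with h | h
      · exact Or.inl ((ha1 i').2 h)
      · rcases (ha1 i').1.lt_or_eq with h' | h'
        · exact Or.inl h'
        · exact Or.inr ⟨h'.symm, h⟩

lemma poly_bound {m : ℕ} (V : Finset (Fin m → ℤ)) (P : Set (Fin m → ℝ))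
    (hP : P = convexHull ℝ ((fun (v : Fin m → ℤ) (j : Fin m) => (v j : ℝ)) '' ↑V)) :
    ∃ D : ℕ, (m.factorial : ENNReal) * volume P ≤ D ∧
      ∀ k : ℕ, 1 ≤ k → k.choose m * D ≤ (latticePts ((k : ℝ) • P)).ncard := by
  classical
  let w : {v // v ∈ V} → (Fin m → ℝ) × ℝ := fun v => (fun j => (v.1 j : ℝ), 1)
  let ht : (Fin m → ℝ) × ℝ →ₗ[ℝ] ℝ := LinearMap.snd ℝ _ _
  have hw : ∀ i, ht (w i) = 1 := fun i => rfl
  have hrank : Module.finrank ℝ ((Fin m → ℝ) × ℝ) = m + 1 := by simp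
  obtain ⟨T, hTB, hcover, hdisj⟩ := exists_triangulation w ht hw
  -- generic direction
  obtain ⟨g, hg⟩ : ∃ g : Fin m → ℝ, Gen w (g, (1:ℝ)) := by
    by_contra hcon
    push Not at hcon
    have h0 := gen_ae w
    rw [show {x : Fin m → ℝ | ¬ Gen w (x, (1:ℝ))} = Set.univ from
      Set.eq_univ_of_forall hcon] at h0
    exact (NeZero.ne (volume : Measure (Fin m → ℝ))) (Measure.measure_univ_eq_zero.1 h0)
  have hsb : ∀ B : T, _ := fun B => simplex_bound w (fun _ => rfl) g hg B.1 (hTB B.1 B.2)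
  choose D hD F hF1 hF2 using hsb
  have hwfst : ∀ a : {v // v ∈ V} → ℝ, ∀ (x : Fin m → ℝ) (s : ℝ), ∑ i, a i • w i = (x, s) →
      (∑ i, a i • (fun j => ((i : {v // v ∈ V}).1 j : ℝ)) = x ∧ ∑ i, a i = s) := by
    intro a x s h
    refine ⟨?_, ?_⟩
    · have h' := congrArg Prod.fst h
      simpa only [w, Prod.fst_sum, Prod.smul_fst] using h'
    · have h' := congrArg Prod.snd h
      simpa only [w, Prod.snd_sum, Prod.smul_snd, smul_eq_mul, mul_one] using h'
  have hPconv : Convex ℝ P := by rw [hP]; exact convex_convexHull _ _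
  have hPbd : Bornology.IsBounded P := by
    rw [hP, isBounded_convexHull]
    exact (V.finite_toSet.image _).isBounded
  have hPsub : ∀ x ∈ P, ∃ a : {v // v ∈ V} → ℝ, (∀ i, 0 ≤ a i) ∧ ∑ i, a i • w i = (x, (1:ℝ)) := by
    intro x hx
    rw [hP] at hx
    refine convexHull_min (t := {x : Fin m → ℝ | ∃ a : {v // v ∈ V} → ℝ, (∀ i, 0 ≤ a i) ∧
      ∑ i, a i • w i = (x, (1:ℝ))}) ?_ ?_ hx
    · rintro _ ⟨v, hv, rfl⟩
      refine ⟨Pi.single ⟨v, hv⟩ 1, fun i => ?_, ?_⟩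
      · rw [Pi.single_apply]; split_ifs <;> norm_num
      · simp only [Pi.single_apply, ite_smul, one_smul, zero_smul, Finset.sum_ite_eq',
          Finset.mem_univ, if_true, w]
    · rintro x ⟨a, ha, hax⟩ y ⟨b, hb, hby⟩ s t hs ht' hst
      refine ⟨fun i => s * a i + t * b i, fun i => ?_, ?_⟩
      · have := ha i
        have := hb i
        positivity
      · simp only [add_smul, Finset.sum_add_distrib, mul_smul, ← Finset.smul_sum, hax, hby]
        ext
        · simp
        · simpa using hst
  refine ⟨∑ B, D B, ?_, fun k hk => ?_⟩
  · have hsub : P ⊆ {x : Fin m → ℝ | ¬ Gen w (x, (1:ℝ))} ∪ ⋃ B : T,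
        {x : Fin m → ℝ | ∃ a : {v // v ∈ V} → ℝ,
        (∀ i ∈ B.1, 0 < a i) ∧ (∀ i, i ∉ B.1 → a i = 0) ∧ ∑ i, a i • w i = (x, (1:ℝ))} := by
      intro x hx
      by_cases hgx : Gen w (x, (1:ℝ))
      · right
        obtain ⟨B, hB, h⟩ := hcover _ hgx (hPsub x hx)
        exact Set.mem_iUnion.2 ⟨⟨B, hB⟩, h⟩
      · exact Or.inl hgx
    have h1 := (measure_mono (μ := volume) hsub).trans (measure_union_le _ _)
    rw [gen_ae, zero_add] at h1
    have h2 := h1.trans (measure_iUnion_fintype_le volume _)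
    calc (m.factorial : ENNReal) * volume P ≤ m.factorial * _ := mul_le_mul_right h2 _
      _ ≤ ∑ B, (D B : ENNReal) := by
        rw [Finset.mul_sum]
        exact Finset.sum_le_sum fun B _ => hD B
      _ = _ := by push_cast; rfl
  · have hk0 : (k:ℝ) ≠ 0 := by positivity
    have hpd : ∀ B B' : T, B ≠ B' → Disjoint (F B k) (F B' k) := by
      intro B B' hne
      rw [Finset.disjoint_left]
      intro x hx hx'
      apply hne
      obtain ⟨a, c, h1, h2, h3, h4, -, h5⟩ := hF2 B k x hx
      obtain ⟨a', c', h1', h2', h3', h4', -, h5'⟩ := hF2 B' k x hx'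
      have ev1 : ∀ᶠ t : ℝ in nhdsWithin 0 (Set.Ioi 0), ∀ i : B.1, 0 < a i + t * c i := by
        rw [Filter.eventually_all]
        exact fun i => ev_pos (h5 i i.2)
      have ev2 : ∀ᶠ t : ℝ in nhdsWithin 0 (Set.Ioi 0), ∀ i : B'.1, 0 < a' i + t * c' i := by
        rw [Filter.eventually_all]
        exact fun i => ev_pos (h5' i i.2)
      obtain ⟨t, e1, e2⟩ := (ev1.and ev2).exists
      apply Subtype.ext
      refine hdisj B.1 B.2 B'.1 B'.2 (fun i => a i + t * c i) (fun i => a' i + t * c' i)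
        (fun i hi => e1 ⟨i, hi⟩) (fun i hi => by simp [h1 i hi, h2 i hi])
        (fun i hi => e2 ⟨i, hi⟩) (fun i hi => by simp [h1' i hi, h2' i hi]) ?_
      simp only [add_smul, Finset.sum_add_distrib, mul_smul, ← Finset.smul_sum]
      rw [h3, h4, h3', h4']
    have hsub : (↑(Finset.univ.biUnion fun B : T => F B k) : Set (Fin m → ℤ)) ⊆
        latticePts ((k : ℝ) • P) := by
      intro x hx
      simp only [Finset.coe_biUnion, Set.mem_iUnion] at hx
      obtain ⟨B, -, hx⟩ := hx
      obtain ⟨a, c, h1, h2, h3, h4, h6, h5⟩ := hF2 B k x hx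
      obtain ⟨g1, g2⟩ := hwfst a _ _ h3
      change (fun j => (x j : ℝ)) ∈ (k:ℝ) • P
      rw [Set.mem_smul_set_iff_inv_smul_mem₀ hk0, ← g1, Finset.smul_sum]
      simp only [smul_smul]
      refine hPconv.sum_mem (fun i _ => ?_) ?_ (fun i _ => ?_)
      · have := h6 i
        positivity
      · rw [← Finset.mul_sum, g2, inv_mul_cancel₀ hk0]
      · rw [hP]
        exact subset_convexHull _ _ ⟨i.1, i.2, rfl⟩
    have hfin : (latticePts ((k : ℝ) • P)).Finite := latticePts_finite (hPbd.smul₀ _)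
    have h := Set.ncard_le_ncard hsub hfin
    rw [Set.ncard_coe_finset, Finset.card_biUnion (fun B _ B' _ hne => hpd B B' hne)] at h
    refine le_trans ?_ h
    rw [Finset.mul_sum]
    exact Finset.sum_le_sum fun B _ => hF1 B k

lemma dim_one (V : Finset (Fin 1 → ℤ)) (P : Set (Fin 1 → ℝ))
    (hP : P = convexHull ℝ ((fun (v : Fin 1 → ℤ) (j : Fin 1) => (v j : ℝ)) '' ↑V))
    (hne : V.Nonempty) :
    (volume P).toReal < (latticePts P).ncard := by
  have hPconv : Convex ℝ P := by rw [hP]; exact convex_convexHull _ _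
  have hPbd : Bornology.IsBounded P := by
    rw [hP, isBounded_convexHull]
    exact (V.finite_toSet.image _).isBounded
  obtain ⟨va, hva, hmin⟩ := V.exists_min_image (fun v => v 0) hne
  obtain ⟨vb, hvb, hmax⟩ := V.exists_max_image (fun v => v 0) hne
  have hab : va 0 ≤ vb 0 := hmin vb hvb
  have hsub : P ⊆ Set.Icc (fun _ => (va 0 : ℝ)) (fun _ => (vb 0 : ℝ)) := by
    rw [hP]
    refine convexHull_min ?_ (convex_Icc _ _)
    rintro _ ⟨v, hv, rfl⟩
    constructor
    · intro j
      rw [Subsingleton.elim j 0]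
      change (va 0 : ℝ) ≤ (v 0 : ℝ)
      exact_mod_cast hmin v hv
    · intro j
      rw [Subsingleton.elim j 0]
      change (v 0 : ℝ) ≤ (vb 0 : ℝ)
      exact_mod_cast hmax v hv
  have hvol : (volume P).toReal ≤ (vb 0 : ℝ) - va 0 := by
    have h1 := measure_mono (μ := volume) hsub
    rw [Real.volume_Icc_pi] at h1
    simp only [Finset.univ_unique, Finset.prod_singleton] at h1
    have := ENNReal.toReal_mono ENNReal.ofReal_ne_top h1
    rwa [ENNReal.toReal_ofReal] at this
    have : (va 0 : ℝ) ≤ vb 0 := by exact_mod_cast hab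
    linarith
  have hin : ∀ v ∈ V, (fun _ : Fin 1 => (v 0 : ℝ)) ∈ P := by
    intro v hv
    rw [hP]
    refine subset_convexHull _ _ ⟨v, hv, ?_⟩
    funext j
    rw [Subsingleton.elim j 0]
  let f : ℝ →ₗ[ℝ] (Fin 1 → ℝ) := LinearMap.pi fun _ => LinearMap.id
  have hoc : (f ⁻¹' P).OrdConnected := (hPconv.linear_preimage f).ordConnected
  have hseg : ∀ n : ℤ, va 0 ≤ n → n ≤ vb 0 → (fun _ : Fin 1 => (n : ℝ)) ∈ P := by
    intro n h1 h2
    have h1' : (va 0 : ℝ) ≤ (n : ℝ) := by exact_mod_cast h1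
    have h2' : (n : ℝ) ≤ (vb 0 : ℝ) := by exact_mod_cast h2
    have hmem : (n : ℝ) ∈ f ⁻¹' P :=
      hoc.out (x := (va 0 : ℝ)) (hin va hva) (y := (vb 0 : ℝ)) (hin vb hvb) ⟨h1', h2'⟩
    exact hmem
  have hinj : Function.Injective (fun (n : ℤ) (_ : Fin 1) => n) := fun a b h => congrFun h 0
  have hsub2 : (↑((Finset.Icc (va 0) (vb 0)).map ⟨_, hinj⟩) : Set (Fin 1 → ℤ)) ⊆ latticePts P := by
    intro x hx
    simp only [Finset.coe_map, Function.Embedding.coeFn_mk, Set.mem_image, Finset.mem_coe,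
      Finset.mem_Icc] at hx
    obtain ⟨n, hn, rfl⟩ := hx
    exact hseg n hn.1 hn.2
  have h := Set.ncard_le_ncard hsub2 (latticePts_finite hPbd)
  rw [Set.ncard_coe_finset, Finset.card_map, Int.card_Icc] at h
  have h3 : (vb 0 : ℤ) + 1 - va 0 ≤ (latticePts P).ncard := by omega
  have h4 : ((vb 0 + 1 - va 0 : ℤ) : ℝ) ≤ ((latticePts P).ncard : ℝ) := by exact_mod_cast h3
  push_cast at h4
  linarith

/-- Let `P ⊆ ℝ^m` (`m ≥ 1`) be an `m`-dimensional lattice polytope.  For every integer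
`λ ≥ m` one has `Σ_{k=1}^{λ} |kP ∩ ℤ^m| > C(λ+1, m+1) · m! · vol(P)`. -/
theorem sum_ehrhart_gt_choose_mul_vol
    (m : ℕ) (hm : 1 ≤ m) (P : Set (Fin m → ℝ))
    (hP : ∃ V : Finset (Fin m → ℤ),
      P = convexHull ℝ ((fun (v : Fin m → ℤ) (j : Fin m) => (v j : ℝ)) '' ↑V))
    (hPfull : (interior P).Nonempty)
    (lam : ℕ) (hlam : m ≤ lam) :
    ((Nat.choose (lam + 1) (m + 1) : ℝ)) * (Nat.factorial m) *
        (MeasureTheory.volume P).toReal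
      < (∑ k ∈ Finset.Icc 1 lam, (latticePts ((k : ℝ) • P)).ncard : ℕ) := by
  obtain ⟨V, hV⟩ := hP
  obtain ⟨D, hD, hk⟩ := poly_bound V P hV
  have hne : V.Nonempty := by
    rw [Finset.nonempty_iff_ne_empty]
    rintro rfl
    obtain ⟨x, hx⟩ := hPfull
    have := interior_subset hx
    rw [hV] at this
    simp at this
  have hPne : P.Nonempty := hPfull.mono interior_subset
  have hPbd : Bornology.IsBounded P := by
    rw [hV, isBounded_convexHull]
    exact (V.finite_toSet.image _).isBounded
  have hDR : (m.factorial : ℝ) * (volume P).toReal ≤ D := by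
    have := ENNReal.toReal_mono (ENNReal.natCast_ne_top D) hD
    simpa using this
  have hterm : ∀ k : ℕ, 1 ≤ k → (k.choose m : ℝ) * (m.factorial * (volume P).toReal) ≤
      (latticePts ((k : ℝ) • P)).ncard := by
    intro k hk1
    have h1 : ((k.choose m * D : ℕ) : ℝ) ≤ (latticePts ((k : ℝ) • P)).ncard := by
      exact_mod_cast hk k hk1
    push_cast at h1
    refine le_trans ?_ h1
    gcongr
  have hone : ((1:ℕ).choose m : ℝ) * (m.factorial * (volume P).toReal) <
      (latticePts (((1:ℕ) : ℝ) • P)).ncard := by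
    rw [Nat.cast_one, one_smul]
    rcases hm.eq_or_lt with h | h
    · subst h
      simpa using dim_one V P hV hne
    · rw [Nat.choose_eq_zero_of_lt h]
      simp only [Nat.cast_zero, zero_mul, Nat.cast_pos]
      rw [Set.ncard_pos (latticePts_finite hPbd)]
      obtain ⟨v, hv⟩ := hne
      refine ⟨v, ?_⟩
      change (fun j => (v j : ℝ)) ∈ P
      rw [hV]
      exact subset_convexHull _ _ ⟨v, hv, rfl⟩
  have hch : ((lam + 1).choose (m + 1) : ℝ) = ∑ k ∈ Finset.Icc 1 lam, (k.choose m : ℝ) := by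
    rw [← Nat.sum_Icc_choose]
    push_cast
    apply Finset.sum_subset
    · exact Finset.Icc_subset_Icc_left hm
    · intro k hk1 hk2
      rw [Finset.mem_Icc] at hk1 hk2
      rw [Nat.choose_eq_zero_of_lt (by omega)]
      simp
  rw [mul_assoc, hch, Finset.sum_mul]
  push_cast
  apply Finset.sum_lt_sum
  · intro k hk1
    exact hterm k (Finset.mem_Icc.1 hk1).1
  · exact ⟨1, Finset.mem_Icc.2 ⟨le_rfl, hm.trans hlam⟩, hone⟩
end

section
/- Let m ≥ 1, let P ⊆ ℝ^m be an m-dimensional lattice polytope, and let n be a positive integer. Then for every integer λ ≥ max{ m, e·((m+1)·n / vol(P))^{1/(m+1)} }, one has Σ_{k=1}^{λ} |kP ∩ ℤ^m| > n. -/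
open scoped Pointwise

namespace EhrSum

/-- `a` is a cost-minimal nonnegative representation. -/
def Opt {ι E : Type*} [Fintype ι] [AddCommGroup E] [Module ℝ E] (w : ι → E) (c : ι → ℝ)
    (a : ι → ℝ) : Prop :=
  (∀ i, 0 ≤ a i) ∧ ∀ b : ι → ℝ, (∀ i, 0 ≤ b i) → ∑ i, b i • w i = ∑ i, a i • w i →
    ∑ i, c i * a i ≤ ∑ i, c i * b i

section
variable {ι E : Type*} [Fintype ι] [DecidableEq ι] [AddCommGroup E] [Module ℝ E] (w : ι → E)

/-- perturbation by a small multiple keeps nonnegativity -/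
lemma exists_delta (a r : ι → ℝ) (ha : ∀ i, 0 ≤ a i) (hr : ∀ i, a i = 0 → r i = 0) :
    ∃ δ > 0, ∀ i, 0 ≤ a i + δ * r i ∧ 0 ≤ a i - δ * r i := by
  have h : ∀ i, ∀ᶠ δ : ℝ in nhdsWithin 0 (Set.Ioi 0), 0 ≤ a i + δ * r i ∧ 0 ≤ a i - δ * r i := by
    intro i
    rcases (ha i).eq_or_lt with h0 | h0
    · have := hr i h0.symm
      simp [← h0, this]
    · have h1 : ∀ᶠ δ : ℝ in nhds 0, 0 < a i + δ * r i := by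
        apply ContinuousAt.eventually_lt (f := fun _ => (0:ℝ)) (by fun_prop) (by fun_prop)
        simpa
      have h2 : ∀ᶠ δ : ℝ in nhds 0, 0 < a i - δ * r i := by
        apply ContinuousAt.eventually_lt (f := fun _ => (0:ℝ)) (by fun_prop) (by fun_prop)
        simpa
      apply Filter.Eventually.filter_mono nhdsWithin_le_nhds
      filter_upwards [h1, h2] with δ a b using ⟨a.le, b.le⟩
  have h' := (Filter.eventually_all.2 h).and self_mem_nhdsWithin
  obtain ⟨δ, h1, h2⟩ := h'.exists
  exact ⟨δ, h2, h1⟩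

lemma exists_cost : ∃ c : ι → ℝ, ∀ a, Opt w c a →
    ∀ r : ι → ℝ, (∀ i, a i = 0 → r i = 0) → ∑ i, r i • w i = 0 → r = 0 := by
  classical
  let D := {S : Finset ι // ∃ r : ι → ℝ, r ≠ 0 ∧ (∀ i, i ∉ S → r i = 0) ∧ ∑ i, r i • w i = 0}
  choose r hr0 hrS hrw using fun S : D => S.2
  obtain ⟨f, hf⟩ := Module.exists_dual_forall_apply_ne_zero (K := ℝ) (M := ι → ℝ) r hr0
  have hfe : ∀ x : ι → ℝ, f x = ∑ i, f (Pi.single i 1) * x i := by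
    intro x
    conv_lhs => rw [pi_eq_sum_univ' x]
    rw [map_sum]
    refine Finset.sum_congr rfl fun i _ => ?_
    rw [map_smul, smul_eq_mul, mul_comm]
  refine ⟨fun i => f (Pi.single i 1), fun a ha s hs hsw => ?_⟩
  by_contra hne
  let S : D := ⟨Finset.univ.filter (fun i => a i ≠ 0), s, hne, by
    intro i hi; apply hs; simpa using hi, hsw⟩
  obtain ⟨δ, hδ, hd⟩ := exists_delta a (r S) ha.1 (fun i hi => hrS S i (by simp [S, hi]))
  have e1 := ha.2 (a + δ • r S) (fun i => (hd i).1) (by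
    simp [add_smul, Finset.sum_add_distrib, mul_smul, ← Finset.smul_sum, hrw])
  have e2 := ha.2 (a - δ • r S) (fun i => (hd i).2) (by
    simp [sub_smul, Finset.sum_sub_distrib, mul_smul, ← Finset.smul_sum, hrw])
  simp only [← hfe, map_add, map_sub, map_smul, smul_eq_mul] at e1 e2
  have : δ * f (r S) = 0 := by linarith
  rcases mul_eq_zero.1 this with h | h
  · exact hδ.ne' h
  · exact hf S h

variable {w} {c : ι → ℝ}

lemma Opt.mono {a b : ι → ℝ} (ha : Opt w c a) (hb : ∀ i, 0 ≤ b i)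
    (hab : ∀ i, a i = 0 → b i = 0) : Opt w c b := by
  refine ⟨hb, fun b' hb' hw => ?_⟩
  obtain ⟨δ, hδ, hd⟩ := exists_delta a b ha.1 hab
  have := ha.2 (fun i => a i - δ * b i + δ * b' i)
    (fun i => add_nonneg (hd i).2 (mul_nonneg hδ.le (hb' i))) (by
      simp [add_smul, sub_smul, Finset.sum_add_distrib, Finset.sum_sub_distrib, mul_smul,
        ← Finset.smul_sum, hw])
  have e : ∑ i, c i * (a i - δ * b i + δ * b' i) = ∑ i, c i * a i
      - δ * ∑ i, c i * b i + δ * ∑ i, c i * b' i := by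
    rw [Finset.mul_sum, Finset.mul_sum, ← Finset.sum_sub_distrib, ← Finset.sum_add_distrib]
    exact Finset.sum_congr rfl fun i _ => by ring
  rw [e] at this
  have : δ * ∑ i, c i * b i ≤ δ * ∑ i, c i * b' i := by linarith
  exact le_of_mul_le_mul_left this hδ

lemma Opt.unique (hc : ∀ a, Opt w c a →
    ∀ r : ι → ℝ, (∀ i, a i = 0 → r i = 0) → ∑ i, r i • w i = 0 → r = 0)
    {a b : ι → ℝ} (ha : Opt w c a) (hb : Opt w c b)
    (hab : ∑ i, a i • w i = ∑ i, b i • w i) : a = b := by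
  have h1 := ha.2 b hb.1 hab.symm
  have h2 := hb.2 a ha.1 hab
  have hm : Opt w c (fun i => (1/2 : ℝ) * a i + (1/2:ℝ) * b i) := by
    have e : ∑ i, ((1/2 : ℝ) * a i + (1/2:ℝ) * b i) • w i = ∑ i, a i • w i := by
      simp only [add_smul, mul_smul, Finset.sum_add_distrib, ← Finset.smul_sum, ← hab]
      rw [← add_smul]; norm_num
    refine ⟨fun i => by have := ha.1 i; have := hb.1 i; positivity, fun b' hb' hw => ?_⟩
    rw [e] at hw
    have := ha.2 b' hb' hw
    have e : ∑ i, c i * ((1/2 : ℝ) * a i + (1/2:ℝ) * b i) = 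
      (1/2:ℝ) * ∑ i, c i * a i + (1/2:ℝ) * ∑ i, c i * b i := by
      rw [Finset.mul_sum, Finset.mul_sum, ← Finset.sum_add_distrib]
      exact Finset.sum_congr rfl fun i _ => by ring
    rw [e]; linarith
  have := hc _ hm (a - b) (fun i hi => by
    have := ha.1 i; have := hb.1 i
    have h1 : a i = 0 := by linarith
    have h2 : b i = 0 := by linarith
    simp [h1, h2]) (by simp [sub_smul, Finset.sum_sub_distrib, hab])
  exact sub_eq_zero.1 this

end

lemma Opt.exists {ι E : Type*} [Fintype ι] [NormedAddCommGroup E] [NormedSpace ℝ E] 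
    (w : ι → E) (c : ι → ℝ) (ht : E →ₗ[ℝ] ℝ) (hw : ∀ i, ht (w i) = 1) (a : ι → ℝ)
    (ha : ∀ i, 0 ≤ a i) : ∃ b, Opt w c b ∧ ∑ i, b i • w i = ∑ i, a i • w i := by
  let K : Set (ι → ℝ) := {b | (∀ i, 0 ≤ b i) ∧ ∑ i, b i • w i = ∑ i, a i • w i}
  have hK : IsCompact K := by
    apply IsCompact.of_isClosed_subset (isCompact_Icc (a := (0 : ι → ℝ)) (b := fun _ => ∑ i, a i))
    · apply IsClosed.and
      · simp only [Set.ofPred_forall]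
        exact isClosed_iInter fun i => isClosed_le (by fun_prop) (by fun_prop)
      · exact isClosed_eq (by fun_prop) (by fun_prop)
    · rintro b ⟨hb, hbw⟩
      have := congrArg ht hbw
      simp [hw] at this
      refine ⟨hb, fun i => ?_⟩
      rw [← this]
      exact Finset.single_le_sum (f := b) (fun i _ => hb i) (Finset.mem_univ i)
  obtain ⟨b, hb, hmin⟩ := hK.exists_isMinOn ⟨a, ha, rfl⟩
    (f := fun b => ∑ i, c i * b i) (by fun_prop)
  exact ⟨b, ⟨hb.1, fun b' h1 h2 => hmin ⟨h1, h2.trans hb.2⟩⟩, hb.2⟩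

lemma core {ι E L : Type*} [Fintype ι] [NormedAddCommGroup E] [NormedSpace ℝ E]
    [FiniteDimensional ℝ E] [AddCommGroup L] (m : ℕ) (hE : Module.finrank ℝ E = m + 1)
    (j : L →+ E) (u : ι → L) (ht : E →ₗ[ℝ] ℝ) (hgt : L →+ ℤ) (hj : ∀ x, ht (j x) = hgt x)
    (hu : ∀ i, hgt (u i) = 1) (ξ : E) (h0 : 0 < ht ξ) (h1 : ht ξ < 1)
    (hgen : ∀ x : L, ∀ a : ι → ℝ, ∑ i, a i • j (u i) = j x + ξ →
      m + 1 ≤ (Finset.univ.filter (fun i => a i ≠ 0)).card)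
    (hξ : ∃ a : ι → ℝ, (∀ i, 0 ≤ a i) ∧ ∑ i, a i • j (u i) = ξ)
    (M : ℕ → Set L) (hM : ∀ k, M k = {x | hgt x = k ∧
      ∃ a : ι → ℝ, (∀ i, 0 ≤ a i) ∧ ∑ i, a i • j (u i) = j x + ξ})
    (hfin : ∀ k, (M k).Finite) :
    ∃ (B : Finset L) (g : L → ℕ), (∀ β ∈ B, g β ≤ m) ∧ (∃ β ∈ B, g β = 0) ∧
      ∀ k, (M k).ncard = ∑ β ∈ B, if g β ≤ k then (k - g β + m).choose m else 0 := by
  classical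
  set w : ι → E := fun i => j (u i) with hw
  have hw1 : ∀ i, ht (w i) = 1 := fun i => by simp [hw, hj, hu]
  obtain ⟨c, hc⟩ := exists_cost w
  have hex : ∀ x : L, ∃ a : ι → ℝ, (∃ a : ι → ℝ, (∀ i, 0 ≤ a i) ∧ ∑ i, a i • w i = j x + ξ) →
      Opt w c a ∧ ∑ i, a i • w i = j x + ξ := by
    intro x
    by_cases h : ∃ a : ι → ℝ, (∀ i, 0 ≤ a i) ∧ ∑ i, a i • w i = j x + ξ
    · obtain ⟨a, ha, hax⟩ := h
      obtain ⟨b, hb, hb'⟩ := Opt.exists w c ht hw1 a ha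
      exact ⟨b, fun _ => ⟨hb, hb'.trans hax⟩⟩
    · exact ⟨0, fun h' => absurd h' h⟩
  choose rep hrep using hex
  have hrepu : ∀ x a, Opt w c a → ∑ i, a i • w i = j x + ξ → rep x = a := by
    intro x a ha hax
    have := hrep x ⟨a, ha.1, hax⟩
    exact Opt.unique hc this.1 ha (this.2.trans hax.symm)
  let S : L → Finset ι := fun x => Finset.univ.filter (fun i => rep x i ≠ 0)
  -- heights
  have hsum : ∀ (x : L) (a : ι → ℝ), ∑ i, a i • w i = j x + ξ → ∑ i, a i = hgt x + ht ξ := by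
    intro x a h
    have := congrArg ht h
    simpa [hw1, hj] using this
  have hcard : ∀ (x : L) (a : ι → ℝ), Opt w c a → ∑ i, a i • w i = j x + ξ →
      (Finset.univ.filter (fun i => a i ≠ 0)).card = m + 1 := by
    intro x a ha hax
    refine le_antisymm ?_ (hgen x a hax)
    have hli : LinearIndependent ℝ
        (fun i : (Finset.univ.filter (fun i => a i ≠ 0)) => w i) := by
      rw [Fintype.linearIndependent_iff]
      intro g hg i
      have := hc a ha (fun i => if h : i ∈ Finset.univ.filter (fun i => a i ≠ 0)
        then g ⟨i, h⟩ else 0) (fun i hi => by simp [hi]) (by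
          rw [← hg, ← Finset.sum_subset (Finset.subset_univ (Finset.univ.filter (fun i => a i ≠ 0)))]
          · rw [← Finset.sum_coe_sort (Finset.univ.filter (fun i => a i ≠ 0))]
            refine Finset.sum_congr rfl fun i _ => ?_
            rw [dif_pos i.2]
          · intro i _ hi
            rw [dif_neg hi, zero_smul])
      have := congrFun this i
      simp only [dif_pos i.2] at this
      exact this
    have := hli.fintype_card_le_finrank
    rwa [Fintype.card_coe, hE] at this
  -- the set of box points
  let Bs : Set L := {x | (∃ a : ι → ℝ, (∀ i, 0 ≤ a i) ∧ ∑ i, a i • w i = j x + ξ) ∧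
    ∀ i, rep x i < 1}
  have hBh : ∀ x ∈ Bs, 0 ≤ hgt x ∧ hgt x ≤ m := by
    rintro x ⟨hx, hx1⟩
    obtain ⟨hr, hrx⟩ := hrep x hx
    have hs := hsum x _ hrx
    constructor
    · have : (0:ℝ) ≤ ∑ i, rep x i := Finset.sum_nonneg fun i _ => hr.1 i
      have : (-1:ℝ) < hgt x := by linarith
      have : (-1 : ℤ) < hgt x := by exact_mod_cast this
      omega
    · have hS : S x = Finset.univ.filter (fun i => rep x i ≠ 0) := rfl
      have hcS : (S x).card = m + 1 := hcard x _ hr hrx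
      have e : ∑ i, rep x i = ∑ i ∈ S x, rep x i := by
        rw [hS, Finset.sum_filter_ne_zero]
      have : ∑ i ∈ S x, rep x i < ∑ i ∈ S x, (1:ℝ) :=
        Finset.sum_lt_sum_of_nonempty (Finset.card_pos.1 (by omega)) fun i _ => hx1 i
      rw [Finset.sum_const, hcS, ← e, hs] at this
      simp at this
      have : (hgt x : ℝ) < m + 1 := by linarith
      have : hgt x < m + 1 := by exact_mod_cast this
      omega
  have hBfin : Bs.Finite := by
    apply Set.Finite.subset ((Finset.range (m+1)).finite_toSet.biUnion (fun k _ => hfin k))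
    intro x hx
    have := hBh x hx
    simp only [Set.mem_iUnion]
    refine ⟨(hgt x).toNat, by simp; omega, ?_⟩
    rw [hM]
    exact ⟨by omega, hx.1⟩
  let g : L → ℕ := fun x => (hgt x).toNat
  refine ⟨hBfin.toFinset, g, ?_, ?_, ?_⟩
  · intro β hβ
    have := hBh β (by simpa using hβ)
    simp only [g]; omega
  · refine ⟨0, ?_, by simp [g]⟩
    rw [Set.Finite.mem_toFinset]
    have h : ∃ a : ι → ℝ, (∀ i, 0 ≤ a i) ∧ ∑ i, a i • w i = j 0 + ξ := by simpa using hξ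
    refine ⟨h, fun i => ?_⟩
    obtain ⟨hr, hrx⟩ := hrep 0 h
    have := hsum 0 _ hrx
    have := Finset.single_le_sum (f := rep 0) (fun i _ => hr.1 i) (Finset.mem_univ i)
    simp at *
    linarith
  · intro k
    have hstep : ∀ β ∈ hBfin.toFinset, (if g β ≤ k then (k - g β + m).choose m else 0)
        = (if g β ≤ k then (S β).finsuppAntidiag (k - g β) else ∅).card := by
      intro β hβ
      rw [Set.Finite.mem_toFinset] at hβ
      obtain ⟨hr, hrx⟩ := hrep β hβ.1
      split_ifs with h
      · rw [Finset.card_finsuppAntidiag_nat_eq_choose, hcard β _ hr hrx]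
        rw [show m + 1 + (k - g β) - 1 = k - g β + m by omega]
        exact Nat.choose_symm_add.symm
      · simp
    rw [Finset.sum_congr rfl hstep, ← Finset.card_sigma, Set.ncard_eq_toFinset_card _ (hfin k)]
    have hnw : ∀ n : ι → ℕ, j (∑ i, n i • u i) = ∑ i, (n i : ℝ) • w i := by
      intro n; simp [hw, Nat.cast_smul_eq_nsmul]
    have hnh : ∀ n : ι → ℕ, hgt (∑ i, n i • u i) = ∑ i, (n i : ℤ) := by
      intro n; simp [hu]
    -- the decomposition
    let nn : L → ι →₀ ℕ := fun x => Finsupp.equivFunOnFinite.symm (fun i => ⌊rep x i⌋₊)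
    let bb : L → L := fun x => x - ∑ i, nn x i • u i
    have hbb : ∀ x, (∃ a : ι → ℝ, (∀ i, 0 ≤ a i) ∧ ∑ i, a i • w i = j x + ξ) →
        bb x ∈ Bs ∧ rep (bb x) = (fun i => rep x i - ⌊rep x i⌋₊) ∧ S (bb x) = S x := by
      intro x hx
      obtain ⟨hr, hrx⟩ := hrep x hx
      have ho : Opt w c (fun i => rep x i - ⌊rep x i⌋₊) := by
        refine hr.mono (fun i => ?_) (fun i hi => by simp [hi])
        exact sub_nonneg.2 (Nat.floor_le (hr.1 i))
      have hv : ∑ i, (rep x i - ⌊rep x i⌋₊) • w i = j (bb x) + ξ := by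
        simp only [bb, map_sub, hnw, sub_smul, Finset.sum_sub_distrib, hrx, nn]
        simp only [Finsupp.equivFunOnFinite_symm_apply_apply]
        abel
      have hre := hrepu (bb x) _ ho hv
      refine ⟨⟨⟨_, ho.1, hv⟩, fun i => ?_⟩, hre, ?_⟩
      · rw [hre]
        have := Nat.lt_floor_add_one (rep x i)
        simp only
        linarith
      · apply Finset.eq_of_subset_of_card_le
        · intro i hi
          simp only [S, hre, Finset.mem_filter, Finset.mem_univ, true_and] at hi ⊢
          intro h
          simp [h] at hi
        · have e1 : (S x).card = m + 1 := hcard x _ hr hrx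
          have e2 : (S (bb x)).card = m + 1 := by
            have := hcard _ _ ho hv
            simpa only [S, hre] using this
          omega
    apply Finset.card_nbij' (fun x => (⟨bb x, nn x⟩ : (_ : L) × (ι →₀ ℕ)))
      (fun p => p.1 + ∑ i, p.2 i • u i)
    · intro x hx
      simp only [Set.Finite.coe_toFinset, hM] at hx
      obtain ⟨hxk, hx⟩ := hx
      obtain ⟨hb, hre, hS⟩ := hbb x hx
      have hh := hBh _ hb
      have hg : hgt (bb x) = k - ∑ i, (nn x i : ℤ) := by
        simp only [bb, map_sub, hnh, hxk]
      have hgk : g (bb x) + ∑ i, nn x i = k := by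
        zify
        simp only [g, Int.toNat_of_nonneg hh.1]
        omega
      simp only [Finset.coe_sigma, Set.mem_sigma_iff, Finset.mem_coe, Set.Finite.mem_toFinset]
      refine ⟨hb, ?_⟩
      rw [if_pos (by omega), Finset.mem_finsuppAntidiag, hS]
      have hsub : (nn x).support ⊆ S x := by
        intro i hi
        simp only [nn, Finsupp.mem_support_iff, S, Finset.mem_filter, Finset.mem_univ, true_and] at hi ⊢
        intro h
        simp [h] at hi
      refine ⟨?_, hsub⟩
      rw [Finset.sum_subset (Finset.subset_univ (S x))]
      · omega
      · intro i _ hi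
        by_contra h
        exact hi (hsub (by simpa using h))
    · rintro ⟨β, n⟩ hp
      simp only [Finset.coe_sigma, Set.mem_sigma_iff, Finset.mem_coe, Set.Finite.mem_toFinset] at hp
      obtain ⟨hβ, hn⟩ := hp
      split_ifs at hn with hk
      swap
      · simp at hn
      rw [Finset.mem_finsuppAntidiag] at hn
      have hh := hBh _ hβ
      obtain ⟨hr, hrx⟩ := hrep β hβ.1
      have hns : ∑ i, n i = k - g β := by
        rw [← hn.1]
        symm
        apply Finset.sum_subset (Finset.subset_univ _)
        intro i _ hi
        by_contra h
        exact hi (hn.2 (by simpa using h))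
      simp only [Set.Finite.coe_toFinset, hM]
      refine ⟨?_, fun i => rep β i + n i, fun i => add_nonneg (hr.1 i) (by positivity), ?_⟩
      · rw [map_add, hnh]
        zify [hk] at hns
        rw [hns]
        simp only [g, Int.toNat_of_nonneg hh.1]
        omega
      · change ∑ i, (rep β i + n i) • w i = _
        simp only [add_smul, Finset.sum_add_distrib, hrx, map_add, hnw]
        abel
    · intro x _
      simp [bb]
    · rintro ⟨β, n⟩ hp
      simp only [Finset.coe_sigma, Set.mem_sigma_iff, Finset.mem_coe, Set.Finite.mem_toFinset] at hp
      obtain ⟨hβ, hn⟩ := hp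
      split_ifs at hn with hk
      swap
      · simp at hn
      rw [Finset.mem_finsuppAntidiag] at hn
      obtain ⟨hr, hrx⟩ := hrep β hβ.1
      have hre : rep (β + ∑ i, n i • u i) = fun i => rep β i + n i := by
        apply hrepu
        · refine hr.mono (fun i => add_nonneg (hr.1 i) (by positivity)) (fun i hi => ?_)
          have : n i = 0 := by
            by_contra h
            have := hn.2 (Finsupp.mem_support_iff.2 h)
            simp [S, hi] at this
          simp [hi, this]
        · simp only [add_smul, Finset.sum_add_distrib, hrx, map_add, hnw]
          abel
      have hnn : nn (β + ∑ i, n i • u i) = n := by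
        ext i
        simp only [nn, hre, Finsupp.equivFunOnFinite_symm_apply_apply]
        rw [Nat.floor_add_natCast (hr.1 i), Nat.floor_eq_zero.2 (hβ.2 i), zero_add]
      have hbe : bb (β + ∑ i, n i • u i) = β := by
        simp only [bb, hnn, add_sub_cancel_right]
      simp only [hnn, hbe]

lemma choose_ge (r : ℕ) : ∀ N : ℕ, r ≤ N → (N : ℝ) ^ r ≤ N.choose r * (r : ℝ) ^ r := by
  induction r with
  | zero => intro N _; simp
  | succ r ih =>
    intro N hN
    obtain ⟨N, rfl⟩ : ∃ k, N = k + 1 := ⟨N - 1, by omega⟩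
    have hN : r ≤ N := by omega
    have h := ih N hN
    have hc : ((N + 1).choose (r + 1) : ℝ) * (r + 1) = (N + 1) * N.choose r := by
      exact_mod_cast (Nat.add_one_mul_choose_eq N r).symm
    have hrr : (0:ℝ) < (r:ℝ) ^ r := by
      rcases Nat.eq_zero_or_pos r with h | h
      · simp [h]
      · positivity
    have key : ((N:ℝ) + 1) ^ r ≤ N.choose r * ((r:ℝ) + 1) ^ r := by
      have h2 : (((N:ℝ) + 1) * r) ^ r ≤ (N * ((r:ℝ) + 1)) ^ r := by
        apply pow_le_pow_left₀ (by positivity)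
        have : (r:ℝ) ≤ N := by exact_mod_cast hN
        nlinarith
      rw [mul_pow, mul_pow] at h2
      have h3 : (N:ℝ) ^ r * ((r:ℝ) + 1) ^ r ≤ (N.choose r * (r : ℝ) ^ r) * ((r:ℝ) + 1) ^ r := by
        gcongr
      apply le_of_mul_le_mul_right _ hrr
      linarith
    push_cast
    calc ((N:ℝ) + 1) ^ (r + 1) = (N + 1) * ((N:ℝ) + 1) ^ r := by ring
      _ ≤ (N + 1) * (N.choose r * ((r:ℝ) + 1) ^ r) := by gcongr
      _ = _ := by rw [pow_succ ((r:ℝ) + 1)]; linear_combination (-((r:ℝ) + 1) ^ r) * hc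

lemma num (m l : ℕ) (h : m ≤ l) :
    ((l : ℝ) / Real.exp 1) ^ (m + 1) < (l + 1).choose (m + 1) * (m + 1).factorial := by
  have h1 := choose_ge (m + 1) (l + 1) (by omega)
  have h2 := Real.pow_div_factorial_le_exp (x := ((m + 1 : ℕ) : ℝ)) (by positivity) (m + 1)
  rw [div_le_iff₀ (by positivity)] at h2
  have h3 : Real.exp ((m + 1 : ℕ) : ℝ) = Real.exp 1 ^ (m + 1) := by
    rw [← Real.exp_nat_mul]; simp
  rw [h3] at h2
  rw [div_pow, div_lt_iff₀ (by positivity)]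
  calc (l : ℝ) ^ (m + 1) < ((l + 1 : ℕ) : ℝ) ^ (m + 1) := by
        apply pow_lt_pow_left₀ _ (by positivity) (by omega)
        push_cast; linarith
    _ ≤ _ := h1
    _ ≤ (l + 1).choose (m + 1) * (Real.exp 1 ^ (m + 1) * (m + 1).factorial) := by gcongr
    _ = _ := by ring

lemma hockey (m g d : ℕ) : ∑ k ∈ Finset.range (g + d + 1),
    (if g ≤ k then (k - g + m).choose m else 0) = (d + m + 1).choose (m + 1) := by
  induction d with
  | zero =>
    rw [Finset.sum_eq_single g]
    · simp
    · intro k hk hne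
      rw [if_neg]
      simp at hk; omega
    · simp
  | succ d ih =>
    rw [← add_assoc, Finset.sum_range_succ, ih, if_pos (by omega),
      show g + d + 1 - g + m = d + m + 1 by omega, show d + 1 + m + 1 = (d + m + 1) + 1 by omega,
      Nat.choose_succ_succ' (d + m + 1) m]
    omega

lemma count_lower {L : Type*} (m l : ℕ) (hm : 1 ≤ m) (h : m ≤ l) (B : Finset L) (g : L → ℕ)
    (hg : ∀ β ∈ B, g β ≤ m) (h0 : ∃ β ∈ B, g β = 0) (f : ℕ → ℕ)
    (hf : ∀ k, f k = ∑ β ∈ B, if g β ≤ k then (k - g β + m).choose m else 0) (hf0 : f 0 ≤ 1) :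
    B.card * (l + 1).choose (m + 1) ≤ ∑ k ∈ Finset.Icc 1 l, f k := by
  have e : ∑ k ∈ Finset.range (l + 1), f k = ∑ β ∈ B, (l - g β + m + 1).choose (m + 1) := by
    simp only [hf]
    rw [Finset.sum_comm]
    refine Finset.sum_congr rfl fun β hβ => ?_
    have := hg β hβ
    rw [← hockey m (g β) (l - g β), show g β + (l - g β) = l by omega]
  have e2 : ∑ k ∈ Finset.range (l + 1), f k = f 0 + ∑ k ∈ Finset.Icc 1 l, f k := by
    rw [Finset.sum_range_succ', add_comm, Finset.sum_bij (fun k _ => k + 1)]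
    · intro k hk; simp at *; omega
    · intro a _ b _ h; omega
    · intro b hb; simp at hb; exact ⟨b - 1, by simp; omega, by omega⟩
    · intros; rfl
  have e3 : ∑ β ∈ B, (l + 1).choose (m + 1) < ∑ β ∈ B, (l - g β + m + 1).choose (m + 1) := by
    apply Finset.sum_lt_sum
    · intro β hβ
      have := hg β hβ
      exact Nat.choose_le_choose _ (by omega)
    · obtain ⟨β, hβ, hb⟩ := h0
      refine ⟨β, hβ, ?_⟩
      rw [hb]
      calc (l + 1).choose (m + 1) < (l + 1 + 1).choose (m + 1) := by
            rw [Nat.choose_succ_succ' (l + 1) m]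
            have := Nat.choose_pos (n := l + 1) (k := m) (by omega)
            omega
        _ ≤ _ := Nat.choose_le_choose _ (by omega)
  rw [Finset.sum_const, smul_eq_mul] at e3
  omega

lemma count_upper {L : Type*} (m k : ℕ) (B : Finset L) (g : L → ℕ) :
    (∑ β ∈ B, if g β ≤ k then (k - g β + m).choose m else 0) ≤ B.card * (k + m).choose m := by
  rw [← smul_eq_mul, ← Finset.sum_const]
  refine Finset.sum_le_sum fun β _ => ?_
  split_ifs
  · exact Nat.choose_le_choose _ (by omega)
  · simp

lemma latticePts_finite {m : ℕ} {P : Set (Fin m → ℝ)} (hP : Bornology.IsBounded P) :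
    (latticePts P).Finite := by
  obtain ⟨R, hR⟩ := hP.exists_norm_le
  apply (Set.finite_Icc (fun _ : Fin m => -⌈R⌉) (fun _ => ⌈R⌉)).subset
  intro x hx
  have := hR _ hx
  have h : ∀ i, |(x i : ℝ)| ≤ ⌈R⌉ := fun i =>
    ((norm_le_pi_norm (fun j => (x j : ℝ)) i).trans this).trans (Int.le_ceil R)
  exact ⟨fun i => by have := (abs_le.1 (h i)).1; exact_mod_cast this,
    fun i => by have := (abs_le.1 (h i)).2; exact_mod_cast this⟩

lemma vol_le {m : ℕ} {P : Set (Fin m → ℝ)} (hc : Convex ℝ P) (hK : IsCompact P) (H : ℕ)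
    (h : ∀ k : ℕ, 1 ≤ k → (latticePts ((k : ℝ) • P)).ncard ≤ H * (k + m).choose m) :
    (MeasureTheory.volume P).toReal * m.factorial ≤ H := by
  have hlim := tendsto_card_div_pow_atTop_volume P hK.isBounded hK.measurableSet
    (hc.addHaar_frontier MeasureTheory.volume)
  have hlim2 : Filter.Tendsto (fun k : ℕ => (H : ℝ) / m.factorial * (1 + m / (k:ℝ)) ^ m)
      Filter.atTop (nhds ((H : ℝ) / m.factorial * (1 + 0) ^ m)) := by
    apply Filter.Tendsto.const_mul
    apply Filter.Tendsto.pow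
    apply Filter.Tendsto.const_add
    exact tendsto_const_div_atTop_nhds_zero_nat _
  have : MeasureTheory.volume.real P ≤ (H : ℝ) / m.factorial * (1 + 0) ^ m := by
    refine le_of_tendsto_of_tendsto hlim hlim2 ?_
    filter_upwards [Filter.eventually_ge_atTop 1] with k hk
    have hk0 : (0:ℝ) < k := by exact_mod_cast hk
    have hfin : (latticePts ((k : ℝ) • P)).Finite := latticePts_finite (hK.isBounded.smul₀ _)
    have h1 : Nat.card ↑(P ∩ (k : ℝ)⁻¹ • (Submodule.span ℤ (Set.range (Pi.basisFun ℝ (Fin m))) : Set (Fin m → ℝ))) ≤ (latticePts ((k : ℝ) • P)).ncard := by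
      rw [Nat.card_coe_set_eq]
      refine le_trans (Set.ncard_le_ncard ?_ (hfin.image
        (fun z => (k:ℝ)⁻¹ • (fun i => (z i : ℝ))))) (Set.ncard_image_le hfin)
      rintro y ⟨hy, l, hl, rfl⟩
      simp only [SetLike.mem_coe, Module.Basis.mem_span_iff_repr_mem] at hl
      choose z hz using hl
      have hzl : (fun i => (z i : ℝ)) = l := by
        ext i; simpa using hz i
      refine ⟨z, ?_, by simp [hzl]⟩
      simp only [latticePts, Set.mem_ofPred_eq, hzl]
      refine ⟨_, hy, ?_⟩
      simp [smul_smul, hk0.ne']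
    have h2 := h k hk
    have h3 : ((k + m).choose m : ℝ) ≤ ((k:ℝ) + m) ^ m / m.factorial := by
      have := Nat.choose_le_pow_div (α := ℝ) m (k + m)
      push_cast at this
      exact this
    rw [Fintype.card_fin, div_le_iff₀ (by positivity)]
    calc (_ : ℝ) ≤ ((latticePts ((k : ℝ) • P)).ncard : ℝ) := by exact_mod_cast h1
      _ ≤ (H * (k + m).choose m : ℕ) := by exact_mod_cast h2
      _ ≤ H * (((k:ℝ) + m) ^ m / m.factorial) := by push_cast; gcongr
      _ = _ := by
        rw [mul_assoc, ← mul_pow, show (1 + m / (k:ℝ)) * k = k + m by field_simp]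
        ring
  rw [add_zero, one_pow, mul_one, le_div_iff₀ (by positivity)] at this
  exact this

/-- embedding of the lattice -/
def emb (m : ℕ) : (ℤ × (Fin m → ℤ)) →+ (ℝ × (Fin m → ℝ)) where
  toFun x := (x.1, fun i => (x.2 i : ℝ))
  map_zero' := by ext <;> simp
  map_add' x y := by ext <;> simp

lemma emb_finite (m : ℕ) {K : Set (ℝ × (Fin m → ℝ))} (hK : Bornology.IsBounded K) :
    {x | emb m x ∈ K}.Finite := by
  obtain ⟨R, hR⟩ := hK.exists_norm_le
  apply ((Set.finite_Icc (-⌈R⌉) ⌈R⌉).prod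
    (Set.finite_Icc (fun _ : Fin m => -⌈R⌉) (fun _ => ⌈R⌉))).subset
  intro x hx
  have := (hR _ hx).trans (Int.le_ceil R)
  rw [Prod.norm_def, max_le_iff] at this
  have h1 : |(x.1 : ℝ)| ≤ ⌈R⌉ := this.1
  have h : ∀ i, |(x.2 i : ℝ)| ≤ ⌈R⌉ := fun i =>
    ((norm_le_pi_norm (fun j => (x.2 j : ℝ)) i).trans this.2)
  exact ⟨⟨by have := (abs_le.1 h1).1; exact_mod_cast this,
    by have := (abs_le.1 h1).2; exact_mod_cast this⟩,
    ⟨fun i => by have := (abs_le.1 (h i)).1; exact_mod_cast this,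
    fun i => by have := (abs_le.1 (h i)).2; exact_mod_cast this⟩⟩

lemma emb_near (m : ℕ) {Q : Set (ℝ × (Fin m → ℝ))} (hQ : IsCompact Q) :
    ∀ᶠ ξ in nhds (0 : ℝ × (Fin m → ℝ)), ∀ x, emb m x + ξ ∈ Q → emb m x ∈ Q := by
  have hfin := emb_finite m (hQ.isBounded.cthickening (δ := 1))
  have h1 : ∀ᶠ ξ in nhds (0 : ℝ × (Fin m → ℝ)), ∀ x ∈ {x | emb m x ∈ Metric.cthickening 1 Q},
      emb m x + ξ ∈ Q → emb m x ∈ Q := by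
    rw [Filter.eventually_all_finite hfin]
    intro x _
    by_cases h : emb m x ∈ Q
    · exact Filter.Eventually.of_forall fun _ _ => h
    · have : Filter.Tendsto (fun ξ => emb m x + ξ) (nhds 0) (nhds (emb m x)) := by
        have : Continuous (fun ξ => emb m x + ξ) := by fun_prop
        simpa using this.tendsto 0
      filter_upwards [this.eventually (hQ.isClosed.isOpen_compl.mem_nhds h)] with ξ h1 h2
      exact absurd h2 h1
  filter_upwards [h1, Metric.closedBall_mem_nhds (0 : ℝ × (Fin m → ℝ)) one_pos] with ξ h2 h3 x hx
  refine h2 x ?_ hx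
  apply Metric.mem_cthickening_of_dist_le _ _ _ _ hx
  simpa using h3

section geom
variable {m : ℕ} (V : Finset (Fin m → ℤ))

/-- the generators of the cone -/
def gen (v : V) : ℤ × (Fin m → ℤ) := (1, v.1)

/-- the cone -/
def cone : Set (ℝ × (Fin m → ℝ)) :=
  {y | ∃ a : V → ℝ, (∀ i, 0 ≤ a i) ∧ ∑ i, a i • emb m (gen V i) = y}

lemma sum_gen (a : V → ℝ) : ∑ i, a i • emb m (gen V i) =
    (∑ i, a i, ∑ i, a i • (fun j => (i.1 j : ℝ))) := by
  ext <;> simp [emb, gen, Prod.fst_sum, Prod.snd_sum]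

/-- the polytope -/
def poly : Set (Fin m → ℝ) :=
  convexHull ℝ ((fun (v : Fin m → ℤ) (j : Fin m) => (v j : ℝ)) '' ↑V)

lemma mem_poly_iff (z : Fin m → ℝ) : z ∈ poly V ↔ ((1 : ℝ), z) ∈ cone V := by
  constructor
  · have hconv : Convex ℝ {z : Fin m → ℝ | ((1 : ℝ), z) ∈ cone V} := by
      rintro x ⟨a, ha, hax⟩ y ⟨b, hb, hby⟩ s t hs ht hst
      refine ⟨fun i => s * a i + t * b i, fun i => ?_, ?_⟩
      · have := ha i; have := hb i; positivity
      · simp only [add_smul, mul_smul, Finset.sum_add_distrib, ← Finset.smul_sum, hax, hby]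
        ext <;> simp [hst]
    intro hz
    refine convexHull_min ?_ hconv hz
    rintro _ ⟨v, hv, rfl⟩
    refine ⟨Pi.single ⟨v, hv⟩ 1, fun i => ?_, ?_⟩
    · by_cases h : i = ⟨v, hv⟩
      · subst h; simp
      · simp [h]
    · rw [Finset.sum_eq_single ⟨v, hv⟩]
      · ext <;> simp [emb, gen]
      · intro i _ h; simp [h]
      · simp
  · rintro ⟨a, ha, hax⟩
    rw [sum_gen, Prod.mk.injEq] at hax
    rw [← hax.2]
    apply (convex_convexHull ℝ _).sum_mem (fun i _ => ha i) hax.1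
    intro i _
    exact subset_convexHull ℝ _ ⟨i.1, i.2, rfl⟩

lemma cone_smul {y} (hy : y ∈ cone V) {t : ℝ} (ht : 0 ≤ t) : t • y ∈ cone V := by
  obtain ⟨a, ha, rfl⟩ := hy
  refine ⟨fun i => t * a i, fun i => mul_nonneg ht (ha i), ?_⟩
  simp only [mul_smul, ← Finset.smul_sum]

lemma cone_add {x y} (hx : x ∈ cone V) (hy : y ∈ cone V) : x + y ∈ cone V := by
  obtain ⟨a, ha, rfl⟩ := hx
  obtain ⟨b, hb, rfl⟩ := hy
  refine ⟨fun i => a i + b i, fun i => add_nonneg (ha i) (hb i), ?_⟩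
  simp only [add_smul, Finset.sum_add_distrib]

lemma mem_smul_poly_iff {h : ℝ} (h0 : 0 < h) (z : Fin m → ℝ) :
    z ∈ h • poly V ↔ (h, z) ∈ cone V := by
  rw [Set.mem_smul_set_iff_inv_smul_mem₀ h0.ne', mem_poly_iff]
  constructor
  · intro H
    have := cone_smul V H h0.le
    simpa [smul_smul, h0.ne'] using this
  · intro H
    have := cone_smul V H (inv_nonneg.2 h0.le)
    simpa [h0.ne'] using this

lemma cone_zero {z : Fin m → ℝ} (hz : ((0:ℝ), z) ∈ cone V) : z = 0 := by
  obtain ⟨a, ha, hax⟩ := hz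
  rw [sum_gen, Prod.mk.injEq, Finset.sum_eq_zero_iff_of_nonneg (fun i _ => ha i)] at hax
  rw [← hax.2]
  exact Finset.sum_eq_zero fun i hi => by rw [hax.1 i hi, zero_smul]

/-- truncated cone -/
def tcone (R : ℝ) : Set (ℝ × (Fin m → ℝ)) :=
  (fun a : V → ℝ => ∑ i, a i • emb m (gen V i)) '' Set.Icc 0 (fun _ => R)

lemma tcone_compact (R : ℝ) : IsCompact (tcone V R) :=
  isCompact_Icc.image (by fun_prop)

lemma tcone_subset (R : ℝ) : tcone V R ⊆ cone V := by
  rintro _ ⟨a, ha, rfl⟩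
  exact ⟨a, ha.1, rfl⟩

lemma mem_tcone {R : ℝ} {y} (hy : y ∈ cone V) (hR : y.1 ≤ R) : y ∈ tcone V R := by
  obtain ⟨a, ha, rfl⟩ := hy
  refine ⟨a, ⟨ha, fun i => ?_⟩, rfl⟩
  rw [sum_gen] at hR
  exact (Finset.single_le_sum (f := a) (fun i _ => ha i) (Finset.mem_univ i)).trans hR

lemma exists_xi (hP : (interior (poly V)).Nonempty) (N : Set (ℝ × (Fin m → ℝ)))
    (hN : N ∈ nhds 0) : ∃ ξ ∈ N, 0 < ξ.1 ∧ ξ.1 < 1 ∧ ξ ∈ cone V ∧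
      ∀ x, ∀ a : V → ℝ, ∑ i, a i • emb m (gen V i) = emb m x + ξ →
      m + 1 ≤ (Finset.univ.filter (fun i => a i ≠ 0)).card := by
  classical
  obtain ⟨p, hp⟩ := hP
  let O : Set (ℝ × (Fin m → ℝ)) := {y | 0 < y.1 ∧ (y.1 < 1 ∧ y ∈ interior N) ∧
    y.1⁻¹ • y.2 ∈ interior (poly V)}
  have hO : IsOpen O := by
    rw [isOpen_iff_mem_nhds]
    rintro y ⟨h1, ⟨h2, h3⟩, h4⟩
    have c1 : ContinuousAt (fun y : ℝ × (Fin m → ℝ) => y.1⁻¹ • y.2) y := by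
      apply ContinuousAt.fun_smul
      · exact ContinuousAt.inv₀ (by fun_prop) h1.ne'
      · fun_prop
    have c0 : ContinuousAt (fun y : ℝ × (Fin m → ℝ) => y.1) y := by fun_prop
    filter_upwards [c1.eventually (isOpen_interior.mem_nhds h4), c0.eventually (lt_mem_nhds h1),
      c0.eventually (gt_mem_nhds h2), isOpen_interior.mem_nhds h3] with z a b c d
    exact ⟨b, ⟨c, d⟩, a⟩
  have hne : O.Nonempty := by
    have ct : Filter.Tendsto (fun t : ℝ => (t, t • p)) (nhds 0) (nhds 0) := by
      have : Continuous (fun t : ℝ => (t, t • p)) := by fun_prop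
      have := this.tendsto 0
      simp only [zero_smul] at this
      exact this
    have e1 := (ct.eventually (interior_mem_nhds.2 hN)).filter_mono
      (nhdsWithin_le_nhds (s := Set.Ioi (0:ℝ)))
    have e2 := (gt_mem_nhds (zero_lt_one (α := ℝ))).filter_mono
      (nhdsWithin_le_nhds (s := Set.Ioi (0:ℝ)))
    have e3 : ∀ᶠ t : ℝ in nhdsWithin 0 (Set.Ioi 0), 0 < t := self_mem_nhdsWithin
    obtain ⟨t, h1, h2, h3⟩ := (e1.and (e2.and e3)).exists
    refine ⟨(t, t • p), h3, ⟨h2, h1⟩, ?_⟩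
    simpa [smul_smul, h3.ne'] using hp
  haveI : (MeasureTheory.volume : MeasureTheory.Measure (ℝ × (Fin m → ℝ))).IsAddHaarMeasure := by
    rw [MeasureTheory.Measure.volume_eq_prod]; infer_instance
  have hpos := hO.measure_pos MeasureTheory.volume hne
  let Bad : Set (ℝ × (Fin m → ℝ)) := ⋃ x : ℤ × (Fin m → ℤ), ⋃ T : {T : Finset V // T.card ≤ m},
    (fun ξ => emb m x + ξ) ⁻¹'
      (Submodule.span ℝ ((T.1.image (fun i => emb m (gen V i)) : Finset _) :
        Set (ℝ × (Fin m → ℝ))) : Set (ℝ × (Fin m → ℝ)))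
  have hBad : MeasureTheory.volume Bad = 0 := by
    rw [MeasureTheory.measure_iUnion_null_iff]
    intro x
    rw [MeasureTheory.measure_iUnion_null_iff]
    rintro ⟨T, hT⟩
    rw [MeasureTheory.measure_preimage_add]
    apply MeasureTheory.Measure.addHaar_submodule
    intro htop
    have h1 := finrank_span_finset_le_card (R := ℝ) (T.image (fun i => emb m (gen V i)))
    have h2 : (T.image (fun i => emb m (gen V i))).card ≤ T.card := Finset.card_image_le
    rw [Set.finrank, htop, finrank_top] at h1
    simp at h1
    omega
  obtain ⟨ξ, hξO, hξB⟩ : ∃ ξ ∈ O, ξ ∉ Bad := by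
    by_contra! hcon
    have := MeasureTheory.measure_mono_null (show O ⊆ Bad from hcon) hBad
    exact hpos.ne' this
  refine ⟨ξ, interior_subset hξO.2.1.2, hξO.1, hξO.2.1.1, ?_, ?_⟩
  · have := (mem_poly_iff V _).1 (interior_subset hξO.2.2)
    have := cone_smul V this hξO.1.le
    simpa [smul_smul, hξO.1.ne'] using this
  · intro x a hax
    by_contra! hlt
    apply hξB
    simp only [Bad, Set.mem_iUnion]
    refine ⟨x, ⟨Finset.univ.filter (fun i => a i ≠ 0), by omega⟩, ?_⟩
    simp only [Set.mem_preimage, SetLike.mem_coe, ← hax]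
    apply Submodule.sum_mem
    intro i _
    by_cases h : a i = 0
    · simp [h]
    · apply Submodule.smul_mem
      apply Submodule.subset_span
      simp only [Finset.coe_image]
      exact ⟨i, by simp [h], rfl⟩

lemma main_count (hm : 1 ≤ m) (hP : (interior (poly V)).Nonempty) (l : ℕ) (hl : m ≤ l) :
    ∃ H : ℕ, (MeasureTheory.volume (poly V)).toReal * m.factorial ≤ H ∧
      H * (l + 1).choose (m + 1) ≤
        ∑ k ∈ Finset.Icc 1 l, (latticePts ((k : ℝ) • poly V)).ncard := by
  have hK : IsCompact (poly V) := by
    apply Set.Finite.isCompact_convexHull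
    exact (Finset.finite_toSet V).image _
  obtain ⟨ξ, hξN, h0, h1, hξC, hgen⟩ := exists_xi V hP _ (emb_near m (tcone_compact V (l + 1)))
  have hξN : ∀ x, emb m x + ξ ∈ tcone V (l + 1) → emb m x ∈ tcone V (l + 1) := hξN
  let M : ℕ → Set (ℤ × (Fin m → ℤ)) := fun k => {x | x.1 = k ∧ emb m x + ξ ∈ cone V}
  have hfin : ∀ k, (M k).Finite := by
    intro k
    apply (emb_finite m (((tcone_compact V (k + 1)).isBounded).sub
      (Bornology.isBounded_singleton (x := ξ)))).subset
    rintro x ⟨hx, hxc⟩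
    refine ⟨emb m x + ξ, mem_tcone V hxc ?_, ξ, rfl, by simp⟩
    simp [emb, hx]; linarith
  have hMP : ∀ k : ℕ, k ≤ l → ∀ x ∈ M k, emb m x ∈ cone V := by
    rintro k hk x ⟨hx, hxc⟩
    apply tcone_subset V (l + 1)
    apply hξN
    apply mem_tcone V hxc
    have : (k:ℝ) ≤ l := by exact_mod_cast hk
    simp [emb, hx]; linarith
  obtain ⟨B, g, hg, hg0, hcount⟩ := core (ι := V) m (by simp [add_comm]) (emb m) (gen V)
    (LinearMap.fst ℝ ℝ (Fin m → ℝ)) (AddMonoidHom.fst ℤ (Fin m → ℤ)) (fun x => by simp [emb])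
    (fun i => by simp [gen]) ξ h0 h1 hgen hξC M (fun k => rfl) hfin
  have hPfin : ∀ k : ℕ, (latticePts ((k : ℝ) • poly V)).Finite := fun k =>
    latticePts_finite (hK.isBounded.smul₀ _)
  refine ⟨B.card, ?_, ?_⟩
  · apply vol_le (convex_convexHull ℝ _) hK
    intro k hk
    refine le_trans ?_ (count_upper m k B g)
    rw [← hcount k]
    apply Set.ncard_le_ncard_of_injOn (fun z => ((k : ℤ), z)) _ _ (hfin k)
    · intro z hz
      refine ⟨rfl, cone_add V ?_ hξC⟩
      have := (mem_smul_poly_iff V (by exact_mod_cast hk) _).1 hz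
      simpa [emb] using this
    · intro a _ b _ h
      simpa using h
  · refine le_trans (count_lower m l hm hl B g hg hg0 (fun k => (M k).ncard) hcount ?_) ?_
    · rw [Set.ncard_le_one (hfin 0)]
      have : ∀ x ∈ M 0, x = 0 := by
        intro x hx
        have hc := hMP 0 (by omega) x hx
        have h0 : x.1 = 0 := hx.1
        have e : emb m x = ((0:ℝ), fun i => (x.2 i : ℝ)) := by simp [emb, h0]
        rw [e] at hc
        have := cone_zero V hc
        ext i
        · exact h0
        · have := congrFun this i
          simpa using this
      intro a ha b hb
      rw [this a ha, this b hb]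
    · apply Finset.sum_le_sum
      intro k hk
      rw [Finset.mem_Icc] at hk
      apply Set.ncard_le_ncard_of_injOn (fun x => x.2) _ _ (hPfin k)
      · intro x hx
        have hc := hMP k hk.2 x hx
        have hx1 : x.1 = k := hx.1
        refine (mem_smul_poly_iff V (by exact_mod_cast hk.1) _).2 ?_
        simpa [emb, hx1] using hc
      · intro a ha b hb h
        have h1 : a.1 = k := ha.1
        have h2 : b.1 = k := hb.1
        exact Prod.ext (h1.trans h2.symm) h

end geom

end EhrSum

/-- Let `P ⊆ ℝ^m` (`m ≥ 1`) be an `m`-dimensional lattice polytope and `n` a positive integer.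
For every integer `λ ≥ max{ m, e·((m+1)·n / vol(P))^{1/(m+1)} }` one has
`Σ_{k=1}^{λ} |kP ∩ ℤ^m| > n`. -/
theorem sum_ehrhart_gt_n
    (m : ℕ) (hm : 1 ≤ m) (P : Set (Fin m → ℝ))
    (hP : ∃ V : Finset (Fin m → ℤ),
      P = convexHull ℝ ((fun (v : Fin m → ℤ) (j : Fin m) => (v j : ℝ)) '' ↑V))
    (hPfull : (interior P).Nonempty)
    (n : ℕ) (hn : 1 ≤ n)
    (lam : ℕ) (hlam_m : m ≤ lam)
    (hlam_e : Real.exp 1 *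
        (((m + 1 : ℝ) * n / (MeasureTheory.volume P).toReal) ^ ((1 : ℝ) / (m + 1)))
      ≤ (lam : ℝ)) :
    n < ∑ k ∈ Finset.Icc 1 lam, (latticePts ((k : ℝ) • P)).ncard := by
  obtain ⟨V, rfl⟩ := hP
  obtain ⟨H, hH1, hH2⟩ := EhrSum.main_count V hm hPfull lam hlam_m
  change _ * _ ≤ _ at hH1
  have hK : IsCompact (EhrSum.poly V) := by
    apply Set.Finite.isCompact_convexHull
    exact (Finset.finite_toSet V).image _
  have hvol : 0 < (MeasureTheory.volume (EhrSum.poly V)).toReal := by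
    apply ENNReal.toReal_pos
    · exact (MeasureTheory.Measure.measure_pos_of_nonempty_interior _ hPfull).ne'
    · exact hK.measure_lt_top.ne
  change Real.exp 1 * (((m + 1 : ℝ) * n / (MeasureTheory.volume (EhrSum.poly V)).toReal) ^
    ((1 : ℝ) / (m + 1))) ≤ (lam : ℝ) at hlam_e
  change n < ∑ k ∈ Finset.Icc 1 lam, (latticePts ((k : ℝ) • EhrSum.poly V)).ncard
  set v := (MeasureTheory.volume (EhrSum.poly V)).toReal with hv
  refine lt_of_lt_of_le ?_ hH2
  have hn0 : (0:ℝ) < n := by exact_mod_cast hn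
  have ht : (m + 1 : ℝ) * n / v ≤ (lam / Real.exp 1) ^ (m + 1) := by
    have h1 : ((m + 1 : ℝ) * n / v) ^ ((1 : ℝ) / (m + 1)) ≤ lam / Real.exp 1 := by
      rw [le_div_iff₀ (Real.exp_pos 1)]; linarith
    have h2 := pow_le_pow_left₀ (by positivity) h1 (m + 1)
    rw [← Real.rpow_natCast, ← Real.rpow_mul (by positivity)] at h2
    have e : (1 : ℝ) / (m + 1) * ((m + 1 : ℕ) : ℝ) = 1 := by push_cast; field_simp
    rwa [e, Real.rpow_one] at h2
  rw [div_le_iff₀ hvol] at ht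
  have hnum := EhrSum.num m lam hlam_m
  have hf : ((m + 1).factorial : ℝ) = (m + 1) * m.factorial := by
    rw [Nat.factorial_succ]; push_cast; ring
  have key : (m + 1 : ℝ) * n < (m + 1 : ℝ) * (H * (lam + 1).choose (m + 1)) := by
    calc (m + 1 : ℝ) * n ≤ _ := ht
      _ < (((lam + 1).choose (m + 1) : ℝ) * (m + 1).factorial) * v := by gcongr
      _ = (m + 1) * (lam + 1).choose (m + 1) * (v * m.factorial) := by rw [hf]; ring
      _ ≤ (m + 1) * (lam + 1).choose (m + 1) * H := by gcongr
      _ = _ := by ring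
  have := lt_of_mul_lt_mul_left key (by positivity)
  exact_mod_cast this
end

section
/- Let m ≥ 1, let P ⊆ ℝ^m be an m-dimensional lattice polytope, and let n, r be positive integers. Then for every integer λ ≥ max{ m, e·((m+1)·n·C(m+r, m+1) / vol(P))^{1/(m+1)} }, one has Σ_{k=1}^{λ} |kP ∩ ℤ^m| > n·C(m+r, m+1), where C(m+r, m+1) is the binomial coefficient. -/
open scoped Pointwise

namespace Ehr

def LexPos {N : ℕ} (d : Fin N → ℝ) : Prop := ∃ i, (∀ l < i, d l = 0) ∧ 0 < d i

lemma LexPos.smul {N : ℕ} {d : Fin N → ℝ} {a : ℝ} (ha : 0 < a) (h : LexPos (a • d)) : LexPos d := by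
  obtain ⟨i, h1, h2⟩ := h
  refine ⟨i, fun l hl => ?_, ?_⟩
  · have := h1 l hl
    simpa [ha.ne'] using this
  · simpa [ha] using h2

lemma LexPos.not_neg {N : ℕ} {d : Fin N → ℝ} (h : LexPos d) (h' : LexPos (-d)) : False := by
  obtain ⟨i, h1, h2⟩ := h
  obtain ⟨j, h3, h4⟩ := h'
  simp only [Pi.neg_apply] at h3 h4
  rcases lt_trichotomy i j with hij | hij | hij
  · have := h3 i hij; linarith
  · subst hij; linarith
  · have := h1 j hij; linarith

lemma exists_lexmin {N : ℕ} (K : Set (Fin N → ℝ)) (hK : IsCompact K) (hne : K.Nonempty) :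
    ∃ c ∈ K, ∀ c' ∈ K, c' = c ∨ LexPos (c' - c) := by
  have key : ∀ j : ℕ, j ≤ N → ∃ K' ⊆ K, IsCompact K' ∧ K'.Nonempty ∧
      (∀ c ∈ K', ∀ c' ∈ K', ∀ i : Fin N, i.1 < j → c' i = c i) ∧
      (∀ c ∈ K', ∀ c' ∈ K, c' ∉ K' → LexPos (c' - c)) := by
    intro j
    induction j with
    | zero => 
      intro _
      exact ⟨K, le_rfl, hK, hne, by simp, fun c _ c' h h' => absurd h h'⟩
    | succ j ih =>
      intro hj
      obtain ⟨K', hsub, hc, hn, hag, hlex⟩ := ih (by omega)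
      let p : Fin N := ⟨j, by omega⟩
      obtain ⟨a, ha, hmin⟩ := hc.exists_isMinOn hn (continuous_apply p).continuousOn
      have hmin' : ∀ c ∈ K', a p ≤ c p := fun c hc => hmin hc
      refine ⟨K' ∩ {c | c p = a p}, fun c h => hsub h.1,
        hc.inter_right (isClosed_eq (continuous_apply p) continuous_const), ⟨a, ha, rfl⟩, ?_, ?_⟩
      · rintro c ⟨h1, h2⟩ c' ⟨h3, h4⟩ i hi
        rcases Nat.lt_succ_iff_lt_or_eq.mp hi with h | h
        · exact hag c h1 c' h3 i h
        · have : i = p := Fin.ext h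
          subst this
          simp only [Set.mem_ofPred_eq] at h2 h4
          rw [h2, h4]
      · rintro c ⟨h1, h2⟩ c' h3 h4
        by_cases h5 : c' ∈ K'
        · refine ⟨p, fun l hl => ?_, ?_⟩
          · have := hag c h1 c' h5 l hl
            simp [this]
          · have h6 : c' p ≠ a p := fun h => h4 ⟨h5, h⟩
            have h7 := lt_of_le_of_ne (hmin' c' h5) h6.symm
            simp only [Set.mem_ofPred_eq] at h2
            simp only [Pi.sub_apply, h2]; linarith
        · exact hlex c h1 c' h3 h5
  obtain ⟨K', hsub, hc, ⟨a, ha⟩, hag, hlex⟩ := key N le_rfl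
  refine ⟨a, hsub ha, fun c' hc' => ?_⟩
  by_cases h : c' ∈ K'
  · left; ext i; exact hag a ha c' h i i.2
  · right; exact hlex a ha c' hc' h

def comb {N d : ℕ} (u : Fin N → Fin d → ℝ) : (Fin N → ℝ) →ₗ[ℝ] (Fin d → ℝ) :=
  Fintype.linearCombination ℝ u

lemma comb_apply {N d : ℕ} (u : Fin N → Fin d → ℝ) (c : Fin N → ℝ) :
    comb u c = ∑ i, c i • u i := rfl

def IsMin {N d : ℕ} (u : Fin N → Fin d → ℝ) (c : Fin N → ℝ) : Prop :=
  0 ≤ c ∧ ∀ c' : Fin N → ℝ, 0 ≤ c' → comb u c' = comb u c → c' = c ∨ LexPos (c' - c)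

lemma IsMin.unique {N d : ℕ} {u : Fin N → Fin d → ℝ} {c c' : Fin N → ℝ} (h : IsMin u c)
    (h' : IsMin u c') (e : comb u c = comb u c') : c = c' := by
  rcases h.2 c' h'.1 e.symm with h1 | h1
  · exact h1.symm
  rcases h'.2 c h.1 e with h2 | h2
  · exact h2
  exact (h1.not_neg (by simpa using h2)).elim

/-- positivity for small perturbations -/
lemma exists_eps {N : ℕ} (c e : Fin N → ℝ) (hc : 0 ≤ c) (he : ∀ i, c i = 0 → 0 ≤ e i) :
    ∃ ε : ℝ, 0 < ε ∧ 0 ≤ c + ε • e := by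
  have : ∀ i, ∀ᶠ ε in nhdsWithin (0 : ℝ) (Set.Ioi 0), 0 ≤ c i + ε * e i := by
    intro i
    rcases (hc i).eq_or_lt with h | h
    · filter_upwards [self_mem_nhdsWithin] with ε hε
      have := he i h.symm
      have hε' : (0 : ℝ) < ε := hε
      have hci : c i = 0 := h.symm
      rw [hci]; positivity
    · have hc : Filter.Tendsto (fun ε : ℝ => c i + ε * e i) (nhdsWithin 0 (Set.Ioi 0)) (nhds (c i + 0 * e i)) :=
        ((by fun_prop : Continuous fun ε : ℝ => c i + ε * e i).tendsto 0).mono_left nhdsWithin_le_nhds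
      have h' : (0 : ℝ) < c i + 0 * e i := by simpa using h
      filter_upwards [hc.eventually (lt_mem_nhds h')] with ε hε using hε.le
  have h2 := (Filter.eventually_all.mpr this).and self_mem_nhdsWithin
  obtain ⟨ε, h3, h4⟩ := h2.exists
  exact ⟨ε, h4, fun i => by simpa using h3 i⟩

lemma IsMin.down {N d : ℕ} {u : Fin N → Fin d → ℝ} {c c' : Fin N → ℝ} (h : IsMin u c)
    (h0 : 0 ≤ c') (hs : ∀ i, c i = 0 → c' i = 0) : IsMin u c' := by
  refine ⟨h0, fun c'' h1 h2 => ?_⟩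
  obtain ⟨ε, hε, h3⟩ := exists_eps c (c'' - c') h.1 (fun i hi => by
    have := h1 i
    simpa [hs i hi] using this)
  rcases h.2 _ h3 (by simp [map_add, map_sub, map_smul, h2]) with h4 | h4
  · left
    have : ε • (c'' - c') = 0 := by simpa using h4
    rcases smul_eq_zero.mp this with h5 | h5
    · exact absurd h5 hε.ne'
    · exact sub_eq_zero.mp h5
  · right
    rw [add_sub_cancel_left] at h4
    exact h4.smul hε

lemma IsMin.indep {N d : ℕ} {u : Fin N → Fin d → ℝ} {c e : Fin N → ℝ} (h : IsMin u c)
    (hs : ∀ i, c i = 0 → e i = 0) (he : comb u e = 0) : e = 0 := by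
  by_contra hne
  have key : ∀ e : Fin N → ℝ, (∀ i, c i = 0 → e i = 0) → comb u e = 0 → e ≠ 0 → LexPos e := by
    intro e hs he hne
    obtain ⟨ε, hε, h3⟩ := exists_eps c e h.1 (fun i hi => (hs i hi).ge)
    rcases h.2 _ h3 (by simp [he]) with h4 | h4
    · have : ε • e = 0 := by simpa using h4
      rcases smul_eq_zero.mp this with h5 | h5
      · exact absurd h5 hε.ne'
      · exact absurd h5 hne
    · rw [add_sub_cancel_left] at h4
      exact h4.smul hε
  exact (key e hs he hne).not_neg (key (-e) (fun i hi => by simp [hs i hi]) (by simp [he])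
    (by simpa using hne))

lemma exists_isMin {N m : ℕ} {u : Fin N → Fin (m+1) → ℝ} (hu : ∀ i, u i 0 = 1) (c : Fin N → ℝ)
    (hc : 0 ≤ c) : ∃ c', IsMin u c' ∧ comb u c' = comb u c := by
  have h0 : ∀ c, comb u c 0 = ∑ i, c i := by
    intro c; simp [comb_apply, hu]
  have hcont : Continuous (comb u) := (comb u).continuous_of_finiteDimensional
  obtain ⟨a, ha, hmin⟩ := exists_lexmin (Set.Icc (0 : Fin N → ℝ) (fun _ => ∑ i, c i) ∩ {c' | comb u c' = comb u c})
    (isCompact_Icc.inter_right (isClosed_eq hcont continuous_const))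
    ⟨c, ⟨hc, fun i => Finset.single_le_sum (fun i _ => hc i) (Finset.mem_univ i)⟩, rfl⟩
  refine ⟨a, ⟨ha.1.1, fun c' h1 h2 => hmin c' ⟨⟨h1, fun i => ?_⟩, ?_⟩⟩, ha.2⟩
  · have h3 : comb u c' = comb u c := h2.trans ha.2
    have h4 : ∑ i, c' i = ∑ i, c i := by rw [← h0, ← h0, h3]
    simp only [← h4]
    exact Finset.single_le_sum (fun i _ => h1 i) (Finset.mem_univ i)
  · exact h2.trans ha.2
lemma vecMul_inj_int {d : ℕ} (M : Matrix (Fin d) (Fin d) ℤ) (hM : M.det ≠ 0) :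
    Function.Injective (fun n : Fin d → ℤ => Matrix.vecMul n M) := by
  have h := Matrix.mulVec_injective_of_det_ne_zero (M := M.transpose) (by simpa using hM)
  intro x y hxy
  apply h
  simpa [Matrix.mulVec_transpose] using hxy

lemma idx {d : ℕ} (M : Matrix (Fin d) (Fin d) ℤ) (hM : M.det ≠ 0) (i0 : Fin d) :
    ∃ R : Finset (Fin d → ℤ), R.card = M.det.natAbs ∧
      (∀ x ∈ R, ∀ y ∈ R, ∀ n : Fin d → ℤ, x = y + Matrix.vecMul n M → x = y) ∧
      ∀ x ∈ R, ∃ t : Fin d → ℝ, (∀ j, j ≠ i0 → 0 < t j) ∧ (∀ j, 0 ≤ t j) ∧ (∀ j, t j ≤ 1) ∧ t i0 < 1 ∧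
        (fun i => (x i : ℝ)) = Matrix.vecMul t (M.map (Int.cast : ℤ → ℝ)) := by
  classical
  have hinj : Function.Injective M.vecMulLinear := by
    rw [Matrix.coe_vecMulLinear]
    exact vecMul_inj_int M hM
  let L := LinearMap.range M.vecMulLinear
  let bN : Module.Basis (Fin d) ℤ L := (Pi.basisFun ℤ (Fin d)).map (LinearEquiv.ofInjective M.vecMulLinear hinj)
  have hcard : M.det.natAbs = Nat.card ((Fin d → ℤ) ⧸ L) := by
    rw [← Submodule.natAbs_det_basis_change (Pi.basisFun ℤ (Fin d)) L bN, Pi.basisFun_det]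
    congr 1
    change _ = Matrix.det (Matrix.of fun i => ((bN i : L) : Fin d → ℤ))
    congr 1
    ext i j
    have h1 : ((bN i : L) : Fin d → ℤ) = M.vecMulLinear (Pi.single i 1) := by
      rw [← Pi.basisFun_apply]; rfl
    rw [Matrix.of_apply, h1]
    simp
  have hfin : Finite ((Fin d → ℤ) ⧸ L) := Nat.finite_of_card_ne_zero (by
    rw [← hcard]; simpa using hM)
  have : Fintype ((Fin d → ℤ) ⧸ L) := Fintype.ofFinite _
  let Mr := M.map (Int.cast : ℤ → ℝ)
  have hMr : IsUnit Mr.det := by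
    have : Mr.det = (M.det : ℝ) := by
      have := (Int.castRingHom ℝ).map_det M
      simpa [Mr] using this.symm
    rw [this]; simpa using hM
  have hrep : ∀ q : (Fin d → ℤ) ⧸ L, ∃ x : Fin d → ℤ, Submodule.Quotient.mk x = q ∧
      ∃ t : Fin d → ℝ, (∀ j, j ≠ i0 → 0 < t j) ∧ (∀ j, 0 ≤ t j) ∧ (∀ j, t j ≤ 1) ∧ t i0 < 1 ∧
        (fun i => (x i : ℝ)) = Matrix.vecMul t Mr := by
    intro q
    obtain ⟨x, rfl⟩ := Submodule.Quotient.mk_surjective _ q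
    let t0 := Matrix.vecMul (fun i => (x i : ℝ)) Mr⁻¹
    let n : Fin d → ℤ := fun j => if j = i0 then ⌊t0 j⌋ else ⌈t0 j⌉ - 1
    refine ⟨x - Matrix.vecMul n M, ?_, fun j => t0 j - n j, ?_, ?_, ?_, ?_, ?_⟩
    · rw [Submodule.Quotient.eq]
      refine ⟨-n, ?_⟩
      simp
    · intro j hj
      have := Int.ceil_lt_add_one (t0 j)
      simp only [n, hj, if_false]; push_cast; linarith
    · intro j
      by_cases hj : j = i0
      · have := Int.floor_le (t0 j)
        simp only [n, hj, if_true]; subst hj; linarith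
      · have := Int.ceil_lt_add_one (t0 j)
        simp only [n, hj, if_false]; push_cast; linarith
    · intro j
      by_cases hj : j = i0
      · have := Int.lt_floor_add_one (t0 j)
        simp only [n, hj, if_true]; subst hj; linarith
      · have := Int.le_ceil (t0 j)
        simp only [n, hj, if_false]; push_cast; linarith
    · have := Int.lt_floor_add_one (t0 i0)
      simp only [n, if_true]; linarith
    · have h1 : Matrix.vecMul t0 Mr = fun i => (x i : ℝ) := by
        simp [t0, Matrix.vecMul_vecMul, Matrix.nonsing_inv_mul _ hMr]
      have h2 : (fun j => t0 j - n j) = t0 - fun j => (n j : ℝ) := rfl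
      rw [h2, Matrix.sub_vecMul, h1]
      ext i
      simp [Matrix.vecMul, dotProduct, Mr]
  choose g hg ht using hrep
  have hginj : Function.Injective g := fun a b h => by rw [← hg a, ← hg b, h]
  refine ⟨Finset.univ.image g, ?_, ?_, ?_⟩
  · rw [Finset.card_image_of_injective _ hginj, hcard, Nat.card_eq_fintype_card, Finset.card_univ]
  · intro x hx y hy n h
    simp only [Finset.mem_image, Finset.mem_univ, true_and] at hx hy
    obtain ⟨a, rfl⟩ := hx
    obtain ⟨b, rfl⟩ := hy
    congr 1
    rw [← hg a, ← hg b, Submodule.Quotient.eq]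
    exact ⟨n, by simp [h]⟩
  · intro x hx
    simp only [Finset.mem_image, Finset.mem_univ, true_and] at hx
    obtain ⟨a, rfl⟩ := hx
    exact ht a

lemma simplex_count (d M : ℕ) : ∃ S : Finset (Fin d → ℕ), S.card = (M + d).choose d ∧
    ∀ n ∈ S, ∑ i, n i ≤ M := by
  classical
  refine ⟨((Finset.univ : Finset (Fin (d+1))).finsuppAntidiag M).image (fun n i => n i.succ), ?_, ?_⟩
  · rw [Finset.card_image_of_injOn, Finset.card_finsuppAntidiag_nat_eq_choose]
    · simp only [Finset.card_univ, Fintype.card_fin]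
      rw [show d + 1 + M - 1 = M + d by omega]
      exact Nat.choose_symm_add
    · intro a ha b hb hab
      simp only [Finset.mem_coe, Finset.mem_finsuppAntidiag, Fin.sum_univ_succ] at ha hb
      have h1 : ∀ i : Fin d, a i.succ = b i.succ := fun i => congrFun hab i
      ext i
      refine Fin.cases ?_ h1 i
      have h2 := ha.1.trans hb.1.symm
      simp only [h1] at h2
      omega
  · intro n hn
    simp only [Finset.mem_image, Finset.mem_finsuppAntidiag, Fin.sum_univ_succ] at hn
    obtain ⟨a, ha, rfl⟩ := hn
    simp only
    omega

lemma choose_bound (q j : ℕ) (hj : j ≤ q) (hj0 : 0 < j): (q:ℝ)^j ≤ Real.exp 1 ^ j * j.factorial * q.choose j := by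
  have h1 : ∀ j q : ℕ, j ≤ q → ((q:ℝ)/j)^j ≤ q.choose j := by
    intro j
    induction j with
    | zero => intro q _; simp
    | succ j ih =>
      intro q hq
      obtain ⟨q, rfl⟩ : ∃ q', q = q' + 1 := ⟨q - 1, by omega⟩
      have hq' : j ≤ q := by omega
      have h2 := ih q hq'
      have h3 : ((q:ℝ) + 1) * q.choose j = (q+1).choose (j+1) * (j + 1) := by
        exact_mod_cast Nat.add_one_mul_choose_eq q j
      have h4 : (((q:ℝ)+1)/(j+1))^j ≤ ((q:ℝ)/j)^j := by
        rcases Nat.eq_zero_or_pos j with h | h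
        · subst h; simp
        · apply pow_le_pow_left₀ (by positivity)
          have : (0:ℝ) < j := by exact_mod_cast h
          rw [div_le_div_iff₀ (by positivity) this]
          have : (j:ℝ) ≤ q := by exact_mod_cast hq'
          nlinarith
      have h5 : ((q+1).choose (j+1) : ℝ) = (q+1)/(j+1) * q.choose j := by
        field_simp; linarith
      rw [h5]; push_cast
      rw [pow_succ, mul_comm]
      exact mul_le_mul_of_nonneg_left (h4.trans h2) (by positivity)
  have h2 := h1 j q hj
  have h3 := Real.pow_div_factorial_le_exp (x := j) (by positivity) j
  have hj' : (0:ℝ) < j := by exact_mod_cast hj0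
  rw [div_pow, div_le_iff₀ (by positivity)] at h2
  rw [div_le_iff₀ (by positivity)] at h3
  have h4 : Real.exp 1 ^ j = Real.exp j := by rw [← Real.exp_nat_mul]; simp
  rw [h4]
  calc (q:ℝ)^j ≤ q.choose j * (j:ℝ)^j := h2
    _ ≤ q.choose j * (Real.exp j * j.factorial) := by gcongr
    _ = _ := by ring
noncomputable def ext {m N : ℕ} (f : Fin (m+1) ↪o Fin N) (t : Fin (m+1) → ℝ) : Fin N → ℝ :=
  Function.extend f t 0

lemma ext_app {m N : ℕ} (f : Fin (m+1) ↪o Fin N) (t : Fin (m+1) → ℝ) (j) : ext f t (f j) = t j :=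
  f.injective.extend_apply _ _ _

lemma ext_out {m N : ℕ} (f : Fin (m+1) ↪o Fin N) (t : Fin (m+1) → ℝ) (i) (hi : i ∉ Set.range f) :
    ext f t i = 0 := by
  unfold ext
  rw [Function.extend_apply']
  · rfl
  · exact hi

lemma ext_nonneg {m N : ℕ} (f : Fin (m+1) ↪o Fin N) (t : Fin (m+1) → ℝ) (ht : 0 ≤ t) :
    0 ≤ ext f t := by
  intro i
  by_cases h : i ∈ Set.range f
  · obtain ⟨j, rfl⟩ := h; rw [ext_app]; exact ht j
  · exact (ext_out _ _ _ h).ge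

def realU {m N : ℕ} (U : Fin N → Fin (m+1) → ℤ) : Fin N → Fin (m+1) → ℝ := fun i j => (U i j : ℝ)

def Facet {m N : ℕ} (U : Fin N → Fin (m+1) → ℤ) (f : Fin (m+1) ↪o Fin N) : Prop :=
  IsMin (realU U) (ext f 1)

def mat {m N : ℕ} (U : Fin N → Fin (m+1) → ℤ) (f : Fin (m+1) ↪o Fin N) :
    Matrix (Fin (m+1)) (Fin (m+1)) ℤ := Matrix.of fun j => U (f j)

def matR {m N : ℕ} (U : Fin N → Fin (m+1) → ℤ) (f : Fin (m+1) ↪o Fin N) :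
    Matrix (Fin (m+1)) (Fin (m+1)) ℝ := (mat U f).map (Int.cast : ℤ → ℝ)

lemma det_matR {m N : ℕ} (U : Fin N → Fin (m+1) → ℤ) (f : Fin (m+1) ↪o Fin N) :
    (matR U f).det = ((mat U f).det : ℝ) := by
  have := (Int.castRingHom ℝ).map_det (mat U f)
  simpa [matR] using this.symm

lemma comb_ext {m N : ℕ} (U : Fin N → Fin (m+1) → ℤ) (f : Fin (m+1) ↪o Fin N) (t : Fin (m+1) → ℝ) :
    comb (realU U) (ext f t) = Matrix.vecMul t (matR U f) := by
  classical
  rw [comb_apply]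
  have : ∑ i, ext f t i • realU U i = ∑ i ∈ Finset.univ.map f.toEmbedding, ext f t i • realU U i := by
    symm
    apply Finset.sum_subset (Finset.subset_univ _)
    intro i _ hi
    rw [ext_out, zero_smul]
    rintro ⟨j, rfl⟩
    exact hi (Finset.mem_map.mpr ⟨j, Finset.mem_univ _, rfl⟩)
  rw [this, Finset.sum_map]
  ext i
  simp [ext_app, Matrix.vecMul, dotProduct, matR, mat, realU]

lemma comb_zero {m N : ℕ} {U : Fin N → Fin (m+1) → ℤ} (hU : ∀ i, U i 0 = 1) (c : Fin N → ℝ) :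
    comb (realU U) c 0 = ∑ i, c i := by
  simp [comb_apply, realU, hU]

lemma vecMul_zero {m N : ℕ} {U : Fin N → Fin (m+1) → ℤ} (hU : ∀ i, U i 0 = 1)
    (f : Fin (m+1) ↪o Fin N) (t : Fin (m+1) → ℝ) :
    Matrix.vecMul t (matR U f) 0 = ∑ i, t i := by
  simp [Matrix.vecMul, dotProduct, matR, mat, hU]

lemma Facet.isMin {m N : ℕ} {U : Fin N → Fin (m+1) → ℤ} {f : Fin (m+1) ↪o Fin N} (h : Facet U f)
    (c : Fin N → ℝ) (hc : 0 ≤ c) (hs : ∀ i ∉ Set.range f, c i = 0) : IsMin (realU U) c := by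
  refine IsMin.down h hc fun i hi => hs i ?_
  rintro ⟨j, rfl⟩
  rw [ext_app] at hi
  simp at hi

lemma Facet.det_ne {m N : ℕ} {U : Fin N → Fin (m+1) → ℤ} {f : Fin (m+1) ↪o Fin N} (h : Facet U f) :
    (matR U f).det ≠ 0 := by
  intro h0
  obtain ⟨t, ht, ht0⟩ := Matrix.exists_vecMul_eq_zero_iff.mpr h0
  apply ht
  have : ext f t = 0 := by
    refine IsMin.indep h (fun i hi => ext_out _ _ _ ?_) (by rw [comb_ext, ht0])
    rintro ⟨j, rfl⟩
    rw [ext_app] at hi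
    simp at hi
  ext j
  rw [← ext_app f t j, this]; rfl

lemma Facet.solve {m N : ℕ} {U : Fin N → Fin (m+1) → ℤ} {f : Fin (m+1) ↪o Fin N} (h : Facet U f)
    (x : Fin (m+1) → ℝ) : ∃ t, Matrix.vecMul t (matR U f) = x := by
  refine ⟨Matrix.vecMul x (matR U f)⁻¹, ?_⟩
  have : IsUnit (matR U f).det := h.det_ne.isUnit
  simp [Matrix.vecMul_vecMul, Matrix.nonsing_inv_mul _ this]

/-- choice of the special index -/
lemma Facet.exists_idx {m N : ℕ} {U : Fin N → Fin (m+1) → ℤ} (hU : ∀ i, U i 0 = 1)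
    {f : Fin (m+1) ↪o Fin N} (h : Facet U f) :
    ∃ i0, ∃ t, Matrix.vecMul t (matR U f) = Pi.single 0 1 ∧ 0 < t i0 := by
  obtain ⟨t, ht⟩ := h.solve (Pi.single 0 1)
  have h1 : ∑ i, t i = 1 := by rw [← vecMul_zero hU f, ht]; simp
  obtain ⟨i, _, hi⟩ := Finset.exists_lt_of_sum_lt (s := Finset.univ) (f := fun _ => (0:ℝ)) (g := t) (by simp [h1])
  exact ⟨i, t, ht, hi⟩

lemma exists_big {m : ℕ} (t w : Fin (m+1) → ℝ) (i0)
    (ht : ∀ j, j ≠ i0 → 0 < t j) (ht0 : 0 ≤ t i0) (hw : 0 < w i0) :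
    ∃ K : ℝ, ∀ K' ≥ K, ∀ j, 0 < w j + K' * t j := by
  have : ∀ j, ∀ᶠ K in Filter.atTop, 0 < w j + K * t j := by
    intro j
    by_cases hj : j = i0
    · subst hj
      filter_upwards [Filter.eventually_ge_atTop 0] with K hK
      positivity
    · have h1 := ht j hj
      filter_upwards [Filter.eventually_gt_atTop (-w j / t j)] with K hK
      rw [div_lt_iff₀ h1] at hK
      linarith
  exact Filter.eventually_atTop.mp (Filter.eventually_all.mpr this)

lemma facet_disjoint {m N : ℕ} {U : Fin N → Fin (m+1) → ℤ}
    {f g : Fin (m+1) ↪o Fin N} (hf : Facet U f) (hg : Facet U g) (i0 j0) (wf wg : Fin (m+1) → ℝ)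
    (hwf : Matrix.vecMul wf (matR U f) = Pi.single 0 1) (hwf0 : 0 < wf i0)
    (hwg : Matrix.vecMul wg (matR U g) = Pi.single 0 1) (hwg0 : 0 < wg j0)
    (t s : Fin (m+1) → ℝ) (ht : ∀ j, j ≠ i0 → 0 < t j) (ht0 : 0 ≤ t i0)
    (hs : ∀ j, j ≠ j0 → 0 < s j) (hs0 : 0 ≤ s j0)
    (heq : Matrix.vecMul t (matR U f) = Matrix.vecMul s (matR U g)) : f = g := by
  obtain ⟨K1, h1⟩ := exists_big t wf i0 ht ht0 hwf0
  obtain ⟨K2, h2⟩ := exists_big s wg j0 hs hs0 hwg0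
  let K := max K1 K2
  have h1 := h1 K (le_max_left _ _)
  have h2 := h2 K (le_max_right _ _)
  have e : ext f (wf + K • t) = ext g (wg + K • s) := by
    apply IsMin.unique (u := realU U)
    · exact hf.isMin _ (ext_nonneg _ _ fun j => (h1 j).le) (ext_out _ _)
    · exact hg.isMin _ (ext_nonneg _ _ fun j => (h2 j).le) (ext_out _ _)
    · rw [comb_ext, comb_ext, Matrix.add_vecMul, Matrix.add_vecMul, Matrix.smul_vecMul,
        Matrix.smul_vecMul, hwf, hwg, heq]
  have key : ∀ i, i ∈ Set.range f ↔ i ∈ Set.range g := by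
    intro i
    constructor
    · rintro ⟨j, rfl⟩
      by_contra hi
      have h3 := congrFun e (f j)
      rw [ext_app, ext_out _ _ _ hi] at h3
      exact (h1 j).ne' h3
    · rintro ⟨j, rfl⟩
      by_contra hi
      have h3 := congrFun e (g j)
      rw [ext_app, ext_out _ _ _ hi] at h3
      exact (h2 j).ne h3
  exact (OrderEmbedding.range_inj).mp (Set.ext key)

lemma cover {m N : ℕ} {U : Fin N → Fin (m+1) → ℤ} (hU : ∀ i, U i 0 = 1) (c : Fin N → ℝ) (hc : 0 ≤ c) :
    (∃ f, Facet U f ∧ ∃ t, 0 ≤ t ∧ Matrix.vecMul t (matR U f) = comb (realU U) c) ∨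
    (∃ s : Finset (Fin N), s.card ≤ m ∧ comb (realU U) c ∈ Submodule.span ℝ (realU U '' (s : Set (Fin N)))) := by
  classical
  obtain ⟨c', hmin, he⟩ := exists_isMin (u := realU U) (fun i => by simp [realU, hU]) c hc
  rw [← he]
  let s := Finset.univ.filter fun i => c' i ≠ 0
  rcases Nat.lt_or_ge m s.card with hs | hs
  · left
    obtain ⟨σ, hσ, hcard⟩ := Finset.exists_subset_card_eq hs
    let f := σ.orderEmbOfFin hcard
    have hfs : ∀ j, c' (f j) ≠ 0 := fun j => by
      have := hσ (σ.orderEmbOfFin_mem hcard j)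
      simpa [s] using this
    have hF : Facet U f := by
      refine IsMin.down hmin (ext_nonneg _ _ zero_le_one) fun i hi => ext_out _ _ _ ?_
      rintro ⟨j, rfl⟩
      exact hfs j hi
    obtain ⟨t, ht⟩ := hF.solve (comb (realU U) c')
    refine ⟨f, hF, t, ?_, ht⟩
    have h0 : c' - ext f t = 0 := by
      refine hmin.indep (fun i hi => ?_) (by rw [map_sub, comb_ext, ht, sub_self])
      have : i ∉ Set.range f := by
        rintro ⟨j, rfl⟩
        exact hfs j hi
      simp [hi, ext_out _ _ _ this]
    intro j
    rw [← ext_app f t j, ← sub_eq_zero.mp h0]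
    exact hmin.1 _
  · right
    refine ⟨s, hs, ?_⟩
    rw [comb_apply]
    refine Submodule.sum_mem _ fun i _ => ?_
    by_cases hi : c' i = 0
    · simp [hi]
    · exact Submodule.smul_mem _ _ (Submodule.subset_span ⟨i, by simp [s, hi], rfl⟩)
open MeasureTheory in
lemma vol_slice {m : ℕ} (S : Set (Fin (m+1) → ℝ)) (hS : MeasurableSet S) :
    volume S = ∫⁻ h : ℝ, volume {y : Fin m → ℝ | (Fin.cons h y : Fin (m+1) → ℝ) ∈ S} := by
  have hmp := (volume_preserving_piFinSuccAbove (fun _ : Fin (m+1) => ℝ) 0).symm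
  rw [← hmp.measure_preimage hS.nullMeasurableSet, Measure.volume_eq_prod, Measure.prod_apply]
  · refine lintegral_congr fun h => congrArg _ (Set.ext fun y => ?_)
    simp [MeasurableEquiv.piFinSuccAbove, Fin.insertNthEquiv, Fin.insertNth_zero']
  · exact hmp.measurable hS

open MeasureTheory in
lemma lint_pow (m : ℕ) : ∫⁻ h in Set.Icc (0:ℝ) 1, ENNReal.ofReal (h^m) = ENNReal.ofReal (1 / (m+1)) := by
  rw [← ofReal_integral_eq_lintegral_ofReal]
  · rw [integral_Icc_eq_integral_Ioc, ← intervalIntegral.integral_of_le zero_le_one, integral_pow]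
    simp
  · exact (continuous_pow m).continuousOn.integrableOn_Icc
  · filter_upwards [ae_restrict_mem measurableSet_Icc] with h hh
    exact pow_nonneg hh.1 m

open MeasureTheory in
lemma lint_pow' (m : ℕ) : ∫⁻ h in Set.Icc (0:ℝ) 1, ENNReal.ofReal ((1-h)^m) = ENNReal.ofReal (1 / (m+1)) := by
  rw [← ofReal_integral_eq_lintegral_ofReal]
  · rw [integral_Icc_eq_integral_Ioc, ← intervalIntegral.integral_of_le zero_le_one,
      intervalIntegral.integral_comp_sub_left (fun x => x^m) 1, integral_pow]
    simp
  · exact (by fun_prop : Continuous fun h : ℝ => (1-h)^m).continuousOn.integrableOn_Icc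
  · filter_upwards [ae_restrict_mem measurableSet_Icc] with h hh
    exact pow_nonneg (sub_nonneg.mpr hh.2) m

def simp' (d : ℕ) : Set (Fin d → ℝ) := {t | 0 ≤ t ∧ ∑ i, t i ≤ 1}

lemma simp'_closed (d : ℕ) : IsClosed (simp' d) := by
  apply IsClosed.inter
  · exact isClosed_Ici
  · exact isClosed_le (f := fun t : Fin d → ℝ => ∑ i, t i) (by fun_prop) continuous_const

open MeasureTheory in
lemma vol_simp (d : ℕ) : volume (simp' d) ≤ ENNReal.ofReal (1 / d.factorial) := by
  induction d with
  | zero =>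
    refine (measure_mono (Set.subset_univ _)).trans ?_
    simp [volume_pi]
  | succ d ih =>
    rw [vol_slice _ (simp'_closed _).measurableSet]
    calc ∫⁻ h : ℝ, volume {y : Fin d → ℝ | (Fin.cons h y : Fin (d+1) → ℝ) ∈ simp' (d+1)}
        ≤ ∫⁻ h : ℝ, (Set.Icc (0:ℝ) 1).indicator (fun h => ENNReal.ofReal ((1-h)^d) * volume (simp' d)) h := by
          apply lintegral_mono
          intro h
          by_cases hh : h ∈ Set.Icc (0:ℝ) 1
          · rw [Set.indicator_of_mem hh]
            have h2 := Measure.addHaar_smul (volume : Measure (Fin d → ℝ)) (1-h) (simp' d)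
            rw [Module.finrank_fin_fun, abs_of_nonneg (pow_nonneg (sub_nonneg.mpr hh.2) d)] at h2
            rw [← h2]
            apply measure_mono
            rintro y ⟨hy1, hy2⟩
            rw [Fin.sum_univ_succ] at hy2
            simp only [Fin.cons_zero, Fin.cons_succ] at hy2
            have hy0 : ∀ i, 0 ≤ y i := fun i => by simpa using hy1 i.succ
            rcases hh.2.eq_or_lt with h1 | h1
            · have h3 : ∑ i, y i = 0 := le_antisymm (by linarith) (Finset.sum_nonneg fun i _ => hy0 i)
              refine ⟨0, ⟨le_rfl, by simp⟩, ?_⟩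
              ext i
              have := (Finset.sum_eq_zero_iff_of_nonneg (fun i _ => hy0 i)).mp h3 i (Finset.mem_univ i)
              simp [this]
            · have h4 : 0 < 1 - h := by linarith
              rw [Set.mem_smul_set_iff_inv_smul_mem₀ h4.ne']
              refine ⟨fun i => ?_, ?_⟩
              · have := hy0 i
                simp only [Pi.smul_apply, smul_eq_mul, Pi.zero_apply]; positivity
              · simp only [Pi.smul_apply, smul_eq_mul]
                rw [← Finset.mul_sum, inv_mul_le_iff₀ h4]; linarith
          · rw [Set.indicator_of_notMem hh]
            simp only [nonpos_iff_eq_zero]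
            convert measure_empty (μ := (volume : Measure (Fin d → ℝ)))
            rw [Set.eq_empty_iff_forall_notMem]
            rintro y ⟨hy1, hy2⟩
            rw [Fin.sum_univ_succ] at hy2
            simp only [Fin.cons_zero, Fin.cons_succ] at hy2
            have hy0 : ∀ i, 0 ≤ y i := fun i => by simpa using hy1 i.succ
            have h3 : 0 ≤ h := by simpa using hy1 0
            have := Finset.sum_nonneg fun i (_ : i ∈ Finset.univ) => hy0 i
            exact hh ⟨h3, by linarith⟩
      _ = ENNReal.ofReal (1 / (d+1)) * volume (simp' d) := by
          rw [lintegral_indicator measurableSet_Icc, lintegral_mul_const, lint_pow']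
          fun_prop
      _ ≤ ENNReal.ofReal (1 / (d+1)) * ENNReal.ofReal (1 / d.factorial) := by gcongr
      _ = _ := by
          rw [← ENNReal.ofReal_mul (by positivity)]
          congr 1
          rw [Nat.factorial_succ]; push_cast; field_simp

def pyr {m : ℕ} (P : Set (Fin m → ℝ)) : Set (Fin (m+1) → ℝ) :=
  (fun q : ℝ × (Fin m → ℝ) => (Fin.cons q.1 (q.1 • q.2) : Fin (m+1) → ℝ)) '' (Set.Icc 0 1 ×ˢ P)

open MeasureTheory in
lemma vol_pyr {m : ℕ} (P : Set (Fin m → ℝ)) (hP : IsCompact P) :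
    ENNReal.ofReal (1 / (m+1)) * volume P ≤ volume (pyr P) := by
  have hc : IsCompact (pyr P) := (isCompact_Icc.prod hP).image (by
    refine continuous_pi fun i => ?_
    refine Fin.cases ?_ (fun j => ?_) i
    · simpa using continuous_fst
    · simp only [Fin.cons_succ, Pi.smul_apply, smul_eq_mul]
      fun_prop)
  rw [vol_slice _ hc.measurableSet, ← lint_pow, ← lintegral_mul_const _ (by fun_prop),
    ← lintegral_indicator measurableSet_Icc]
  apply lintegral_mono
  intro h
  by_cases hh : h ∈ Set.Icc (0:ℝ) 1
  · rw [Set.indicator_of_mem hh]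
    have h2 := Measure.addHaar_smul (volume : Measure (Fin m → ℝ)) h P
    rw [Module.finrank_fin_fun, abs_of_nonneg (pow_nonneg hh.1 m)] at h2
    simp only
    rw [← h2]
    apply measure_mono
    rintro _ ⟨p, hp, rfl⟩
    exact ⟨(h, p), ⟨hh, hp⟩, rfl⟩
  · rw [Set.indicator_of_notMem hh]; simp

noncomputable instance {m N : ℕ} : Fintype (Fin (m+1) ↪o Fin N) :=
  haveI : Finite (Fin (m+1) ↪o Fin N) := DFunLike.finite _
  Fintype.ofFinite _

open Classical in
noncomputable def facets {m N : ℕ} (U : Fin N → Fin (m+1) → ℤ) : Finset (Fin (m+1) ↪o Fin N) :=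
  Finset.univ.filter (Facet U)

open MeasureTheory in
lemma vol_cone {m N : ℕ} {U : Fin N → Fin (m+1) → ℤ} (hU : ∀ i, U i 0 = 1)
    (S : Set (Fin (m+1) → ℝ)) (hS : ∀ x ∈ S, x 0 ≤ 1 ∧ ∃ c, 0 ≤ c ∧ comb (realU U) c = x) :
    volume S ≤ ENNReal.ofReal (((∑ f ∈ facets U, (mat U f).det.natAbs : ℕ) : ℝ) * (1 / (m+1).factorial)) := by
  classical
  let A : Set (Fin (m+1) → ℝ) := ⋃ f ∈ facets U, (Matrix.toLin' (matR U f).transpose) '' (simp' (m+1))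
  let B : Set (Fin (m+1) → ℝ) := ⋃ s ∈ (Finset.univ.filter fun s : Finset (Fin N) => s.card ≤ m),
    (Submodule.span ℝ (realU U '' (s : Set (Fin N))) : Set (Fin (m+1) → ℝ))
  have hsub : S ⊆ A ∪ B := by
    intro x hx
    obtain ⟨h1, c, hc, rfl⟩ := hS x hx
    rcases cover hU c hc with ⟨f, hf, t, ht, he⟩ | ⟨s, hs, he⟩
    · left
      simp only [A, Set.mem_iUnion]
      refine ⟨f, by simp [facets, hf], t, ⟨ht, ?_⟩, ?_⟩
      · rw [← vecMul_zero hU f, he]; exact h1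
      · rw [Matrix.toLin'_apply, Matrix.mulVec_transpose, he]
    · right
      simp only [B, Set.mem_iUnion]
      exact ⟨s, by simp [hs], he⟩
  have hB : volume B = 0 := by
    refine (measure_biUnion_null_iff (Finset.countable_toSet _)).mpr ?_
    intro s hs
    apply Measure.addHaar_submodule
    intro htop
    have h1 : Module.finrank ℝ (Submodule.span ℝ (realU U '' (s : Set (Fin N)))) ≤ m := by
      have := finrank_span_finset_le_card (R := ℝ) (s.image (realU U))
      rw [Finset.coe_image] at this
      refine this.trans (Finset.card_image_le.trans ?_)
      simpa using hs
    rw [htop, finrank_top, Module.finrank_fin_fun] at h1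
    omega
  calc volume S ≤ volume (A ∪ B) := measure_mono hsub
    _ ≤ volume A + volume B := measure_union_le _ _
    _ = volume A := by rw [hB, add_zero]
    _ ≤ ∑ f ∈ facets U, volume ((Matrix.toLin' (matR U f).transpose) '' (simp' (m+1))) :=
        measure_biUnion_finset_le _ _
    _ ≤ ∑ f ∈ facets U, ENNReal.ofReal ((mat U f).det.natAbs * (1 / (m+1).factorial)) := by
        apply Finset.sum_le_sum
        intro f _
        rw [Measure.addHaar_image_linearMap, LinearMap.det_toLin', Matrix.det_transpose, det_matR,
          ENNReal.ofReal_mul (by positivity), Nat.cast_natAbs, Int.cast_abs]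
        gcongr
        exact vol_simp _
    _ = _ := by
        rw [← ENNReal.ofReal_sum_of_nonneg (fun _ _ => by positivity), ← Finset.sum_mul]
        push_cast; rfl
lemma count {m N : ℕ} (hm : 1 ≤ m) {U : Fin N → Fin (m+1) → ℤ} (hU : ∀ i, U i 0 = 1) (lam : ℕ)
    (hlam : m ≤ lam) (Y : ℕ → Set (Fin m → ℤ)) (hY : ∀ k, (Y k).Finite)
    (hmem : ∀ (k : ℕ) (z : Fin (m+1) → ℤ) (c : Fin N → ℝ), 1 ≤ k → z 0 = k → 0 ≤ c →
      comb (realU U) c = (fun i => (z i : ℝ)) → Fin.tail z ∈ Y k) :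
    (∑ f ∈ facets U, (mat U f).det.natAbs) * (lam + 1).choose (m + 1)
      ≤ ∑ k ∈ Finset.Icc 1 lam, (Y k).ncard := by
  classical
  obtain ⟨S, hScard, hS⟩ := simplex_count (m+1) (lam - m)
  rw [show lam - m + (m + 1) = lam + 1 by omega] at hScard
  have hfac : ∀ f : Fin (m+1) ↪o Fin N, f ∈ facets U → Facet U f := fun f hf => by
    simpa [facets] using hf
  have hdet : ∀ f ∈ facets U, (mat U f).det ≠ 0 := fun f hf => by
    have := (hfac f hf).det_ne
    rw [det_matR] at this
    exact_mod_cast this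
  have hidx : ∀ f : Fin (m+1) ↪o Fin N, ∃ i0 : Fin (m+1), ∃ t, f ∈ facets U → (Matrix.vecMul t (matR U f) = Pi.single 0 1 ∧ 0 < t i0) := by
    intro f
    by_cases hf : f ∈ facets U
    · obtain ⟨i0, t, h⟩ := (hfac f hf).exists_idx hU
      exact ⟨i0, t, fun _ => h⟩
    · exact ⟨0, 0, fun h => absurd h hf⟩
  choose i0 w hw using hidx
  have hR : ∀ f : Fin (m+1) ↪o Fin N, ∃ R : Finset (Fin (m+1) → ℤ), f ∈ facets U → (R.card = (mat U f).det.natAbs ∧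
      (∀ x ∈ R, ∀ y ∈ R, ∀ n : Fin (m+1) → ℤ, x = y + Matrix.vecMul n (mat U f) → x = y) ∧
      ∀ x ∈ R, ∃ t : Fin (m+1) → ℝ, (∀ j, j ≠ i0 f → 0 < t j) ∧ (∀ j, 0 ≤ t j) ∧ (∀ j, t j ≤ 1) ∧ t (i0 f) < 1 ∧
        (fun i => (x i : ℝ)) = Matrix.vecMul t (matR U f)) := by
    intro f
    by_cases hf : f ∈ facets U
    · obtain ⟨R, h⟩ := idx (mat U f) (hdet f hf) (i0 f)
      exact ⟨R, fun _ => h⟩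
    · exact ⟨∅, fun h => absurd h hf⟩
  choose R hR using hR
  let D : Finset (Σ _ : Fin (m+1) ↪o Fin N, (Fin (m+1) → ℤ) × (Fin (m+1) → ℕ)) :=
    (facets U).sigma fun f => R f ×ˢ S
  let T : Finset (Σ _ : ℕ, Fin m → ℤ) := (Finset.Icc 1 lam).sigma fun k => (hY k).toFinset
  let Z : (Σ _ : Fin (m+1) ↪o Fin N, (Fin (m+1) → ℤ) × (Fin (m+1) → ℕ)) → Fin (m+1) → ℤ :=
    fun a => a.2.1 + Matrix.vecMul (fun j => (a.2.2 j : ℤ)) (mat U a.1)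
  have hDcard : D.card = (∑ f ∈ facets U, (mat U f).det.natAbs) * (lam + 1).choose (m + 1) := by
    rw [Finset.card_sigma, Finset.sum_mul]
    refine Finset.sum_congr rfl fun f hf => ?_
    rw [Finset.card_product, (hR f hf).1, hScard]
  have hTcard : T.card = ∑ k ∈ Finset.Icc 1 lam, (Y k).ncard := by
    rw [Finset.card_sigma]
    refine Finset.sum_congr rfl fun k _ => ?_
    rw [Set.ncard_eq_toFinset_card _ (hY k)]
  have hZ : ∀ a ∈ D, ∃ t : Fin (m+1) → ℝ, (∀ j, j ≠ i0 a.1 → 0 < t j) ∧ (∀ j, 0 ≤ t j) ∧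
      (fun i => (Z a i : ℝ)) = Matrix.vecMul t (matR U a.1) ∧ 1 ≤ Z a 0 ∧ Z a 0 ≤ lam := by
    rintro ⟨f, x, n⟩ ha
    simp only [D, Finset.mem_sigma, Finset.mem_product] at ha
    obtain ⟨hf, hx, hn⟩ := ha
    obtain ⟨t, ht1, ht2, ht3, ht4, ht5⟩ := (hR f hf).2.2 x hx
    have hreal : (fun i => (Z ⟨f, x, n⟩ i : ℝ)) = Matrix.vecMul (fun j => t j + n j) (matR U f) := by
      have h2 : (fun j => t j + (n j : ℝ)) = t + fun j => (n j : ℝ) := rfl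
      rw [h2, Matrix.add_vecMul, ← ht5]
      ext i
      simp [Z, Matrix.vecMul, dotProduct, matR]
    have hx0 : (x 0 : ℝ) = ∑ j, t j := by
      rw [← vecMul_zero hU f, ← ht5]
    have hZ0 : (Z ⟨f, x, n⟩ 0 : ℝ) = ∑ j, (t j + n j) := by
      rw [← vecMul_zero hU f, ← hreal]
    refine ⟨fun j => t j + n j, fun j hj => ?_, fun j => ?_, hreal, ?_, ?_⟩
    · have := ht1 j hj
      positivity
    · have := ht2 j
      positivity
    · have h1 : (0:ℝ) < (Z ⟨f, x, n⟩ 0 : ℝ) := by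
        rw [hZ0]
        have : Nontrivial (Fin (m+1)) := Fin.nontrivial_iff_two_le.mpr (by omega)
        obtain ⟨j, hj⟩ := exists_ne (i0 f)
        refine Finset.sum_pos' (fun j _ => ?_) ⟨j, Finset.mem_univ j, ?_⟩
        · have := ht2 j
          positivity
        · have := ht1 j hj
          positivity
      have h2 : 0 < Z ⟨f, x, n⟩ 0 := by exact_mod_cast h1
      omega
    · have h1 : (x 0 : ℝ) < m + 1 := by
        rw [hx0]
        calc ∑ j, t j < ∑ j : Fin (m+1), (1:ℝ) :=
              Finset.sum_lt_sum (fun j _ => ht3 j) ⟨i0 f, Finset.mem_univ _, ht4⟩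
          _ = m + 1 := by simp
      have h2 : x 0 < m + 1 := by exact_mod_cast h1
      have h3 : (Z ⟨f, x, n⟩ 0 : ℝ) = x 0 + ((∑ j, n j : ℕ) : ℝ) := by
        rw [hZ0, hx0, Finset.sum_add_distrib]; push_cast; rfl
      have h4 : Z ⟨f, x, n⟩ 0 = x 0 + ((∑ j, n j : ℕ) : ℤ) := by exact_mod_cast h3
      have h5 := hS n hn
      omega
  have hinj : Set.InjOn Z D := by
    intro a ha b hb hab
    obtain ⟨t, ht1, ht2, ht3, _⟩ := hZ a ha
    obtain ⟨s, hs1, hs2, hs3, _⟩ := hZ b hb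
    have ha' : a.1 ∈ facets U ∧ a.2.1 ∈ R a.1 ∧ a.2.2 ∈ S := by
      simpa [D] using ha
    have hb' : b.1 ∈ facets U ∧ b.2.1 ∈ R b.1 ∧ b.2.2 ∈ S := by
      simpa [D] using hb
    have hfg : a.1 = b.1 := facet_disjoint (hfac _ ha'.1) (hfac _ hb'.1) (i0 a.1) (i0 b.1) (w a.1) (w b.1)
      (hw _ ha'.1).1 (hw _ ha'.1).2 (hw _ hb'.1).1 (hw _ hb'.1).2 t s ht1 (ht2 _) hs1 (hs2 _)
      (by rw [← ht3, ← hs3, hab])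
    obtain ⟨f, x, n⟩ := a
    obtain ⟨g, y, l⟩ := b
    simp only at hfg
    subst hfg
    simp only at ha' hb'
    have h1 : x + Matrix.vecMul (fun j => (n j : ℤ)) (mat U f) = y + Matrix.vecMul (fun j => (l j : ℤ)) (mat U f) := hab
    have h2 : x = y := by
      refine (hR f ha'.1).2.1 x ha'.2.1 y hb'.2.1 ((fun j => (l j : ℤ)) - fun j => (n j : ℤ)) ?_
      rw [Matrix.sub_vecMul, ← add_sub_assoc, ← h1, add_sub_cancel_right]
    subst h2
    have h3 := vecMul_inj_int (mat U f) (hdet f ha'.1) (add_left_cancel h1)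
    have h4 : n = l := by
      ext j
      exact_mod_cast congrFun h3 j
    rw [h4]
  rw [← hDcard, ← hTcard]
  refine Finset.card_le_card_of_injOn (fun a => ⟨(Z a 0).toNat, Fin.tail (Z a)⟩) ?_ ?_
  · intro a ha
    obtain ⟨t, ht1, ht2, ht3, h1, h2⟩ := hZ a ha
    simp only [T, Finset.coe_sigma, Set.mem_sigma_iff, Finset.mem_coe, Finset.mem_Icc, Set.Finite.mem_toFinset]
    refine ⟨by omega, hmem _ (Z a) (ext a.1 t) (by omega) (by omega) (ext_nonneg _ _ ht2) ?_⟩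
    rw [comb_ext, ht3]
  · intro a ha b hb hab
    obtain ⟨_, _, _, _, h1, _⟩ := hZ a ha
    obtain ⟨_, _, _, _, h2, _⟩ := hZ b hb
    apply hinj ha hb
    simp only [Sigma.mk.injEq, heq_eq_eq] at hab
    have h3 : Z a 0 = Z b 0 := by omega
    rw [← Fin.cons_self_tail (Z a), ← Fin.cons_self_tail (Z b), h3, hab.2]

end Ehr

/-- Let `P ⊆ ℝ^m` (`m ≥ 1`) be an `m`-dimensional lattice polytope and `n, r` positive
integers.  For every integer `λ ≥ max{ m, e·((m+1)·n·C(m+r, m+1) / vol(P))^{1/(m+1)} }`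
one has `Σ_{k=1}^{λ} |kP ∩ ℤ^m| > n·C(m+r, m+1)`. -/
theorem sum_ehrhart_gt_n_mul_choose
    (m : ℕ) (hm : 1 ≤ m) (P : Set (Fin m → ℝ))
    (hP : ∃ V : Finset (Fin m → ℤ),
      P = convexHull ℝ ((fun (v : Fin m → ℤ) (j : Fin m) => (v j : ℝ)) '' ↑V))
    (hPfull : (interior P).Nonempty)
    (n r : ℕ) (hn : 1 ≤ n) (hr : 1 ≤ r)
    (lam : ℕ) (hlam_m : m ≤ lam)
    (hlam_e : Real.exp 1 *
        (((m + 1 : ℝ) * n * (Nat.choose (m + r) (m + 1)) /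
            (MeasureTheory.volume P).toReal) ^ ((1 : ℝ) / (m + 1)))
      ≤ (lam : ℝ)) :
    n * Nat.choose (m + r) (m + 1)
      < ∑ k ∈ Finset.Icc 1 lam, (latticePts ((k : ℝ) • P)).ncard := by
  classical
  obtain ⟨V, hV⟩ := hP
  have hPc : IsCompact P := by
    rw [hV]
    exact ((V.finite_toSet).image _).isCompact_convexHull ℝ
  have hPconv : Convex ℝ P := by rw [hV]; exact convex_convexHull _ _
  let v : Fin V.card → Fin m → ℤ := fun i => (V.equivFin.symm i : Fin m → ℤ)
  let U : Fin V.card → Fin (m+1) → ℤ := fun i => Fin.cons 1 (v i)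
  have hU : ∀ i, U i 0 = 1 := fun i => rfl
  have hvP : ∀ i, (fun j => (v i j : ℝ)) ∈ P := fun i => by
    rw [hV]
    exact subset_convexHull _ _ ⟨v i, (V.equivFin.symm i).2, rfl⟩
  have htail : ∀ c : Fin V.card → ℝ, ∀ j : Fin m, Ehr.comb (Ehr.realU U) c j.succ = ∑ i, c i * (v i j : ℝ) := by
    intro c j
    simp [Ehr.comb_apply, Ehr.realU, U]
  -- every point of P is a convex combination
  have hrep : ∀ p ∈ P, ∃ c : Fin V.card → ℝ, 0 ≤ c ∧ ∑ i, c i = 1 ∧ ∀ j, ∑ i, c i * (v i j : ℝ) = p j := by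
    intro p hp
    have hsub : P ⊆ (Fintype.linearCombination ℝ (fun i j => (v i j : ℝ)) : (Fin V.card → ℝ) →ₗ[ℝ] (Fin m → ℝ)) ''
        stdSimplex ℝ (Fin V.card) := by
      rw [hV]
      refine convexHull_min ?_ ((convex_stdSimplex ℝ _).linear_image _)
      rintro _ ⟨y, hy, rfl⟩
      refine ⟨Pi.single (V.equivFin ⟨y, hy⟩) 1, single_mem_stdSimplex ℝ _, ?_⟩
      rw [Fintype.linearCombination_apply_single]
      simp [v]
    obtain ⟨c, ⟨hc0, hc1⟩, rfl⟩ := hsub hp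
    exact ⟨c, hc0, hc1, fun j => by simp [Fintype.linearCombination_apply]⟩
  have hvol := Ehr.vol_pyr P hPc
  have hcone := Ehr.vol_cone hU (Ehr.pyr P) (by
    rintro _ ⟨⟨h, p⟩, ⟨hh, hp⟩, rfl⟩
    obtain ⟨c, hc, hc1, hc2⟩ := hrep p hp
    simp only at hh
    refine ⟨by simpa using hh.2, h • c, smul_nonneg hh.1 hc, ?_⟩
    ext j
    refine Fin.cases ?_ (fun j => ?_) j
    · rw [Ehr.comb_zero hU]; simp [← Finset.mul_sum, hc1]
    · rw [htail]; simp [mul_assoc, ← Finset.mul_sum, hc2])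
  have hcount := Ehr.count hm hU lam hlam_m (fun k => latticePts ((k:ℝ) • P)) (by
    intro k
    have hb : Bornology.IsBounded ((k:ℝ) • P) := hPc.isBounded.smul₀ _
    obtain ⟨B, hB⟩ := hb.exists_norm_le
    refine (Set.finite_Icc (fun _ : Fin m => -⌈B⌉) (fun _ : Fin m => ⌈B⌉)).subset ?_
    intro x hx
    have h1 : ∀ j, |(x j : ℝ)| ≤ ⌈B⌉ := fun j =>
      ((norm_le_pi_norm (fun j => (x j : ℝ)) j).trans (hB _ hx)).trans (Int.le_ceil B)
    refine ⟨fun j => ?_, fun j => ?_⟩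
    · have := (abs_le.mp (h1 j)).1
      exact_mod_cast this
    · have := (abs_le.mp (h1 j)).2
      exact_mod_cast this) (by
    intro k z c hk hz hc he
    have hk' : (0:ℝ) < k := by exact_mod_cast hk
    change (fun j => ((Fin.tail z) j : ℝ)) ∈ (k:ℝ) • P
    rw [Set.mem_smul_set_iff_inv_smul_mem₀ hk'.ne']
    have hs : ∑ i, c i = k := by
      rw [← Ehr.comb_zero hU, he]; simp [hz]
    have h2 : (k:ℝ)⁻¹ • (fun j => ((Fin.tail z) j : ℝ)) = ∑ i, ((k:ℝ)⁻¹ * c i) • (fun j => (v i j : ℝ)) := by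
      ext j
      have h3 : ((Fin.tail z) j : ℝ) = ∑ i, c i * (v i j : ℝ) := by
        rw [← htail, he]; rfl
      simp [h3, Finset.mul_sum, mul_assoc]
    rw [h2]
    refine hPconv.sum_mem (fun i _ => ?_) ?_ (fun i _ => hvP i)
    · have := hc i
      have : (0:ℝ) ≤ c i := this
      positivity
    · rw [← Finset.mul_sum, hs, inv_mul_cancel₀ hk'.ne'])
  have hvfin : MeasureTheory.volume P ≠ ⊤ := hPc.measure_lt_top.ne
  have hvpos : 0 < (MeasureTheory.volume P).toReal := by
    refine ENNReal.toReal_pos ?_ hvfin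
    exact (MeasureTheory.Measure.measure_pos_of_nonempty_interior _ hPfull).ne'
  set vol := (MeasureTheory.volume P).toReal with hvoldef
  set G := ∑ f ∈ Ehr.facets U, (Ehr.mat U f).det.natAbs with hG
  have h1 : 1 / ((m:ℝ)+1) * vol ≤ (G:ℝ) * (1 / (m+1).factorial) := by
    have := hvol.trans hcone
    rw [← ENNReal.ofReal_toReal hvfin, ← ENNReal.ofReal_mul (by positivity)] at this
    exact (ENNReal.ofReal_le_ofReal_iff (by positivity)).mp this
  have h2 := Ehr.choose_bound (lam+1) (m+1) (by omega) (by omega)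
  set X : ℝ := (m + 1 : ℝ) * n * (Nat.choose (m + r) (m + 1)) with hX
  have hX0 : 0 ≤ X := by positivity
  have h3 : Real.exp 1 ^ (m+1) * (X / vol) ≤ (lam:ℝ)^(m+1) := by
    have := pow_le_pow_left₀ (by positivity) hlam_e (m+1)
    rw [mul_pow, ← Real.rpow_natCast (_ ^ _) (m+1), ← Real.rpow_mul (by positivity)] at this
    have h4 : (1:ℝ) / (m+1) * ((m+1 : ℕ):ℝ) = 1 := by push_cast; field_simp
    rwa [h4, Real.rpow_one] at this
  have h4 : (lam:ℝ)^(m+1) < ((lam+1 : ℕ):ℝ)^(m+1) := by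
    apply pow_lt_pow_left₀ (by push_cast; linarith) (by positivity) (by omega)
  have h5 : Real.exp 1 ^ (m+1) * (X / vol) < Real.exp 1 ^ (m+1) * ((m+1).factorial * (lam+1).choose (m+1)) := by
    calc _ ≤ _ := h3
      _ < _ := h4
      _ ≤ _ := h2
      _ = _ := by ring
  have h6 := lt_of_mul_lt_mul_left h5 (by positivity)
  rw [div_lt_iff₀ hvpos] at h6
  have h7 : vol * (m+1).factorial ≤ G * (m+1) := by
    have hf : (0:ℝ) < (m+1).factorial := by positivity
    field_simp at h1
    linarith
  have h8 : X < (m+1) * ((G:ℝ) * (lam+1).choose (m+1)) := by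
    have : (0:ℝ) ≤ (lam+1).choose (m+1) := by positivity
    nlinarith
  have h9 : ((n * Nat.choose (m + r) (m + 1) : ℕ):ℝ) < ((G * (lam+1).choose (m+1) : ℕ) : ℝ) := by
    push_cast
    rw [hX, mul_assoc] at h8
    exact lt_of_mul_lt_mul_left h8 (by positivity)
  exact lt_of_lt_of_le (by exact_mod_cast h9) hcount
end
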